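/- Let R0 > 0, T > 0 and let f : ℝ × [R0,∞) → ℝ be continuous and T-periodic in its first variable. Assume there exist constants μ̌ ≤ μ̂ and a nonnegative integer N with (Nπ/T)² < μ̌ and μ̂ < ((N+1)π/T)², such that μ̌ ≤ liminf_{ρ→+∞} f(t,ρ)/ρ and limsup_{ρ→+∞} f(t,ρ)/ρ ≤ μ̂, uniformly in t. Then for every positive integer ν there exists a positive integer k_ν such that for every integer k ≥ k_ν there exist L > 0 and an R0-bouncing solution (ρ,ϑ) of the system ρ'' − L²/ρ³ + f(t,ρ) = 0 (for ρ > R0), ρ²ϑ' = L, defined on all of ℝ, satisfying ρ(t+T) = ρ(t) and ϑ(t+kT) = ϑ(t) + 2πν for all t; in particular (ρ,ϑ) makes exactly ν revolutions around the origin in the period time kT. -/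

import Mathlib

open Real Filter Set

/-- A `w`-bouncing solution of `x'' + p(t,x) = 0` (Bonheure–Fabry), defined on all of `ℝ`. -/
def IsBouncingSolution (w : ℝ) (p : ℝ → ℝ → ℝ) (x : ℝ → ℝ) : Prop :=
  Continuous x ∧
  (∀ t, w ≤ x t) ∧
  -- (i) away from the wall the equation is satisfied classically
  (∀ t0, w < x t0 →
    ∃ x' : ℝ → ℝ, (∀ᶠ s in nhds t0, HasDerivAt x (x' s) s) ∧
      HasDerivAt x' (-(p t0 (x t0))) t0) ∧
  -- (ii) at an isolated contact time the one-sided derivatives exist and are opposite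
  (∀ t0, x t0 = w → (∀ᶠ s in nhdsWithin t0 {t0}ᶜ, w < x s) →
    ∃ v : ℝ, HasDerivWithinAt x v (Iic t0) t0 ∧ HasDerivWithinAt x (-v) (Ici t0) t0) ∧
  -- (iii) a contact with nonzero one-sided speed is an isolated contact
  (∀ t0 v, x t0 = w → v ≠ 0 →
    (HasDerivWithinAt x v (Iic t0) t0 ∨ HasDerivWithinAt x v (Ici t0) t0) →
    ∀ᶠ s in nhdsWithin t0 {t0}ᶜ, w < x s) ∧
  -- (iv) on intervals where the solution sticks to the wall, p(·,w) ≥ 0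
  (∀ a b : ℝ, a < b → (∀ t ∈ Ioo a b, x t = w) → ∀ t ∈ Ioo a b, 0 ≤ p t w)

/-! ### Brouwer -/

lemma det_poly {n : ℕ} (A : Matrix (Fin n) (Fin n) ℝ) :
    ∃ P : Polynomial ℝ, P.natDegree ≤ n ∧ ∀ t : ℝ, P.eval t = (1 - t • A).det := by
  refine ⟨A.charpolyRev, ?_, ?_⟩
  · rw [← Matrix.reverse_charpoly]
    refine (Polynomial.reverse_natDegree_le _).trans ?_
    rw [Matrix.charpoly_natDegree_eq_dim]; simp
  · intro t
    rw [Matrix.charpolyRev, ← Polynomial.coe_evalRingHom, RingHom.map_det]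
    congr 1
    ext i j
    rcases eq_or_ne i j with hij | hij <;> simp [hij] <;> ring

lemma clm_det_poly {n : ℕ} (A : EuclideanSpace ℝ (Fin n) →L[ℝ] EuclideanSpace ℝ (Fin n)) :
    ∃ P : Polynomial ℝ, P.natDegree ≤ n ∧
      ∀ t : ℝ, P.eval t = (ContinuousLinearMap.id ℝ _ - t • A).det := by
  let b := (EuclideanSpace.basisFun (Fin n) ℝ).toBasis
  obtain ⟨P, h1, h2⟩ := det_poly (LinearMap.toMatrix b b A.toLinearMap)
  refine ⟨P, h1, fun t => ?_⟩
  rw [h2, ContinuousLinearMap.det, ← LinearMap.det_toMatrix b]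
  congr 1
  simp

lemma clm_det_pos {n : ℕ} (A : EuclideanSpace ℝ (Fin n) →L[ℝ] EuclideanSpace ℝ (Fin n))
    (t : ℝ) (ht : 0 ≤ t) (h : t * ‖A‖ < 1) : 0 < (ContinuousLinearMap.id ℝ _ - t • A).det := by
  obtain ⟨P, -, hP⟩ := clm_det_poly A
  have hne : ∀ s ∈ Icc 0 t, P.eval s ≠ 0 := by
    intro s hs h0
    rw [hP] at h0
    rw [ContinuousLinearMap.det] at h0
    have := LinearMap.bot_lt_ker_of_det_eq_zero h0
    obtain ⟨x, hx, hx0⟩ := Submodule.exists_mem_ne_zero_of_ne_bot this.ne'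
    have e : x = s • A x := by
      have : x - s • A x = 0 := by simpa using hx
      exact sub_eq_zero.1 this
    have hxp : 0 < ‖x‖ := norm_pos_iff.2 hx0
    have : ‖x‖ ≤ s * (‖A‖ * ‖x‖) := by
      calc ‖x‖ = ‖s • A x‖ := by rw [← e]
        _ = s * ‖A x‖ := by rw [norm_smul, Real.norm_of_nonneg hs.1]
        _ ≤ _ := mul_le_mul_of_nonneg_left (A.le_opNorm x) hs.1
    have h3 : s * ‖A‖ ≤ t * ‖A‖ := mul_le_mul_of_nonneg_right hs.2 (norm_nonneg _)
    nlinarith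
  rw [← hP]
  by_contra hc
  push Not at hc
  have h0 : P.eval 0 = 1 := by rw [hP]; simp [ContinuousLinearMap.det]
  have hcont : ContinuousOn (fun s => P.eval s) (Icc 0 t) := P.continuous.continuousOn
  have := intermediate_value_Icc' ht hcont
  have h0' : (0:ℝ) ∈ Icc (P.eval t) (P.eval 0) := ⟨hc, by rw [h0]; norm_num⟩
  obtain ⟨s, hs, hs0⟩ := this h0'
  exact hne s hs hs0

/-- Extrapolation of polynomials of bounded degree from small nodes. -/
lemma lagrange_weights (d : ℕ) (t0 : ℝ) (ht0 : 0 < t0) :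
    ∃ (s : Finset ℕ) (w : ℕ → ℝ) (v : ℕ → ℝ), (∀ i ∈ s, v i ∈ Icc 0 t0) ∧ ∑ i ∈ s, w i = 1 ∧
      ∀ P : Polynomial ℝ, P.natDegree ≤ d → P.eval 1 = ∑ i ∈ s, w i * P.eval (v i) := by
  let s := Finset.range (d + 1)
  let v : ℕ → ℝ := fun i => t0 * i / (d + 1)
  have hd : (0 : ℝ) < d + 1 := by positivity
  have hv : Set.InjOn v s := by
    intro i _ j _ hij
    simp only [v] at hij
    field_simp at hij
    exact_mod_cast hij
  have key : ∀ P : Polynomial ℝ, P.natDegree ≤ d →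
      P.eval 1 = ∑ i ∈ s, (Lagrange.basis s v i).eval 1 * P.eval (v i) := by
    intro P hP
    have hdeg : P.degree < (s.card : ℕ) := by
      refine Polynomial.degree_le_natDegree.trans_lt ?_
      simp only [s, Finset.card_range]
      exact_mod_cast Nat.lt_succ_of_le hP
    have := Lagrange.eq_interpolate hv hdeg
    conv_lhs => rw [this]
    rw [Lagrange.interpolate_apply, Polynomial.eval_finsetSum]
    refine Finset.sum_congr rfl fun i _ => ?_
    simp [mul_comm]
  refine ⟨s, fun i => (Lagrange.basis s v i).eval 1, v, ?_, ?_, key⟩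
  · intro i hi
    have hi' : (i : ℝ) ≤ d + 1 := by
      have := Finset.mem_range.1 hi
      exact_mod_cast this.le
    refine ⟨by positivity, ?_⟩
    simp only [v]
    rw [div_le_iff₀ hd]
    exact mul_le_mul_of_nonneg_left hi' ht0.le
  · have := key 1 (by simp)
    simpa using this.symm

open MeasureTheory in
lemma brouwer_smooth {n : ℕ} (G : EuclideanSpace ℝ (Fin n) → EuclideanSpace ℝ (Fin n))
    (hG : ContDiff ℝ 1 G) (hs : HasCompactSupport G) : ∃ x, G x = x := by
  by_contra hno
  push Not at hno
  obtain ⟨C, hC⟩ := ContDiff.lipschitzWith_of_hasCompactSupport hs hG (by simp)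
  have hd : Differentiable ℝ G := hG.differentiable (by simp)
  obtain ⟨r, hr1, hr⟩ : ∃ r : ℝ, 1 ≤ r ∧ ∀ x, r < ‖x‖ → G x = 0 := by
    obtain ⟨r, hr⟩ := hs.isCompact.isBounded.subset_closedBall (0 : EuclideanSpace ℝ (Fin n))
    refine ⟨max r 1, le_max_right _ _, fun x hx => ?_⟩
    by_contra h
    have := hr (subset_tsupport G h)
    simp at this
    exact absurd (this.trans (le_max_left _ _)) (not_le.2 hx)
  set B := Metric.closedBall (0 : EuclideanSpace ℝ (Fin n)) r with hB
  have hBc : IsCompact B := isCompact_closedBall _ _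
  have hBne : B.Nonempty := ⟨0, by simp [hB]; linarith⟩
  obtain ⟨x1, -, hx1⟩ := hBc.exists_isMinOn hBne
    (f := fun x => ‖x - G x‖) (by have := hd.continuous; fun_prop)
  set δ := ‖x1 - G x1‖ with hδ
  have hδ0 : 0 < δ := norm_pos_iff.2 (sub_ne_zero.2 (hno x1).symm)
  have hδ1 : ∀ x ∈ B, δ ≤ ‖x - G x‖ := fun x hx => hx1 hx
  obtain ⟨S, hS⟩ := hBc.exists_bound_of_continuousOn (f := G) hd.continuous.continuousOn
  set M : ℝ := r + |S| + 1 + δ with hM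
  have hMpos : 0 < M := by have := abs_nonneg S; linarith
  have hMb : ∀ x ∈ B, ∀ t ∈ Icc (0:ℝ) 1, ‖x - t • G x‖ ≤ M := by
    intro x hx t ht
    have h1 : ‖x‖ ≤ r := by simpa [hB] using hx
    have h2 : ‖t • G x‖ ≤ |S| := by
      rw [norm_smul, Real.norm_of_nonneg ht.1]
      have := (hS x hx).trans (le_abs_self S)
      nlinarith [ht.2, norm_nonneg (G x)]
    have := norm_sub_le x (t • G x)
    linarith
  -- change of variables for small t
  set t0 : ℝ := 1 / (2 * (C + 1)) with ht0
  have hC0 : (0:ℝ) ≤ C := C.2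
  have ht0pos : 0 < t0 := by positivity
  have ht0C : t0 * C < 1 := by
    rw [ht0, div_mul_eq_mul_div, div_lt_one (by positivity)]; linarith
  have ht01 : t0 ≤ 1 := by
    rw [ht0, div_le_one (by positivity)]; linarith
  have hcv : ∀ (φ : EuclideanSpace ℝ (Fin n) → ℝ), ∀ t ∈ Icc 0 t0,
      ∫ x in B, (ContinuousLinearMap.id ℝ _ - t • fderiv ℝ G x).det * φ (x - t • G x)
        = ∫ x in B, φ x := by
    intro φ t ht
    have htC : t * C < 1 := lt_of_le_of_lt (mul_le_mul_of_nonneg_right ht.2 hC0) ht0C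
    have hdist : ∀ x y, ‖x - y‖ * (1 - t * C) ≤ ‖(x - t • G x) - (y - t • G y)‖ := by
      intro x y
      have h1 : ‖G x - G y‖ ≤ C * ‖x - y‖ := by
        simpa [dist_eq_norm] using hC.dist_le_mul x y
      have h2 : (x - t • G x) - (y - t • G y) = (x - y) - t • (G x - G y) := by
        rw [smul_sub]; abel
      have h3 := norm_sub_norm_le (x - y) (t • (G x - G y))
      rw [norm_smul, Real.norm_of_nonneg ht.1] at h3
      rw [h2]
      nlinarith [ht.1, norm_nonneg (x - y), mul_le_mul_of_nonneg_left h1 ht.1]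
    have hinj : Function.Injective (fun x => x - t • G x) := by
      intro x y hxy
      have := hdist x y
      simp only at hxy
      rw [hxy, sub_self, norm_zero] at this
      have h0 : ‖x - y‖ ≤ 0 := by
        by_contra hh
        push Not at hh
        nlinarith
      exact sub_eq_zero.1 (norm_le_zero_iff.1 h0)
    have hsurj : Function.Surjective (fun x => x - t • G x) := by
      intro y
      have hcon : ContractingWith (t.toNNReal * C) (fun x => y + t • G x) := by
        constructor
        · rw [← NNReal.coe_lt_coe]; simpa [Real.coe_toNNReal t ht.1] using htC
        · refine LipschitzWith.of_dist_le_mul fun a b => ?_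
          have := hC.dist_le_mul a b
          rw [dist_add_left, dist_smul₀, Real.norm_of_nonneg ht.1]
          calc t * dist (G a) (G b) ≤ t * (C * dist a b) := mul_le_mul_of_nonneg_left this ht.1
            _ = _ := by push_cast; rw [Real.coe_toNNReal t ht.1]; ring
      refine ⟨hcon.fixedPoint _, ?_⟩
      have := hcon.fixedPoint_isFixedPt
      rw [Function.IsFixedPt] at this
      simp only
      rw [sub_eq_iff_eq_add]; exact this.symm
    have himg : Set.image (fun x => x - t • G x) B = B := by
      have houts : ∀ x, x ∉ B → x - t • G x = x := by
        intro x hx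
        have : r < ‖x‖ := by simpa [hB] using hx
        rw [hr x this]; simp
      ext y; constructor
      · rintro ⟨x, hx, rfl⟩
        by_contra hy
        have := houts _ hy
        have := hinj this
        rw [this] at hy
        exact hy hx
      · intro hy
        obtain ⟨x, rfl⟩ := hsurj y
        refine ⟨x, ?_, rfl⟩
        by_contra hx
        simp only [houts x hx] at hy
        exact hx hy
    have hder : ∀ x ∈ B, HasFDerivWithinAt (fun x => x - t • G x)
        (ContinuousLinearMap.id ℝ _ - t • fderiv ℝ G x) B x := by
      intro x _
      exact ((hasFDerivAt_id x).sub ((hd x).hasFDerivAt.const_smul t)).hasFDerivWithinAt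
    have := integral_image_eq_integral_abs_det_fderiv_smul volume hBc.measurableSet hder
      hinj.injOn φ
    rw [himg] at this
    rw [this]
    refine setIntegral_congr_fun hBc.measurableSet fun x _ => ?_
    have hn : ‖fderiv ℝ G x‖ ≤ C := norm_fderiv_le_of_lipschitz ℝ hC
    have := clm_det_pos (fderiv ℝ G x) t ht.1
      (lt_of_le_of_lt (mul_le_mul_of_nonneg_left hn ht.1) htC)
    simp only [abs_of_pos this, smul_eq_mul]
  -- extrapolate to t = 1
  have h_int : ∀ (k : ℕ) (t : ℝ), IntegrableOn (fun x : EuclideanSpace ℝ (Fin n) => (ContinuousLinearMap.id ℝ _ - t • fderiv ℝ G x).det *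
      (1 - ‖x - t • G x‖ ^ 2 / M ^ 2) ^ k) B := by
    intro k t
    refine ContinuousOn.integrableOn_compact hBc (Continuous.continuousOn ?_)
    have h1 := hG.continuous_fderiv (by simp)
    have h2 := hd.continuous
    refine Continuous.mul ?_ (by fun_prop)
    exact ContinuousLinearMap.continuous_det.comp (by fun_prop)
  have hone : ∀ k : ℕ, ∫ x in B, (ContinuousLinearMap.id ℝ _ - (1:ℝ) • fderiv ℝ G x).det *
      (1 - ‖x - (1:ℝ) • G x‖ ^ 2 / M ^ 2) ^ k = ∫ x in B, (1 - ‖x‖ ^ 2 / M ^ 2) ^ k := by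
    intro k
    obtain ⟨s, w, v, hv, hw, hP⟩ := lagrange_weights (n + k * 2) t0 ht0pos
    have hpt : ∀ x, (ContinuousLinearMap.id ℝ _ - (1:ℝ) • fderiv ℝ G x).det *
        (1 - ‖x - (1:ℝ) • G x‖ ^ 2 / M ^ 2) ^ k = ∑ i ∈ s, w i *
        ((ContinuousLinearMap.id ℝ _ - v i • fderiv ℝ G x).det *
          (1 - ‖x - v i • G x‖ ^ 2 / M ^ 2) ^ k) := by
      intro x
      obtain ⟨P, hPd, hPe⟩ := clm_det_poly (fderiv ℝ G x)
      let Q : Polynomial ℝ := Polynomial.C (1 - ‖x‖ ^ 2 / M ^ 2)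
        + Polynomial.C (2 * inner ℝ x (G x) / M ^ 2) * Polynomial.X
        + Polynomial.C (- ‖G x‖ ^ 2 / M ^ 2) * Polynomial.X ^ 2
      have hQd : Q.natDegree ≤ 2 := by
        simp only [Q]; compute_degree
      have hQe : ∀ t, Q.eval t = 1 - ‖x - t • G x‖ ^ 2 / M ^ 2 := by
        intro t
        rw [norm_sub_sq_real, norm_smul, inner_smul_right, mul_pow, Real.norm_eq_abs, sq_abs]
        simp [Q]; ring
      have := hP (P * Q ^ k) (Polynomial.natDegree_mul_le.trans
        (add_le_add hPd (Polynomial.natDegree_pow_le.trans (Nat.mul_le_mul_left k hQd))))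
      simpa [hPe, hQe] using this
    simp_rw [hpt]
    rw [integral_finsetSum _ (fun i _ => (h_int k (v i)).const_mul _)]
    have : ∀ i ∈ s, ∫ x in B, w i * ((ContinuousLinearMap.id ℝ _ - v i • fderiv ℝ G x).det *
          (1 - ‖x - v i • G x‖ ^ 2 / M ^ 2) ^ k) = w i * ∫ x in B, (1 - ‖x‖ ^ 2 / M ^ 2) ^ k := by
      intro i hi
      rw [integral_const_mul, hcv (fun y => (1 - ‖y‖ ^ 2 / M ^ 2) ^ k) (v i) (hv i hi)]
    rw [Finset.sum_congr rfl this, ← Finset.sum_mul, hw, one_mul]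
  -- bounds
  obtain ⟨D, hD⟩ := hBc.exists_bound_of_continuousOn
    (f := fun x => (ContinuousLinearMap.id ℝ _ - (1:ℝ) • fderiv ℝ G x).det) (by
      have h1 := hG.continuous_fderiv (by simp)
      exact (ContinuousLinearMap.continuous_det.comp (by fun_prop)).continuousOn)
  set a : ℝ := 1 - δ ^ 2 / M ^ 2 with ha
  set b : ℝ := 1 - (δ / 2) ^ 2 / M ^ 2 with hb
  have hδM : δ ≤ M := by have := abs_nonneg S; linarith
  have ha0 : 0 ≤ a := by
    rw [ha, sub_nonneg, div_le_one (by positivity)]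
    exact pow_le_pow_left₀ hδ0.le hδM 2
  have hab : a < b := by
    rw [ha, hb]
    have : (δ / 2) ^ 2 / M ^ 2 < δ ^ 2 / M ^ 2 := by
      apply div_lt_div_of_pos_right _ (by positivity); nlinarith
    linarith
  have hup : ∀ k : ℕ, ∫ x in B, (1 - ‖x‖ ^ 2 / M ^ 2) ^ k ≤ D * a ^ k * volume.real B := by
    intro k
    rw [← hone k]
    refine (le_abs_self _).trans ?_
    rw [← Real.norm_eq_abs]
    refine norm_setIntegral_le_of_norm_le_const hBc.measure_lt_top fun x hx => ?_
    rw [norm_mul, norm_pow]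
    have h1 := hD x hx
    have h2 : ‖1 - ‖x - (1:ℝ) • G x‖ ^ 2 / M ^ 2‖ ≤ a := by
      have e1 := hMb x hx 1 ⟨by norm_num, le_rfl⟩
      have e2 := hδ1 x hx
      rw [one_smul] at *
      have : ‖x - G x‖ ^ 2 / M ^ 2 ≤ 1 := by
        rw [div_le_one (by positivity)]; exact pow_le_pow_left₀ (norm_nonneg _) e1 2
      rw [Real.norm_of_nonneg (by linarith), ha]
      have : δ ^ 2 / M ^ 2 ≤ ‖x - G x‖ ^ 2 / M ^ 2 := by
        apply div_le_div_of_nonneg_right _ (by positivity)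
        exact pow_le_pow_left₀ hδ0.le e2 2
      linarith
    exact mul_le_mul h1 (pow_le_pow_left₀ (norm_nonneg _) h2 k) (by positivity)
      ((norm_nonneg _).trans h1)
  set η := min (δ / 2) r with hη
  have hη0 : 0 < η := lt_min (by linarith) (by linarith)
  set B' := Metric.ball (0 : EuclideanSpace ℝ (Fin n)) η with hB'
  have hB'B : B' ⊆ B := (Metric.ball_subset_closedBall).trans
    (Metric.closedBall_subset_closedBall (min_le_right _ _))
  have hrM : r ≤ M := by have := abs_nonneg S; linarith
  have hlow : ∀ k : ℕ, b ^ k * volume.real B' ≤ ∫ x in B, (1 - ‖x‖ ^ 2 / M ^ 2) ^ k := by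
    intro k
    have hi : IntegrableOn (fun x : EuclideanSpace ℝ (Fin n) => (1 - ‖x‖ ^ 2 / M ^ 2) ^ k) B := 
      ContinuousOn.integrableOn_compact hBc (Continuous.continuousOn (by fun_prop))
    calc b ^ k * volume.real B' = ∫ x in B', b ^ k := by
          rw [setIntegral_const, smul_eq_mul, mul_comm]
      _ ≤ ∫ x in B', (1 - ‖x‖ ^ 2 / M ^ 2) ^ k := by
          refine setIntegral_mono_on (integrableOn_const (Metric.isBounded_ball.measure_lt_top.ne)) (hi.mono_set hB'B)
            measurableSet_ball fun x hx => ?_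
          have hx' : ‖x‖ ≤ δ / 2 := by
            have : ‖x‖ < η := by simpa [hB'] using hx
            exact this.le.trans (min_le_left _ _)
          refine pow_le_pow_left₀ (ha0.trans hab.le) ?_ k
          rw [hb]
          have : ‖x‖ ^ 2 / M ^ 2 ≤ (δ / 2) ^ 2 / M ^ 2 := by
            apply div_le_div_of_nonneg_right _ (by positivity)
            exact pow_le_pow_left₀ (norm_nonneg _) hx' 2
          linarith
      _ ≤ _ := by
          refine setIntegral_mono_set hi ?_ hB'B.eventuallyLE
          filter_upwards [ae_restrict_mem hBc.measurableSet] with x hx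
          have hx' : ‖x‖ ≤ r := by simpa [hB] using hx
          apply pow_nonneg
          rw [sub_nonneg, div_le_one (by positivity)]
          exact pow_le_pow_left₀ (norm_nonneg _) (hx'.trans hrM) 2
  have hb0 : 0 < b := lt_of_le_of_lt ha0 hab
  have hv0 : 0 < volume.real B' :=
    ENNReal.toReal_pos (Metric.measure_ball_pos _ _ hη0).ne' Metric.isBounded_ball.measure_lt_top.ne
  have hlim : Tendsto (fun k : ℕ => (a / b) ^ k * (D * volume.real B)) atTop (nhds 0) := by
    have := (tendsto_pow_atTop_nhds_zero_of_lt_one (div_nonneg ha0 hb0.le)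
      ((div_lt_one hb0).2 hab)).mul_const (D * volume.real B)
    simpa using this
  have hge : ∀ k : ℕ, volume.real B' ≤ (a / b) ^ k * (D * volume.real B) := by
    intro k
    have := (hlow k).trans (hup k)
    rw [div_pow, div_mul_eq_mul_div, le_div_iff₀ (by positivity)]
    linarith
  have := ge_of_tendsto' hlim hge
  linarith

lemma brouwer_bounded {n : ℕ} (F : EuclideanSpace ℝ (Fin n) → EuclideanSpace ℝ (Fin n))
    (hF : Continuous F) (R : ℝ) (hR : ∀ x, ‖F x‖ ≤ R) : ∃ x, F x = x := by
  by_contra hno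
  push Not at hno
  have hR0 : 0 ≤ R := (norm_nonneg _).trans (hR 0)
  set B := Metric.closedBall (0 : EuclideanSpace ℝ (Fin n)) (R + 2) with hB
  have hBc : IsCompact B := isCompact_closedBall _ _
  have hBne : B.Nonempty := ⟨0, by simp [hB]; linarith⟩
  obtain ⟨x1, -, hx1⟩ := hBc.exists_isMinOn hBne
    (f := fun x => ‖x - F x‖) (by fun_prop)
  set δ := ‖x1 - F x1‖ with hδ
  have hδ0 : 0 < δ := norm_pos_iff.2 (sub_ne_zero.2 (hno x1).symm)
  set ε := min δ 1 with hε
  have hε0 : 0 < ε := lt_min hδ0 one_pos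
  let χ : EuclideanSpace ℝ (Fin n) → ℝ := fun x => max 0 (min 1 (R + 2 - ‖x‖))
  have hχ : Continuous χ := by fun_prop
  have hH : Continuous (fun x => χ x • F x) := hχ.smul hF
  obtain ⟨g, hg, hgd, hgs⟩ := hH.exists_contDiff_approx 1 (ε := fun _ => ε) continuous_const
    (fun _ => hε0)
  have hsupp : Function.support g ⊆ B := by
    intro x hx
    by_contra hxB
    have h1 : R + 2 < ‖x‖ := by simpa [hB] using hxB
    have : χ x = 0 := by
      simp only [χ]
      rw [max_eq_left]
      exact (min_le_right _ _).trans (by linarith)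
    exact hgs hx (by simp [this])
  have hcs : HasCompactSupport g := HasCompactSupport.of_support_subset_isCompact hBc hsupp
  obtain ⟨x, hx⟩ := brouwer_smooth g hg hcs
  have h1 := hgd x
  rw [hx, dist_eq_norm] at h1
  have hχ1 : |χ x| ≤ 1 := by
    rw [abs_of_nonneg (le_max_left _ _)]
    exact max_le (by norm_num) (min_le_left _ _)
  have h2 : ‖χ x • F x‖ ≤ R := by
    rw [norm_smul, Real.norm_eq_abs]
    nlinarith [hR x, norm_nonneg (F x)]
  have h3 : ‖x‖ ≤ R + 1 := by
    have := norm_sub_norm_le x (χ x • F x)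
    have := min_le_right δ 1
    linarith
  have hχx : χ x = 1 := by
    simp only [χ]
    rw [min_eq_left (by linarith)]; norm_num
  rw [hχx, one_smul] at h1
  have h4 : δ ≤ ‖x - F x‖ := hx1 (show x ∈ B by simp [hB]; linarith)
  have := min_le_left δ 1
  linarith

/-! ### Tonelli scheme -/

noncomputable def tonX (g : ℝ → ℝ → ℝ → ℝ) (h : ℝ) : ℕ → (ℝ × ℝ × ℝ) → ℝ → ℝ
  | 0 => fun z _ => z.1
  | i + 1 => fun z t =>
      z.1 + ∫ s in (0:ℝ)..t, (z.2.1 - ∫ r in (0:ℝ)..s, g z.2.2 r (tonX g h i z (max (r - h) 0)))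

lemma tonX_succ (g : ℝ → ℝ → ℝ → ℝ) (h : ℝ) (i : ℕ) (z : ℝ × ℝ × ℝ) (t : ℝ) :
    tonX g h (i + 1) z t = z.1 + ∫ s in (0:ℝ)..t,
      (z.2.1 - ∫ r in (0:ℝ)..s, g z.2.2 r (tonX g h i z (max (r - h) 0))) := rfl

lemma tonV_cont (g : ℝ → ℝ → ℝ → ℝ) (hg : Continuous (fun q : ℝ × ℝ × ℝ => g q.1 q.2.1 q.2.2))
    (h : ℝ) (X : (ℝ × ℝ × ℝ) → ℝ → ℝ) (hX : Continuous (fun q : (ℝ × ℝ × ℝ) × ℝ => X q.1 q.2)) :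
    Continuous (fun q : (ℝ × ℝ × ℝ) × ℝ =>
      q.1.2.1 - ∫ r in (0:ℝ)..q.2, g q.1.2.2 r (X q.1 (max (r - h) 0))) := by
  refine Continuous.sub (by fun_prop) ?_
  refine intervalIntegral.continuous_parametric_intervalIntegral_of_continuous
    (f := fun (q : (ℝ × ℝ × ℝ) × ℝ) r => g q.1.2.2 r (X q.1 (max (r - h) 0))) ?_ continuous_snd
  have h1 : Continuous (fun p : ((ℝ × ℝ × ℝ) × ℝ) × ℝ => X p.1.1 (max (p.2 - h) 0)) :=
    hX.comp (f := fun p : ((ℝ × ℝ × ℝ) × ℝ) × ℝ => (p.1.1, max (p.2 - h) 0)) (by fun_prop)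
  exact hg.comp (f := fun p : ((ℝ × ℝ × ℝ) × ℝ) × ℝ =>
    (p.1.1.2.2, p.2, X p.1.1 (max (p.2 - h) 0))) (by fun_prop)

lemma tonX_cont (g : ℝ → ℝ → ℝ → ℝ) (hg : Continuous (fun q : ℝ × ℝ × ℝ => g q.1 q.2.1 q.2.2))
    (h : ℝ) (i : ℕ) : Continuous (fun q : (ℝ × ℝ × ℝ) × ℝ => tonX g h i q.1 q.2) := by
  induction i with
  | zero => simp only [tonX]; fun_prop
  | succ i ih =>
    simp only [tonX_succ]
    refine Continuous.add (by fun_prop) ?_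
    refine intervalIntegral.continuous_parametric_intervalIntegral_of_continuous
      (f := fun (q : (ℝ × ℝ × ℝ) × ℝ) s => q.1.2.1 - ∫ r in (0:ℝ)..s, g q.1.2.2 r
        (tonX g h i q.1 (max (r - h) 0))) ?_ continuous_snd
    exact (tonV_cont g hg h _ ih).comp
      (f := fun p : ((ℝ × ℝ × ℝ) × ℝ) × ℝ => (p.1.1, p.2)) (by fun_prop)

lemma tonX_stab (g : ℝ → ℝ → ℝ → ℝ) (h : ℝ) (hh : 0 < h) (z : ℝ × ℝ × ℝ) (i : ℕ) :
    ∀ t ∈ Icc 0 (i * h), tonX g h (i + 1) z t = tonX g h i z t := by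
  induction i with
  | zero =>
    intro t ht
    have : t = 0 := by simpa using ht
    subst this
    simp [tonX]
  | succ i ih =>
    intro t ht
    rw [tonX_succ g h (i + 1), tonX_succ g h i]
    congr 1
    refine intervalIntegral.integral_congr fun s hs => ?_
    rw [uIcc_of_le ht.1] at hs
    beta_reduce
    congr 1
    refine intervalIntegral.integral_congr fun r hr => ?_
    rw [uIcc_of_le hs.1] at hr
    beta_reduce
    rw [ih]
    refine ⟨le_max_right _ _, max_le ?_ (by positivity)⟩
    have := ht.2
    push_cast at this
    linarith [hr.2, hs.2]

lemma scheme_exists (g : ℝ → ℝ → ℝ → ℝ)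
    (hg : Continuous (fun q : ℝ × ℝ × ℝ => g q.1 q.2.1 q.2.2)) (h T : ℝ) (hh : 0 < h) :
    ∃ x v : (ℝ × ℝ × ℝ) → ℝ → ℝ,
      Continuous (fun q : (ℝ × ℝ × ℝ) × ℝ => x q.1 q.2) ∧
      Continuous (fun q : (ℝ × ℝ × ℝ) × ℝ => v q.1 q.2) ∧
      (∀ z, x z 0 = z.1) ∧ (∀ z, v z 0 = z.2.1) ∧
      (∀ z t, HasDerivAt (x z) (v z t) t) ∧
      (∀ z, ∃ w : ℝ → ℝ, (∀ t, HasDerivAt (v z) (w t) t) ∧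
        ∀ t ∈ Icc 0 T, w t = -g z.2.2 t (x z (max (t - h) 0))) := by
  obtain ⟨m, hm⟩ := exists_nat_ge (T / h)
  have hmT : T ≤ m * h := by rwa [div_le_iff₀ hh] at hm
  have hVc := tonV_cont g hg h _ (tonX_cont g hg h m)
  refine ⟨tonX g h (m + 1), fun z t => z.2.1 - ∫ r in (0:ℝ)..t, g z.2.2 r
    (tonX g h m z (max (r - h) 0)), tonX_cont g hg h _, hVc, ?_, ?_, ?_, ?_⟩
  · intro z; simp [tonX_succ]
  · intro z; simp
  · intro z t
    have hc : Continuous (fun s => z.2.1 - ∫ r in (0:ℝ)..s, g z.2.2 r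
        (tonX g h m z (max (r - h) 0))) :=
      hVc.comp (f := fun s : ℝ => (z, s)) (by fun_prop)
    have := (hc.integral_hasStrictDerivAt 0 t).hasDerivAt.const_add z.1
    exact this
  · intro z
    have hc : Continuous (fun r => g z.2.2 r (tonX g h m z (max (r - h) 0))) := by
      have h1 : Continuous (fun r : ℝ => tonX g h m z (max (r - h) 0)) :=
        (tonX_cont g hg h m).comp (f := fun r : ℝ => (z, max (r - h) 0)) (by fun_prop)
      exact hg.comp (f := fun r : ℝ => (z.2.2, r, tonX g h m z (max (r - h) 0))) (by fun_prop)
    refine ⟨fun t => -g z.2.2 t (tonX g h m z (max (t - h) 0)), fun t => ?_, fun t ht => ?_⟩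
    · exact (hc.integral_hasStrictDerivAt 0 t).hasDerivAt.const_sub z.2.1
    · simp only
      rw [tonX_stab g h hh z m]
      refine ⟨le_max_right _ _, max_le ?_ (by positivity)⟩
      linarith [ht.2]

/-! ### Growth estimate -/

lemma hasDerivAt_posSq (y : ℝ) : HasDerivAt (fun s : ℝ => (max s 0) ^ 2) (2 * max y 0) y := by
  rcases lt_trichotomy y 0 with hy | hy | hy
  · rw [max_eq_right hy.le]
    have : (fun s : ℝ => (max s 0) ^ 2) =ᶠ[nhds y] fun _ => 0 := by
      filter_upwards [gt_mem_nhds hy] with s hs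
      rw [max_eq_right (le_of_lt hs)]; simp
    simpa using (hasDerivAt_const y (0:ℝ)).congr_of_eventuallyEq this
  · subst hy
    simp only [max_self, mul_zero]
    rw [hasDerivAt_iff_isLittleO]
    simp only [max_self, sub_zero, smul_zero]
    have h2 : (fun s : ℝ => s ^ 2) =o[nhds 0] fun s : ℝ => s := by
      simpa using Asymptotics.isLittleO_pow_pow (𝕜 := ℝ) (show 1 < 2 by norm_num)
    refine (Asymptotics.IsBigO.of_bound 1 ?_).trans_isLittleO h2
    refine Eventually.of_forall fun s => ?_
    simp only [Real.norm_eq_abs, one_mul]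
    rcases le_total s 0 with h | h <;> simp [h] 
    positivity
  · rw [max_eq_left hy.le]
    have : (fun s : ℝ => (max s 0) ^ 2) =ᶠ[nhds y] fun s => s ^ 2 := by
      filter_upwards [lt_mem_nhds hy] with s hs
      rw [max_eq_left (le_of_lt hs)]
    simpa using (hasDerivAt_pow 2 y).congr_of_eventuallyEq this

lemma hasDerivAt_negSq (y : ℝ) : HasDerivAt (fun s : ℝ => (max (-s) 0) ^ 2) (-2 * max (-y) 0) y := by
  have := (hasDerivAt_posSq (-y)).comp y (hasDerivAt_neg y)
  convert! this using 1; ring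

lemma pos_part_lip (a b : ℝ) : |max a 0 - max b 0| ≤ |a - b| := abs_max_sub_max_le_abs a b 0
lemma neg_part_lip (a b : ℝ) : |max (-a) 0 - max (-b) 0| ≤ |a - b| := by
  have := abs_max_sub_max_le_abs (-a) (-b) 0
  rwa [show -a - -b = -(a - b) by ring, abs_neg] at this

/-- derivative at a left-maximum is nonnegative -/
lemma deriv_nonneg_of_leftmax {φ : ℝ → ℝ} {d a t : ℝ} (hat : a < t) (hd : HasDerivAt φ d t)
    (hmax : ∀ s ∈ Icc a t, φ s ≤ φ t) : 0 ≤ d := by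
  by_contra hneg
  push Not at hneg
  have h1 := (hasDerivAt_iff_tendsto_slope.1 hd).mono_left (nhdsWithin_mono t
    (show Iio t ⊆ {t}ᶜ from fun s hs => ne_of_lt hs))
  have h2 : ∀ᶠ s in nhdsWithin t (Iio t), slope φ t s < 0 := h1.eventually (gt_mem_nhds hneg)
  have h3 : ∀ᶠ s in nhdsWithin t (Iio t), s ∈ Ioo a t := Ioo_mem_nhdsLT hat
  obtain ⟨s, hs1, hs2⟩ := (h2.and h3).exists
  rw [slope_def_field, div_lt_iff_of_neg (by linarith [hs2.2])] at hs1
  have := hmax s ⟨hs2.1.le, hs2.2.le⟩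
  linarith

lemma lip_of_deriv_bound {x v : ℝ → ℝ} (hx : ∀ t, HasDerivAt x (v t) t) {a b S : ℝ} (hab : a ≤ b)
    (hS : ∀ t ∈ Icc a b, |v t| ≤ S) : |x b - x a| ≤ S * (b - a) := by
  have := Convex.norm_image_sub_le_of_norm_hasDerivWithin_le (s := Icc a b) (C := S)
    (fun t _ => (hx t).hasDerivWithinAt) (fun t ht => by simpa using hS t ht) (convex_Icc a b)
    (left_mem_Icc.2 hab) (right_mem_Icc.2 hab)
  simpa [Real.norm_eq_abs, abs_of_nonneg (sub_nonneg.2 hab)] using this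

noncomputable def enF (N x v : ℝ) : ℝ := v ^ 2 + (max x 0) ^ 2 + N ^ 2 * (max (-x) 0) ^ 2

lemma enF_bounds {N x v B : ℝ} (hN : 1 ≤ N) (hB : 0 ≤ B) (h : enF N x v ≤ B ^ 2) :
    |v| ≤ B ∧ |x| ≤ B ∧ N * max (-x) 0 ≤ B := by
  have h1 : 0 ≤ max x 0 := le_max_right _ _
  have h2 : 0 ≤ max (-x) 0 := le_max_right _ _
  have h4 : N * max (-x) 0 ≤ B := by
    apply le_of_sq_le_sq _ hB
    rw [mul_pow]; unfold enF at h; nlinarith [sq_nonneg v, sq_nonneg (max x 0)]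
  unfold enF at h
  refine ⟨abs_le_of_sq_le_sq (by nlinarith [sq_nonneg (max x 0), mul_nonneg (sq_nonneg N) (sq_nonneg (max (-x) 0))]) hB, ?_, h4⟩
  have h3 : max x 0 ≤ B := by
    apply le_of_sq_le_sq _ hB
    nlinarith [sq_nonneg v, mul_nonneg (sq_nonneg N) (sq_nonneg (max (-x) 0))]
  rw [abs_le]
  constructor
  · have := le_max_left (-x) 0
    nlinarith
  · exact (le_max_left x 0).trans h3

lemma growth (C T N h : ℝ) (hC : 0 ≤ C) (hN : 1 ≤ N) (hh : 0 < h)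
    (hNh : N ^ 2 * h ≤ T) (P : ℝ → ℝ → ℝ) (hP : ∀ t y, |P t y| ≤ C * (1 + max y 0))
    (x v w : ℝ → ℝ) (hx : ∀ t, HasDerivAt x (v t) t) (hv : ∀ t, HasDerivAt v (w t) t)
    (hw : ∀ t ∈ Icc 0 T, w t = -(P t (x (max (t - h) 0)) - N ^ 2 * max (-x (max (t - h) 0)) 0)) :
    ∀ t ∈ Icc 0 T, enF N (x t) (v t) + 1 ≤
      (enF N (x 0) (v 0) + 1) * exp ((4 * C + 3 + 2 * T) * T) := by
  have hT : 0 ≤ T := le_trans (by positivity) hNh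
  set κ := 4 * C + 3 + 2 * T with hκ
  set E : ℝ → ℝ := fun t => enF N (x t) (v t) + 1 with hE
  have hE1 : ∀ t, 1 ≤ E t := by
    intro t
    simp only [hE, enF]
    have : 0 ≤ N ^ 2 * (max (-x t) 0) ^ 2 := by positivity
    nlinarith [sq_nonneg (v t), sq_nonneg (max (x t) 0)]
  have hEd : ∀ t, HasDerivAt E (2 * v t * w t + 2 * max (x t) 0 * v t
      + N ^ 2 * (-2 * max (-x t) 0 * v t)) t := by
    intro t
    have h1 := (hv t).pow 2
    have h2 := (hasDerivAt_posSq (x t)).comp t (hx t)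
    have h3 := ((hasDerivAt_negSq (x t)).comp t (hx t)).const_mul (N ^ 2)
    have := ((h1.add h2).add h3).add_const 1
    convert! this using 1
    simp
  have hEc : Continuous E := continuous_iff_continuousAt.2 fun t => (hEd t).continuousAt
  obtain ⟨ts, hts, hmax⟩ := (isCompact_Icc (a := (0:ℝ)) (b := T)).exists_isMaxOn
    ⟨0, by simpa using hT⟩ (f := fun t => E t * exp (-κ * t)) (by fun_prop)
  have hκ0 : 0 < κ := by positivity
  have hts0 : ts = 0 := by
    by_contra hne
    have hpos : 0 < ts := lt_of_le_of_ne hts.1 (Ne.symm hne)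
    have hle : ∀ s ∈ Icc 0 ts, E s ≤ E ts := by
      intro s hs
      have h1 : E s * exp (-κ * s) ≤ E ts * exp (-κ * ts) := hmax ⟨hs.1, hs.2.trans hts.2⟩
      have h2 : exp (-κ * ts) ≤ exp (-κ * s) := exp_le_exp.2 (by nlinarith [hs.2])
      have h3 := exp_pos (-κ * s)
      have h4 : E ts * exp (-κ * ts) ≤ E ts * exp (-κ * s) :=
        mul_le_mul_of_nonneg_left h2 (by linarith [hE1 ts])
      exact le_of_mul_le_mul_right (h1.trans h4) h3
    set e := √(E ts) with he
    have he2 : e ^ 2 = E ts := Real.sq_sqrt (by linarith [hE1 ts])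
    have he1 : 1 ≤ e := by rw [he]; exact Real.one_le_sqrt.2 (hE1 ts)
    have hb : ∀ s ∈ Icc 0 ts, |v s| ≤ e ∧ |x s| ≤ e ∧ N * max (-x s) 0 ≤ e := by
      intro s hs
      apply enF_bounds hN (by linarith)
      have := hle s hs
      simp only [hE] at this he2
      linarith
    set τ := max (ts - h) 0 with hτ
    have hτ1 : τ ∈ Icc 0 ts := ⟨le_max_right _ _, max_le (by linarith) hpos.le⟩
    have hτ2 : ts - τ ≤ h := by have := le_max_left (ts - h) 0; linarith
    have hlip : |x ts - x τ| ≤ e * (ts - τ) :=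
      lip_of_deriv_bound hx hτ1.2 (fun s hs => (hb s ⟨hτ1.1.trans hs.1, hs.2⟩).1)
    have hlip2 : |x ts - x τ| ≤ e * h :=
      hlip.trans (mul_le_mul_of_nonneg_left hτ2 (by linarith))
    have hderiv := (hEd ts).mul (((hasDerivAt_id ts).const_mul (-κ)).exp)
    have hnn := deriv_nonneg_of_leftmax hpos hderiv
      (fun s hs => hmax ⟨hs.1, hs.2.trans hts.2⟩)
    have hexp := exp_pos (-κ * ts)
    have hmain : κ * E ts ≤ 2 * v ts * w ts + 2 * max (x ts) 0 * v ts
      + N ^ 2 * (-2 * max (-x ts) 0 * v ts) := by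
      simp only [id] at hnn
      by_contra hcon
      push Not at hcon
      have : 0 ≤ exp (-κ * ts) * ((2 * v ts * w ts + 2 * max (x ts) 0 * v ts
      + N ^ 2 * (-2 * max (-x ts) 0 * v ts)) - κ * E ts) := by linarith
      have := (mul_nonneg_iff_of_pos_left hexp).1 this
      linarith
    rw [hw ts hts] at hmain
    have hrew : 2 * v ts * -(P ts (x τ) - N ^ 2 * max (-x τ) 0) + 2 * max (x ts) 0 * v ts
      + N ^ 2 * (-2 * max (-x ts) 0 * v ts) = 2 * (v ts * (-P ts (x τ) + max (x ts) 0 +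
        N ^ 2 * (max (-x τ) 0 - max (-x ts) 0))) := by ring
    rw [hrew] at hmain
    have hposb : ∀ s ∈ Icc 0 ts, max (x s) 0 ≤ e := fun s hs =>
      max_le ((le_abs_self _).trans (hb s hs).2.1) (by linarith)
    have b1 : |P ts (x τ)| ≤ 2 * C * e := by
      refine (hP _ _).trans ?_
      have := hposb τ hτ1
      nlinarith
    have b2 : |max (x ts) 0| ≤ e := by
      rw [abs_of_nonneg (le_max_right _ _)]; exact hposb ts ⟨hpos.le, le_rfl⟩
    have b3 : |N ^ 2 * (max (-x τ) 0 - max (-x ts) 0)| ≤ T * e := by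
      rw [abs_mul, abs_of_nonneg (by positivity : (0:ℝ) ≤ N ^ 2)]
      have h1 := neg_part_lip (x τ) (x ts)
      rw [abs_sub_comm (x τ)] at h1
      have h2 := h1.trans hlip2
      calc N ^ 2 * |max (-x τ) 0 - max (-x ts) 0| ≤ N ^ 2 * (e * h) :=
            mul_le_mul_of_nonneg_left h2 (by positivity)
        _ = (N ^ 2 * h) * e := by ring
        _ ≤ _ := mul_le_mul_of_nonneg_right hNh (by linarith)
    have b4 : |(-P ts (x τ) + max (x ts) 0 + N ^ 2 * (max (-x τ) 0 - max (-x ts) 0))| ≤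
        (2 * C + 1 + T) * e := by
      refine (abs_add_le _ _).trans ?_
      have := abs_add_le (-P ts (x τ)) (max (x ts) 0)
      rw [abs_neg] at this
      linarith
    have b5 := (le_abs_self (v ts * (-P ts (x τ) + max (x ts) 0 +
        N ^ 2 * (max (-x τ) 0 - max (-x ts) 0))))
    rw [abs_mul] at b5
    have b6 := mul_le_mul (hb ts ⟨hpos.le, le_rfl⟩).1 b4 (abs_nonneg _) (by linarith)
    have : κ * e ^ 2 ≤ 2 * (e * ((2 * C + 1 + T) * e)) := by rw [he2]; linarith
    rw [hκ] at this
    nlinarith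
  intro t ht
  have h1 : E t * exp (-κ * t) ≤ E ts * exp (-κ * ts) := hmax ht
  rw [hts0] at h1
  simp only [mul_zero, exp_zero, mul_one] at h1
  have h2 : exp (κ * t) ≤ exp (κ * T) := exp_le_exp.2 (mul_le_mul_of_nonneg_left ht.2 hκ0.le)
  calc E t = (E t * exp (-κ * t)) * exp (κ * t) := by
        rw [mul_assoc, ← exp_add]; simp
    _ ≤ E 0 * exp (κ * t) := mul_le_mul_of_nonneg_right h1 (exp_pos _).le
    _ ≤ _ := mul_le_mul_of_nonneg_left h2 (by linarith [hE1 0])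

/-! ### Extension of a solution on one period -/

noncomputable def extP (T lam : ℝ) (x : ℝ → ℝ) (t : ℝ) : ℝ :=
  lam ^ (⌊t / T⌋ : ℤ) * x (t - ⌊t / T⌋ * T)

lemma extP_floor {T : ℝ} (hT : 0 < T) (t : ℝ) : t - ⌊t / T⌋ * T ∈ Ico 0 T := by
  have h1 := Int.floor_le (t / T)
  have h2 := Int.lt_floor_add_one (t / T)
  rw [le_div_iff₀ hT] at h1
  rw [div_lt_iff₀ hT] at h2
  constructor <;> linarith

lemma extP_eq {T lam : ℝ} (hT : 0 < T) (hl : 0 < lam) {x : ℝ → ℝ} (hx : x T = lam * x 0)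
    (m : ℤ) {t : ℝ} (ht : t ∈ Icc (m * T) ((m + 1) * T)) :
    extP T lam x t = lam ^ m * x (t - m * T) := by
  rcases lt_or_eq_of_le ht.2 with h | h
  · have : ⌊t / T⌋ = m := by
      rw [Int.floor_eq_iff, le_div_iff₀ hT, div_lt_iff₀ hT]
      exact ⟨ht.1, h⟩
    simp [extP, this]
  · have : ⌊t / T⌋ = m + 1 := by
      rw [h, mul_div_assoc, div_self hT.ne', mul_one]
      exact_mod_cast Int.floor_intCast (m + 1)
    simp only [extP, this]
    subst h
    push_cast
    rw [sub_self, show ((m:ℝ) + 1) * T - m * T = T by ring, hx, zpow_add_one₀ hl.ne']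
    ring

lemma extP_Ico {T lam : ℝ} (hT : 0 < T) {x : ℝ → ℝ}
    (m : ℤ) {t : ℝ} (ht : t ∈ Ico (m * T) ((m + 1) * T)) :
    extP T lam x t = lam ^ m * x (t - m * T) := by
  have : ⌊t / T⌋ = m := by
    rw [Int.floor_eq_iff, le_div_iff₀ hT, div_lt_iff₀ hT]
    exact ht
  simp [extP, this]

lemma extP_per {T lam : ℝ} (hT : 0 < T) (hl : 0 < lam) (x : ℝ → ℝ) (t : ℝ) :
    extP T lam x (t + T) = lam * extP T lam x t := by
  have h : ⌊(t + T) / T⌋ = ⌊t / T⌋ + 1 := by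
    rw [add_div, div_self hT.ne', Int.floor_add_one]
  simp only [extP, h, zpow_add_one₀ hl.ne']
  push_cast
  rw [show t + T - (⌊t / T⌋ + 1) * T = t - ⌊t / T⌋ * T by ring]
  ring

lemma extP_right {T lam : ℝ} (hT : 0 < T) (hl : 0 < lam) {x v : ℝ → ℝ}
    (hd : ∀ t, HasDerivAt x (v t) t) (hx : x T = lam * x 0) (t : ℝ) :
    HasDerivWithinAt (extP T lam x) (extP T lam v t) (Ici t) t := by
  set m := ⌊t / T⌋ with hm
  have hmt := extP_floor hT t
  rw [← hm] at hmt
  have h1 : HasDerivAt (fun s => lam ^ m * x (s - m * T)) (lam ^ m * v (t - m * T)) t := by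
    have := ((hd (t - m * T)).comp_sub_const t (m * T)).const_mul (lam ^ m)
    exact this
  have h2 : extP T lam v t = lam ^ m * v (t - m * T) := by simp [extP, ← hm]
  rw [h2]
  refine h1.hasDerivWithinAt.congr_of_eventuallyEq ?_ ?_
  · have : Icc t ((m + 1) * T) ∈ nhdsWithin t (Ici t) := Icc_mem_nhdsGE (by linarith [hmt.2])
    filter_upwards [this] with s hs
    exact extP_eq hT hl hx m ⟨by linarith [hmt.1, hs.1], hs.2⟩
  · exact extP_eq hT hl hx m ⟨by linarith [hmt.1], by linarith [hmt.2]⟩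

lemma extP_left {T lam : ℝ} (hT : 0 < T) (hl : 0 < lam) {x v : ℝ → ℝ}
    (hd : ∀ t, HasDerivAt x (v t) t) (hx : x T = lam * x 0) (t : ℝ) :
    ∃ m : ℤ, t ∈ Icc (m * T) ((m + 1) * T) ∧
    HasDerivWithinAt (extP T lam x) (lam ^ m * v (t - m * T)) (Iic t) t := by
  set m := ⌈t / T⌉ - 1 with hm
  have h1 := Int.le_ceil (t / T)
  have h2 := Int.ceil_lt_add_one (t / T)
  rw [div_le_iff₀ hT] at h1
  have h2' : ((⌈t / T⌉ : ℝ) - 1) < t / T := by linarith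
  rw [lt_div_iff₀ hT] at h2'
  have hmc : (m : ℝ) = (⌈t / T⌉ : ℝ) - 1 := by rw [hm]; push_cast; ring
  rw [← hmc] at h2'
  have h1' : t ≤ (m + 1) * T := by rw [hmc]; linarith
  refine ⟨m, ⟨h2'.le, h1'⟩, ?_⟩
  have h3 : HasDerivAt (fun s => lam ^ m * x (s - m * T)) (lam ^ m * v (t - m * T)) t := by
    have := ((hd (t - m * T)).comp_sub_const t (m * T)).const_mul (lam ^ m)
    exact this
  refine h3.hasDerivWithinAt.congr_of_eventuallyEq ?_ ?_
  · have : Icc (m * T) t ∈ nhdsWithin t (Iic t) := Icc_mem_nhdsLE h2'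
    filter_upwards [this] with s hs
    exact extP_eq hT hl hx m ⟨hs.1, by linarith [hs.2]⟩
  · exact extP_eq hT hl hx m ⟨h2'.le, h1'⟩

lemma extP_deriv {T lam : ℝ} (hT : 0 < T) (hl : 0 < lam) {x v : ℝ → ℝ}
    (hd : ∀ t, HasDerivAt x (v t) t) (hx : x T = lam * x 0) (hv : v T = lam * v 0) (t : ℝ) :
    HasDerivAt (extP T lam x) (extP T lam v t) t := by
  obtain ⟨m, hm, h⟩ := extP_left hT hl hd hx t
  rw [← extP_eq hT hl hv m hm] at h
  have := h.union (extP_right hT hl hd hx t)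
  rwa [Iic_union_Ici, hasDerivWithinAt_univ] at this

lemma extP_cont {T lam : ℝ} (hT : 0 < T) (hl : 0 < lam) {x v : ℝ → ℝ}
    (hd : ∀ t, HasDerivAt x (v t) t) (hx : x T = lam * x 0) :
    Continuous (extP T lam x) := by
  refine continuous_iff_continuousAt.2 fun t => ?_
  obtain ⟨m, hm, h⟩ := extP_left hT hl hd hx t
  have := h.continuousWithinAt.union (extP_right hT hl hd hx t).continuousWithinAt
  rwa [Iic_union_Ici, continuousWithinAt_univ] at this

/-! ### Compactness along an ultrafilter -/

lemma ulim_exists (U : Ultrafilter ℕ) (u : ℕ → ℝ) (K : ℝ) (hu : ∀ j, |u j| ≤ K) :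
    ∃ l, Tendsto u U (nhds l) := by
  obtain ⟨l, -, hl⟩ := (isCompact_Icc (a := -K) (b := K)).ultrafilter_le_nhds (U.map u) (by
    rw [le_principal_iff]
    exact Filter.mem_map.2 (univ_mem' fun j => abs_le.1 (hu j)))
  exact ⟨l, hl⟩

lemma right_le {f f' : ℝ → ℝ} {a b c : ℝ} (hf : Continuous f)
    (hd : ∀ t, HasDerivWithinAt f (f' t) (Ici t) t) (hab : a ≤ b)
    (hb : ∀ t ∈ Ico a b, f' t ≤ c) : f b - f a ≤ c * (b - a) := by
  have := image_le_of_deriv_right_le_deriv_boundary (f := f) (f' := f') (a := a) (b := b)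
    (B := fun t => f a + c * (t - a)) (B' := fun _ => c) hf.continuousOn (fun t _ => hd t)
    (by simp) (by fun_prop) (fun t _ => by
      have := (((hasDerivAt_id t).sub_const a).const_mul c).const_add (f a)
      simpa using this.hasDerivWithinAt) hb (right_mem_Icc.2 hab)
  linarith

lemma right_ge {f f' : ℝ → ℝ} {a b c : ℝ} (hf : Continuous f)
    (hd : ∀ t, HasDerivWithinAt f (f' t) (Ici t) t) (hab : a ≤ b)
    (hb : ∀ t ∈ Ico a b, c ≤ f' t) : c * (b - a) ≤ f b - f a := by
  have := right_le (f := fun t => - f t) (f' := fun t => - f' t) (c := -c) hf.neg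
    (fun t => (hd t).neg) hab (fun t ht => by linarith [hb t ht])
  linarith

/-- second order lower estimate -/
lemma second_ge {x v w : ℝ → ℝ} {a b c : ℝ} (hx : ∀ t, HasDerivAt x (v t) t) (hv : Continuous v)
    (hd : ∀ t, HasDerivWithinAt v (w t) (Ici t) t) (hb : ∀ t ∈ Icc a b, c ≤ w t)
    {s t : ℝ} (hs : s ∈ Icc a b) (ht : t ∈ Icc a b) :
    c * (t - s) ^ 2 / 2 ≤ x t - x s - v s * (t - s) := by
  have hmono : ∀ s ∈ Icc a b, ∀ t ∈ Icc a b, s ≤ t → c * (t - s) ≤ v t - v s := by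
    intro s hs t ht hst
    exact right_ge hv hd hst (fun r hr => hb r ⟨hs.1.trans hr.1, hr.2.le.trans ht.2⟩)
  set φ : ℝ → ℝ := fun r => x r - x s - v s * (r - s) - c * (r - s) ^ 2 / 2 with hφ
  have hφd : ∀ r, HasDerivAt φ (v r - v s - c * (r - s)) r := by
    intro r
    have h1 := ((hx r).sub_const (x s)).sub (((hasDerivAt_id r).sub_const s).const_mul (v s))
    have h2 := ((((hasDerivAt_id r).sub_const s).pow 2).const_mul c).div_const 2
    have := h1.sub h2
    convert! this using 1
    simp; ring
  have hφc : Continuous φ := continuous_iff_continuousAt.2 fun r => (hφd r).continuousAt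
  have hφs : φ s = 0 := by simp [hφ]
  suffices h : 0 ≤ φ t by simp only [hφ] at h; linarith
  rcases le_total s t with hst | hst
  · have := right_ge (c := 0) hφc (fun r => (hφd r).hasDerivWithinAt) hst (fun r hr => by
      have := hmono s hs r ⟨hs.1.trans hr.1, hr.2.le.trans ht.2⟩ hr.1
      linarith)
    linarith
  · have := right_le (c := 0) hφc (fun r => (hφd r).hasDerivWithinAt) hst (fun r hr => by
      have := hmono r ⟨ht.1.trans hr.1, hr.2.le.trans hs.2⟩ s hs hr.2.le
      linarith)
    linarith

lemma second_le {x v w : ℝ → ℝ} {a b c : ℝ} (hx : ∀ t, HasDerivAt x (v t) t) (hv : Continuous v)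
    (hd : ∀ t, HasDerivWithinAt v (w t) (Ici t) t) (hb : ∀ t ∈ Icc a b, w t ≤ c)
    {s t : ℝ} (hs : s ∈ Icc a b) (ht : t ∈ Icc a b) :
    x t - x s - v s * (t - s) ≤ c * (t - s) ^ 2 / 2 := by
  have := second_ge (x := fun t => - x t) (v := fun t => - v t) (w := fun t => - w t) (c := -c)
    (fun t => (hx t).neg) hv.neg (fun t => (hd t).neg) (fun t ht => by linarith [hb t ht]) hs ht
  linarith

structure Appr (U : Ultrafilter ℕ) (x v q : ℕ → ℝ → ℝ) (n : ℕ → ℝ) (X V E : ℝ → ℝ) : Prop where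
  hx : ∀ j t, HasDerivAt (x j) (v j t) t
  hvc : ∀ j, Continuous (v j)
  hv : ∀ j t, HasDerivWithinAt (v j) (-q j t + (n j) ^ 2 * max (-x j t) 0) (Ici t) t
  hn1 : ∀ j, 1 ≤ n j
  hn : Tendsto n U atTop
  bd : ∀ B : ℝ, ∃ K : ℝ, 1 ≤ K ∧ ∀ j, ∀ t ∈ Icc (-B) B, |x j t| ≤ K ∧ |v j t| ≤ K ∧
    n j * max (-x j t) 0 ≤ K ∧ |q j t| ≤ K
  limX : ∀ t, Tendsto (fun j => x j t) U (nhds (X t))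
  limV : ∀ t, Tendsto (fun j => v j t) U (nhds (V t))
  limE : ∀ t, Tendsto (fun j => (v j t) ^ 2 / 2 + (n j) ^ 2 * (max (-x j t) 0) ^ 2 / 2) U
    (nhds (E t))

lemma Appr.exists (U : Ultrafilter ℕ) (x v q : ℕ → ℝ → ℝ) (n : ℕ → ℝ)
    (hx : ∀ j t, HasDerivAt (x j) (v j t) t)
    (hvc : ∀ j, Continuous (v j))
    (hv : ∀ j t, HasDerivWithinAt (v j) (-q j t + (n j) ^ 2 * max (-x j t) 0) (Ici t) t)
    (hn1 : ∀ j, 1 ≤ n j)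
    (hn : Tendsto n U atTop)
    (bd : ∀ B : ℝ, ∃ K : ℝ, 1 ≤ K ∧ ∀ j, ∀ t ∈ Icc (-B) B, |x j t| ≤ K ∧ |v j t| ≤ K ∧
      n j * max (-x j t) 0 ≤ K ∧ |q j t| ≤ K) : ∃ X V E, Appr U x v q n X V E := by
  have key : ∀ t, ∃ l1 l2 l3, Tendsto (fun j => x j t) U (nhds l1) ∧
      Tendsto (fun j => v j t) U (nhds l2) ∧
      Tendsto (fun j => (v j t) ^ 2 / 2 + (n j) ^ 2 * (max (-x j t) 0) ^ 2 / 2) U (nhds l3) := by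
    intro t
    obtain ⟨K, hK, hb⟩ := bd |t|
    have ht : t ∈ Icc (-|t|) |t| := ⟨neg_abs_le t, le_abs_self t⟩
    obtain ⟨l1, h1⟩ := ulim_exists U (fun j => x j t) K fun j => (hb j t ht).1
    obtain ⟨l2, h2⟩ := ulim_exists U (fun j => v j t) K fun j => (hb j t ht).2.1
    obtain ⟨l3, h3⟩ := ulim_exists U
      (fun j => (v j t) ^ 2 / 2 + (n j) ^ 2 * (max (-x j t) 0) ^ 2 / 2) (K ^ 2) fun j => by
        obtain ⟨-, b2, b3, -⟩ := hb j t ht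
        rw [abs_of_nonneg (by positivity)]
        have h0 : 0 ≤ n j * max (-x j t) 0 :=
          mul_nonneg (by linarith [hn1 j]) (le_max_right _ _)
        have := abs_le.1 b2
        have h4 : (n j * max (-x j t) 0) ^ 2 ≤ K ^ 2 := pow_le_pow_left₀ h0 b3 2
        rw [mul_pow] at h4
        have h5 : (v j t) ^ 2 ≤ K ^ 2 := sq_le_sq' this.1 this.2
        linarith
    exact ⟨l1, l2, l3, h1, h2, h3⟩
  choose X V E h using key
  exact ⟨X, V, E, hx, hvc, hv, hn1, hn, bd, fun t => (h t).1, fun t => (h t).2.1,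
    fun t => (h t).2.2⟩

namespace Appr

variable {U : Ultrafilter ℕ} {x v q : ℕ → ℝ → ℝ} {n : ℕ → ℝ} {X V E : ℝ → ℝ}

/-- bounds on a compact neighbourhood -/
lemma bdAt (A : Appr U x v q n X V E) (t0 : ℝ) : ∃ K : ℝ, 1 ≤ K ∧ ∀ j,
    ∀ t ∈ Icc (t0 - 1) (t0 + 1), |x j t| ≤ K ∧ |v j t| ≤ K ∧
    n j * max (-x j t) 0 ≤ K ∧ |q j t| ≤ K := by
  obtain ⟨K, hK, h⟩ := A.bd (|t0| + 1)
  refine ⟨K, hK, fun j t ht => h j t ⟨?_, ?_⟩⟩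
  · linarith [neg_abs_le t0, ht.1]
  · linarith [le_abs_self t0, ht.2]

lemma nonneg (A : Appr U x v q n X V E) (t : ℝ) : 0 ≤ X t := by
  obtain ⟨K, hK, hb⟩ := A.bdAt t
  have h1 : Tendsto (fun j => -(K / n j)) U (nhds 0) := by
    simpa using (A.hn.const_div_atTop K).neg
  refine le_of_tendsto_of_tendsto' h1 (A.limX t) fun j => ?_
  have h2 := (hb j t ⟨by linarith, by linarith⟩).2.2.1
  have hn : 0 < n j := by linarith [A.hn1 j]
  have h3 : max (-x j t) 0 ≤ K / n j := by rw [le_div_iff₀ hn]; linarith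
  linarith [le_max_left (-x j t) 0]

lemma e_deriv (A : Appr U x v q n X V E) (j : ℕ) (t : ℝ) :
    HasDerivWithinAt (fun t => (v j t) ^ 2 / 2 + (n j) ^ 2 * (max (-x j t) 0) ^ 2 / 2)
      (-(v j t * q j t)) (Ici t) t := by
  have h1 := ((A.hv j t).pow 2).div_const 2
  have h2 := ((((hasDerivAt_negSq (x j t)).comp t (A.hx j t)).const_mul ((n j) ^ 2)).div_const
    2).hasDerivWithinAt (s := Ici t)
  have := h1.add h2
  convert! this using 1
  simp; ring

lemma x_cont (A : Appr U x v q n X V E) (j : ℕ) : Continuous (x j) :=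
  continuous_iff_continuousAt.2 fun t => (A.hx j t).continuousAt

lemma e_cont (A : Appr U x v q n X V E) (j : ℕ) :
    Continuous (fun t => (v j t) ^ 2 / 2 + (n j) ^ 2 * (max (-x j t) 0) ^ 2 / 2) := by
  have := A.hvc j
  have := A.x_cont j
  fun_prop

lemma abs_le_of_both {f : ℝ → ℝ} {C a b : ℝ} (h : ∀ s ∈ Icc a b, ∀ t ∈ Icc a b, s ≤ t →
    |f t - f s| ≤ C * (t - s)) : ∀ s ∈ Icc a b, ∀ t ∈ Icc a b, |f t - f s| ≤ C * |t - s| := by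
  intro s hs t ht
  rcases le_total s t with h1 | h1
  · rw [abs_of_nonneg (sub_nonneg.2 h1)]; exact h s hs t ht h1
  · rw [abs_sub_comm, abs_sub_comm t s, abs_of_nonneg (sub_nonneg.2 h1)]; exact h t ht s hs h1

lemma e_lip (A : Appr U x v q n X V E) {K a b : ℝ}
    (hb : ∀ j, ∀ t ∈ Icc a b, |v j t| ≤ K ∧ |q j t| ≤ K) (j : ℕ) :
    ∀ s ∈ Icc a b, ∀ t ∈ Icc a b,
    |((v j t) ^ 2 / 2 + (n j) ^ 2 * (max (-x j t) 0) ^ 2 / 2) -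
     ((v j s) ^ 2 / 2 + (n j) ^ 2 * (max (-x j s) 0) ^ 2 / 2)| ≤ K ^ 2 * |t - s| := by
  refine abs_le_of_both (f := fun t => (v j t) ^ 2 / 2 + (n j) ^ 2 * (max (-x j t) 0) ^ 2 / 2) ?_
  intro s hs t ht hst
  have hbd : ∀ r ∈ Ico s t, |v j r * q j r| ≤ K ^ 2 := by
    intro r hr
    obtain ⟨h1, h2⟩ := hb j r ⟨hs.1.trans hr.1, hr.2.le.trans ht.2⟩
    rw [abs_mul, sq]
    exact mul_le_mul h1 h2 (abs_nonneg _) ((abs_nonneg _).trans h1)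
  rw [abs_le]
  constructor
  · have := right_ge (c := -K ^ 2) (A.e_cont j) (A.e_deriv j) hst (fun r hr => by
      linarith [(abs_le.1 (hbd r hr)).2])
    linarith
  · exact right_le (c := K ^ 2) (A.e_cont j) (A.e_deriv j) hst (fun r hr => by
      linarith [(abs_le.1 (hbd r hr)).1])

lemma x_lip (A : Appr U x v q n X V E) {K a b : ℝ}
    (hb : ∀ j, ∀ t ∈ Icc a b, |v j t| ≤ K) (j : ℕ) :
    ∀ s ∈ Icc a b, ∀ t ∈ Icc a b, |x j t - x j s| ≤ K * |t - s| := by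
  refine abs_le_of_both (f := x j) ?_
  intro s hs t ht hst
  exact lip_of_deriv_bound (A.hx j) hst (fun r hr => hb j r ⟨hs.1.trans hr.1, hr.2.trans ht.2⟩)

lemma cont_of_lip {f : ℝ → ℝ} (h : ∀ t0, ∃ C : ℝ, ∀ t ∈ Icc (t0 - 1) (t0 + 1),
    |f t - f t0| ≤ C * |t - t0|) : Continuous f := by
  refine continuous_iff_continuousAt.2 fun t0 => ?_
  obtain ⟨C, hC⟩ := h t0
  rw [ContinuousAt, tendsto_iff_dist_tendsto_zero]
  have h1 : Tendsto (fun t => C * |t - t0|) (nhds t0) (nhds 0) := by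
    have : ContinuousAt (fun t => C * |t - t0|) t0 := by fun_prop
    simpa [ContinuousAt] using this
  refine tendsto_of_tendsto_of_tendsto_of_le_of_le' tendsto_const_nhds h1
    (Eventually.of_forall fun t => dist_nonneg) ?_
  filter_upwards [Icc_mem_nhds (show t0 - 1 < t0 by linarith) (show t0 < t0 + 1 by linarith)]
    with t ht
  exact hC t ht

lemma X_cont (A : Appr U x v q n X V E) : Continuous X := by
  refine cont_of_lip fun t0 => ?_
  obtain ⟨K, hK, hb⟩ := A.bdAt t0
  refine ⟨K, fun t ht => ?_⟩
  refine le_of_tendsto ((A.limX t).sub (A.limX t0)).abs (Eventually.of_forall fun j => ?_)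
  exact A.x_lip (fun j t ht => (hb j t ht).2.1) j t0 ⟨by linarith, by linarith⟩ t ht

lemma E_cont (A : Appr U x v q n X V E) : Continuous E := by
  refine cont_of_lip fun t0 => ?_
  obtain ⟨K, hK, hb⟩ := A.bdAt t0
  refine ⟨K ^ 2, fun t ht => ?_⟩
  refine le_of_tendsto ((A.limE t).sub (A.limE t0)).abs (Eventually.of_forall fun j => ?_)
  exact A.e_lip (fun j t ht => ⟨(hb j t ht).2.1, (hb j t ht).2.2.2⟩) j t0
    ⟨by linarith, by linarith⟩ t ht

lemma E_nonneg (A : Appr U x v q n X V E) (t : ℝ) : 0 ≤ E t :=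
  ge_of_tendsto' (A.limE t) fun j => by positivity

/-- local uniform positivity -/
lemma unif_pos (A : Appr U x v q n X V E) {t0 : ℝ} (h0 : 0 < X t0) :
    ∃ δ > 0, δ ≤ 1 ∧ ∀ᶠ j in (U : Filter ℕ), ∀ t ∈ Icc (t0 - δ) (t0 + δ), 0 < x j t := by
  obtain ⟨K, hK, hb⟩ := A.bdAt t0
  have hKp : 0 < K := by linarith
  refine ⟨min 1 (X t0 / (4 * K)), by positivity, min_le_left _ _, ?_⟩
  have h1 : ∀ᶠ j in (U : Filter ℕ), X t0 / 2 < x j t0 :=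
    (A.limX t0).eventually (lt_mem_nhds (by linarith))
  filter_upwards [h1] with j hj t ht
  have hδ1 := min_le_left 1 (X t0 / (4 * K))
  have hδ2 := min_le_right 1 (X t0 / (4 * K))
  have h2 := A.x_lip (fun j t ht => (hb j t ht).2.1) j t0 ⟨by linarith, by linarith⟩ t
    ⟨by linarith [ht.1], by linarith [ht.2]⟩
  have h3 : |t - t0| ≤ X t0 / (4 * K) := by
    rw [abs_le]; constructor <;> linarith [ht.1, ht.2]
  have h4 : K * |t - t0| ≤ X t0 / 4 := by
    calc K * |t - t0| ≤ K * (X t0 / (4 * K)) := mul_le_mul_of_nonneg_left h3 hKp.le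
      _ = _ := by field_simp
  have := (abs_le.1 (h2.trans h4)).1
  linarith

lemma E_eq (A : Appr U x v q n X V E) {t0 : ℝ} (h0 : 0 < X t0) : E t0 = V t0 ^ 2 / 2 := by
  have h1 : ∀ᶠ j in (U : Filter ℕ), 0 < x j t0 := (A.limX t0).eventually (lt_mem_nhds h0)
  refine tendsto_nhds_unique (A.limE t0) ((((A.limV t0).pow 2).div_const 2).congr' ?_)
  filter_upwards [h1] with j hj
  rw [max_eq_right (by linarith)]; simp

lemma hasDerivAt_of_quad {f : ℝ → ℝ} {d C δ t0 : ℝ} (hδ : 0 < δ)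
    (h : ∀ t ∈ Icc (t0 - δ) (t0 + δ), |f t - f t0 - d * (t - t0)| ≤ C * (t - t0) ^ 2) :
    HasDerivAt f d t0 := by
  rw [hasDerivAt_iff_isLittleO]
  have h2 : (fun t : ℝ => (t - t0) ^ 2) =o[nhds t0] fun t : ℝ => t - t0 := by
    have h3 : Tendsto (fun t : ℝ => t - t0) (nhds t0) (nhds 0) := by
      have : ContinuousAt (fun t : ℝ => t - t0) t0 := by fun_prop
      simpa [ContinuousAt] using this
    have h4 : (fun s : ℝ => s ^ 2) =o[nhds 0] fun s : ℝ => s := by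
      simpa using Asymptotics.isLittleO_pow_pow (𝕜 := ℝ) (show 1 < 2 by norm_num)
    exact h4.comp_tendsto h3
  refine (Asymptotics.IsBigO.of_bound C ?_).trans_isLittleO h2
  filter_upwards [Icc_mem_nhds (show t0 - δ < t0 by linarith) (show t0 < t0 + δ by linarith)]
    with t ht
  have := h t ht
  simp only [Real.norm_eq_abs, smul_eq_mul]
  rw [abs_of_nonneg (sq_nonneg (t - t0)), mul_comm (t - t0) d]
  exact this

lemma X_deriv (A : Appr U x v q n X V E) {t0 : ℝ} (h0 : 0 < X t0) : HasDerivAt X (V t0) t0 := by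
  obtain ⟨δ, hδ, hδ1, hpos⟩ := A.unif_pos h0
  obtain ⟨K, hK, hb⟩ := A.bdAt t0
  refine hasDerivAt_of_quad (C := K) hδ fun t ht => ?_
  have hlim := ((((A.limX t).sub (A.limX t0)).sub ((A.limV t0).mul_const (t - t0)))).abs
  refine le_of_tendsto hlim ?_
  filter_upwards [hpos] with j hj
  have hw : ∀ r ∈ Icc (t0 - δ) (t0 + δ), |(-q j r + (n j) ^ 2 * max (-x j r) 0)| ≤ K := by
    intro r hr
    rw [max_eq_right (by linarith [hj r hr])]
    simpa using (hb j r ⟨by linarith [hr.1], by linarith [hr.2]⟩).2.2.2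
  have h1 := second_ge (c := -K) (A.hx j) (A.hvc j) (A.hv j) (fun r hr => (abs_le.1 (hw r hr)).1)
    (s := t0) (t := t) ⟨by linarith, by linarith⟩ ht
  have h2 := second_le (c := K) (A.hx j) (A.hvc j) (A.hv j) (fun r hr => (abs_le.1 (hw r hr)).2)
    (s := t0) (t := t) ⟨by linarith, by linarith⟩ ht
  have h3 := mul_nonneg (by linarith : (0:ℝ) ≤ K) (sq_nonneg (t - t0))
  rw [abs_le]; constructor <;> linarith

end Appr

namespace Appr

variable {U : Ultrafilter ℕ} {x v q : ℕ → ℝ → ℝ} {n : ℕ → ℝ} {X V E : ℝ → ℝ}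

lemma stick (A : Appr U x v q n X V E) {a b : ℝ} (hab : a < b) (h0 : ∀ t ∈ Icc a b, X t = 0) :
    E a = 0 := by
  by_contra hne
  have hE : 0 < E a := lt_of_le_of_ne (A.E_nonneg a) (Ne.symm hne)
  set η := E a with hη
  obtain ⟨K, hK, hb⟩ := A.bdAt a
  have hKp : 0 < K := by linarith
  set d := min (min 1 (b - a)) (η / (4 * K ^ 2)) with hd
  have hd0 : 0 < d := by
    have : 0 < b - a := by linarith
    positivity
  have hd1 : d ≤ 1 := (min_le_left _ _).trans (min_le_left _ _)
  have hd2 : d ≤ b - a := (min_le_left _ _).trans (min_le_right _ _)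
  have hd3 : K ^ 2 * d ≤ η / 4 := by
    calc K ^ 2 * d ≤ K ^ 2 * (η / (4 * K ^ 2)) :=
          mul_le_mul_of_nonneg_left (min_le_right _ _) (by positivity)
      _ = _ := by field_simp
  have hXa : X a = 0 := h0 a ⟨le_rfl, hab.le⟩
  have hXd : X (a + d) = 0 := h0 (a + d) ⟨by linarith, by linarith⟩
  have hNinv : Tendsto (fun j => K / n j) U (nhds 0) := A.hn.const_div_atTop K
  -- the auxiliary function
  have hHd : ∀ j t, HasDerivWithinAt (fun t => x j t * v j t + 2 * (K / n j) * v j t)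
      (v j t * v j t + x j t * (-q j t + (n j) ^ 2 * max (-x j t) 0) +
        2 * (K / n j) * (-q j t + (n j) ^ 2 * max (-x j t) 0)) (Ici t) t := fun j t =>
    (((A.hx j t).hasDerivWithinAt.mul (A.hv j t))).add ((A.hv j t).const_mul (2 * (K / n j)))
  have hHc : ∀ j, Continuous (fun t => x j t * v j t + 2 * (K / n j) * v j t) := fun j => by
    have := A.x_cont j
    have := A.hvc j
    fun_prop
  have e1 : ∀ᶠ j in (U : Filter ℕ), 3 / 4 * η <
      (v j a) ^ 2 / 2 + (n j) ^ 2 * (max (-x j a) 0) ^ 2 / 2 :=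
    (A.limE a).eventually (lt_mem_nhds (by linarith))
  have e2 : ∀ᶠ j in (U : Filter ℕ), |x j a| < η / (8 * K) := by
    have := (A.limX a).abs
    rw [hXa, abs_zero] at this
    exact this.eventually (gt_mem_nhds (by positivity))
  have e3 : ∀ᶠ j in (U : Filter ℕ), K / n j < η / (16 * K) :=
    hNinv.eventually (gt_mem_nhds (by positivity))
  have hlim : Tendsto (fun j => (x j (a + d) * v j (a + d) + 2 * (K / n j) * v j (a + d)) -
      (x j a * v j a + 2 * (K / n j) * v j a)) U (nhds 0) := by
    have h1 := ((A.limX (a + d)).mul (A.limV (a + d))).add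
      ((hNinv.const_mul 2).mul (A.limV (a + d)))
    have h2 := ((A.limX a).mul (A.limV a)).add
      ((hNinv.const_mul 2).mul (A.limV a))
    have := h1.sub h2
    simpa [hXa, hXd] using this
  have hge : ∀ᶠ j in (U : Filter ℕ), η / 4 * d ≤
      (x j (a + d) * v j (a + d) + 2 * (K / n j) * v j (a + d)) -
      (x j a * v j a + 2 * (K / n j) * v j a) := by
    filter_upwards [e1, e2, e3] with j h1 h2 h3
    have := right_ge (c := η / 4) (hHc j) (hHd j) (show a ≤ a + d by linarith) ?_
    · simpa using this
    intro t ht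
    have htI : t ∈ Icc (a - 1) (a + 1) := ⟨by linarith [ht.1], by linarith [ht.2]⟩
    have haI : a ∈ Icc (a - 1) (a + 1) := ⟨by linarith, by linarith⟩
    have hta : |t - a| ≤ d := by rw [abs_le]; constructor <;> linarith [ht.1, ht.2]
    have l1 := A.e_lip (fun j t ht => ⟨(hb j t ht).2.1, (hb j t ht).2.2.2⟩) j a haI t htI
    have l2 := A.x_lip (fun j t ht => (hb j t ht).2.1) j a haI t htI
    obtain ⟨-, b2, b3, b4⟩ := hb j t htI
    have l1' : K ^ 2 * |t - a| ≤ η / 4 := (mul_le_mul_of_nonneg_left hta (by positivity)).trans hd3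
    have l3 := (abs_le.1 (l1.trans l1')).1
    have hxt : |x j t| * K ≤ 3 / 8 * η := by
      have h5 : |x j t| ≤ |x j a| + K * |t - a| := by
        have := abs_sub_abs_le_abs_sub (x j t) (x j a)
        linarith
      have h6 : η / (8 * K) * K = η / 8 := by field_simp
      have h7 := mul_le_mul_of_nonneg_right h5 hKp.le
      have h8 := mul_le_mul_of_nonneg_right h2.le hKp.le
      nlinarith
    have hq : x j t * q j t ≤ 3 / 8 * η := by
      have := (le_abs_self (x j t * q j t))
      rw [abs_mul] at this
      exact this.trans ((mul_le_mul_of_nonneg_left b4 (abs_nonneg _)).trans hxt)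
    have hnp : 0 < n j := by linarith [A.hn1 j]
    set m := max (-x j t) 0 with hm
    have hm0 : 0 ≤ m := le_max_right _ _
    have hxm : x j t * m = - m ^ 2 := by
      rcases le_total (-x j t) 0 with h | h
      · simp [hm, h]
      · rw [hm, max_eq_left h]; ring
    have hKn : 2 * (K / n j) * q j t ≤ η / 8 := by
      have h9 : 2 * (K / n j) * q j t ≤ 2 * (K / n j) * K :=
        mul_le_mul_of_nonneg_left ((le_abs_self _).trans b4) (by positivity)
      have h10 := mul_le_mul_of_nonneg_right h3.le hKp.le
      have h11 : η / (16 * K) * K = η / 16 := by field_simp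
      linarith
    have hpen : n j ^ 2 * m ^ 2 ≤ (K / n j) * (n j ^ 2 * m) := by
      have : (K / n j) * (n j ^ 2 * m) = K * (n j * m) := by field_simp
      rw [this]
      have h12 : 0 ≤ n j * m := by positivity
      nlinarith
    have hexp : x j t * (-q j t + n j ^ 2 * m) = - (x j t * q j t) - n j ^ 2 * m ^ 2 := by
      rw [mul_add, mul_left_comm (x j t), hxm]; ring
    rw [hexp]
    nlinarith
  have := ge_of_tendsto hlim hge
  have : 0 < η / 4 * d := by positivity
  linarith

/-- between two zeros there is a point of vanishing energy -/
lemma zeros_E (A : Appr U x v q n X V E) {a b : ℝ} (hab : a < b) (ha : X a = 0) (hb : X b = 0) :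
    ∃ m ∈ Icc a b, E m = 0 := by
  by_cases h : ∀ t ∈ Icc a b, X t = 0
  · exact ⟨a, ⟨le_rfl, hab.le⟩, A.stick hab h⟩
  push Not at h
  obtain ⟨s, hs, hs0⟩ := h
  obtain ⟨m, hm, hmax⟩ := (isCompact_Icc (a := a) (b := b)).exists_isMaxOn
    ⟨a, left_mem_Icc.2 hab.le⟩ A.X_cont.continuousOn
  have hXm : 0 < X m := lt_of_lt_of_le (lt_of_le_of_ne (A.nonneg s) (Ne.symm hs0)) (hmax hs)
  have hma : a < m := lt_of_le_of_ne hm.1 (by rintro rfl; linarith)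
  have hmb : m < b := lt_of_le_of_ne hm.2 (by rintro rfl; linarith)
  have hloc : IsLocalMax X m := hmax.isLocalMax (Icc_mem_nhds hma hmb)
  have := hloc.hasDerivAt_eq_zero (A.X_deriv hXm)
  exact ⟨m, hm, by rw [A.E_eq hXm, this]; simp⟩

lemma E_pos_nhds (A : Appr U x v q n X V E) {t0 : ℝ} (hE : 0 < E t0) :
    ∃ δ > 0, ∀ t ∈ Ioo (t0 - δ) (t0 + δ), 0 < E t := by
  have := A.E_cont.continuousAt.eventually (lt_mem_nhds hE)
  obtain ⟨δ, hδ, h⟩ := Metric.eventually_nhds_iff.1 this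
  refine ⟨δ, hδ, fun t ht => h ?_⟩
  rw [Real.dist_eq, abs_lt]
  constructor <;> linarith [ht.1, ht.2]

lemma isol (A : Appr U x v q n X V E) {t0 : ℝ} (h0 : X t0 = 0) (hE : 0 < E t0) :
    ∃ δ > 0, ∀ t ∈ Ioo (t0 - δ) (t0 + δ), 0 < E t ∧ (t ≠ t0 → 0 < X t) := by
  obtain ⟨δ, hδ, h⟩ := A.E_pos_nhds hE
  refine ⟨δ, hδ, fun t ht => ⟨h t ht, fun hne => ?_⟩⟩
  refine lt_of_le_of_ne (A.nonneg t) (Ne.symm fun hXt => ?_)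
  rcases lt_or_gt_of_ne hne with hlt | hlt
  · obtain ⟨m, hm, hm0⟩ := A.zeros_E hlt hXt h0
    have := h m ⟨by linarith [hm.1, ht.1], by linarith [hm.2]⟩
    linarith
  · obtain ⟨m, hm, hm0⟩ := A.zeros_E hlt h0 hXt
    have := h m ⟨by linarith [hm.1], by linarith [hm.2, ht.2]⟩
    linarith

lemma isol_ev (A : Appr U x v q n X V E) {t0 : ℝ} (h0 : X t0 = 0) (hE : 0 < E t0) :
    ∀ᶠ s in nhdsWithin t0 {t0}ᶜ, 0 < X s := by
  obtain ⟨δ, hδ, h⟩ := A.isol h0 hE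
  rw [eventually_nhdsWithin_iff]
  filter_upwards [Ioo_mem_nhds (show t0 - δ < t0 by linarith) (show t0 < t0 + δ by linarith)]
    with t ht hne
  exact (h t ht).2 hne

lemma deriv_zero (A : Appr U x v q n X V E) {t0 : ℝ} (h0 : X t0 = 0) (hE : E t0 = 0) :
    HasDerivAt X 0 t0 := by
  obtain ⟨K, hK, hb⟩ := A.bdAt t0
  have hbound : ∀ t ∈ Icc (t0 - 1) (t0 + 1),
      |X t - X t0| ≤ √(2 * K ^ 2 * |t - t0|) * |t - t0| := by
    intro t ht
    have ht0 : t0 ∈ Icc (t0 - 1) (t0 + 1) := ⟨by linarith, by linarith⟩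
    have hl1 := ((A.limX t).sub (A.limX t0)).abs
    have hl2 : Tendsto (fun j => √(2 * ((v j t0) ^ 2 / 2 +
      (n j) ^ 2 * (max (-x j t0) 0) ^ 2 / 2) + 2 * K ^ 2 * |t - t0|) * |t - t0|) U
        (nhds (√(2 * K ^ 2 * |t - t0|) * |t - t0|)) := by
      have := ((((A.limE t0).const_mul 2).add_const (2 * K ^ 2 * |t - t0|)).sqrt).mul_const
        (|t - t0|)
      simpa [hE] using this
    refine le_of_tendsto_of_tendsto' hl1 hl2 fun j => ?_
    have hvb : ∀ r ∈ uIcc t0 t, |v j r| ≤ √(2 * ((v j t0) ^ 2 / 2 +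
      (n j) ^ 2 * (max (-x j t0) 0) ^ 2 / 2) + 2 * K ^ 2 * |t - t0|) := by
      intro r hr
      have hr1 : r ∈ Icc (t0 - 1) (t0 + 1) := (uIcc_subset_Icc ht0 ht) hr
      have hr2 : |r - t0| ≤ |t - t0| := abs_sub_left_of_mem_uIcc hr
      have l1 := A.e_lip (fun j t ht => ⟨(hb j t ht).2.1, (hb j t ht).2.2.2⟩) j t0 ht0 r hr1
      have l2 := (abs_le.1 l1).2
      apply Real.abs_le_sqrt
      have l3 : K ^ 2 * |r - t0| ≤ K ^ 2 * |t - t0| :=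
        mul_le_mul_of_nonneg_left hr2 (by positivity)
      have l4 : 0 ≤ (n j) ^ 2 * (max (-x j r) 0) ^ 2 / 2 := by positivity
      linarith
    have := (convex_uIcc t0 t).norm_image_sub_le_of_norm_hasDerivWithin_le
      (f := x j) (f' := v j) (fun r _ => (A.hx j r).hasDerivWithinAt)
      (fun r hr => by simpa using hvb r hr) left_mem_uIcc right_mem_uIcc
    simpa [Real.norm_eq_abs] using this
  rw [hasDerivAt_iff_isLittleO, Asymptotics.isLittleO_iff]
  intro c hc
  have hl : Tendsto (fun t => √(2 * K ^ 2 * |t - t0|)) (nhds t0) (nhds 0) := by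
    have : ContinuousAt (fun t => √(2 * K ^ 2 * |t - t0|)) t0 := by fun_prop
    simpa [ContinuousAt] using this
  filter_upwards [hl.eventually (gt_mem_nhds hc),
    Icc_mem_nhds (show t0 - 1 < t0 by linarith) (show t0 < t0 + 1 by linarith)] with t h1 h2
  simp only [smul_zero, sub_zero, Real.norm_eq_abs]
  exact (hbound t h2).trans (mul_le_mul_of_nonneg_right h1.le (abs_nonneg _))

/-- derivative at a right-maximum is nonpositive -/
lemma deriv_nonpos_of_rightmax {φ : ℝ → ℝ} {d b t : ℝ} (hat : t < b) (hd : HasDerivAt φ d t)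
    (hmax : ∀ s ∈ Icc t b, φ s ≤ φ t) : d ≤ 0 := by
  have h1 : HasDerivAt (fun s => φ (-s)) (-d) (-t) := by
    have := HasDerivAt.comp (-t) (h₂ := φ) (h := fun s => -s) (h₂' := d) (by simpa using hd)
      (hasDerivAt_neg (-t))
    simpa [Function.comp_def] using this
  have := deriv_nonneg_of_leftmax (a := -b) (t := -t) (by linarith) h1 (fun s hs => by
    rw [neg_neg]
    exact hmax (-s) ⟨by linarith [hs.2], by linarith [hs.1]⟩)
  linarith

lemma right_deriv (A : Appr U x v q n X V E) {t0 : ℝ} (h0 : X t0 = 0) (hE : 0 < E t0) :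
    HasDerivWithinAt X (√(2 * E t0)) (Ici t0) t0 := by
  obtain ⟨δ, hδ, h⟩ := A.isol h0 hE
  have hV : ∀ s ∈ Ioo t0 (t0 + δ), V s = √(2 * E s) := by
    intro s hs
    have hXs := (h s ⟨by linarith [hs.1], hs.2⟩).2 (ne_of_gt hs.1)
    have hEs := A.E_eq hXs
    rw [hEs, show 2 * (V s ^ 2 / 2) = V s ^ 2 by ring, Real.sqrt_sq_eq_abs]
    refine (abs_of_nonneg ?_).symm
    by_contra hneg
    push Not at hneg
    obtain ⟨m, hm, hmax⟩ := (isCompact_Icc (a := t0) (b := s)).exists_isMaxOn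
      ⟨t0, left_mem_Icc.2 hs.1.le⟩ A.X_cont.continuousOn
    have hXm : 0 < X m := lt_of_lt_of_le hXs (hmax ⟨hs.1.le, le_rfl⟩)
    have hma : t0 < m := lt_of_le_of_ne hm.1 (by rintro rfl; linarith)
    have hmb : m ≠ s := by
      rintro rfl
      have := deriv_nonneg_of_leftmax hma (A.X_deriv hXm) (fun r hr => hmax hr)
      linarith
    have hmb : m < s := lt_of_le_of_ne hm.2 hmb
    have hloc : IsLocalMax X m := hmax.isLocalMax (Icc_mem_nhds hma hmb)
    have h5 := hloc.hasDerivAt_eq_zero (A.X_deriv hXm)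
    have h6 := (h m ⟨by linarith, by linarith [hs.2]⟩).1
    rw [A.E_eq hXm, h5] at h6
    simp at h6
  have hder : ∀ s ∈ Ioo t0 (t0 + δ), HasDerivAt X (V s) s := fun s hs =>
    A.X_deriv ((h s ⟨by linarith [hs.1], hs.2⟩).2 (ne_of_gt hs.1))
  refine hasDerivWithinAt_Ici_of_tendsto_deriv (s := Ioo t0 (t0 + δ))
    (fun s hs => (hder s hs).differentiableAt.differentiableWithinAt)
    A.X_cont.continuousWithinAt (Ioo_mem_nhdsGT (by linarith)) ?_
  have hlim : Tendsto (fun s => √(2 * E s)) (nhdsWithin t0 (Ioi t0)) (nhds (√(2 * E t0))) := by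
    have : Continuous (fun s => √(2 * E s)) := by have := A.E_cont; fun_prop
    exact this.continuousAt.tendsto.mono_left nhdsWithin_le_nhds
  refine hlim.congr' ?_
  filter_upwards [Ioo_mem_nhdsGT (show t0 < t0 + δ by linarith)] with s hs
  rw [(hder s hs).deriv, hV s hs]

lemma left_deriv (A : Appr U x v q n X V E) {t0 : ℝ} (h0 : X t0 = 0) (hE : 0 < E t0) :
    HasDerivWithinAt X (-√(2 * E t0)) (Iic t0) t0 := by
  obtain ⟨δ, hδ, h⟩ := A.isol h0 hE
  have hV : ∀ s ∈ Ioo (t0 - δ) t0, V s = -√(2 * E s) := by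
    intro s hs
    have hXs := (h s ⟨hs.1, by linarith [hs.2]⟩).2 (ne_of_lt hs.2)
    have hEs := A.E_eq hXs
    rw [hEs, show 2 * (V s ^ 2 / 2) = V s ^ 2 by ring, Real.sqrt_sq_eq_abs]
    suffices hh : V s ≤ 0 by rw [abs_of_nonpos hh]; ring
    by_contra hneg
    push Not at hneg
    obtain ⟨m, hm, hmax⟩ := (isCompact_Icc (a := s) (b := t0)).exists_isMaxOn
      ⟨t0, right_mem_Icc.2 hs.2.le⟩ A.X_cont.continuousOn
    have hXm : 0 < X m := lt_of_lt_of_le hXs (hmax ⟨le_rfl, hs.2.le⟩)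
    have hma : m < t0 := lt_of_le_of_ne hm.2 (by rintro rfl; linarith)
    have hmb : m ≠ s := by
      rintro rfl
      have := deriv_nonpos_of_rightmax hma (A.X_deriv hXm) (fun r hr => hmax hr)
      linarith
    have hmb : s < m := lt_of_le_of_ne hm.1 (Ne.symm hmb)
    have hloc : IsLocalMax X m := hmax.isLocalMax (Icc_mem_nhds hmb hma)
    have h5 := hloc.hasDerivAt_eq_zero (A.X_deriv hXm)
    have h6 := (h m ⟨by linarith [hs.1], by linarith⟩).1
    rw [A.E_eq hXm, h5] at h6
    simp at h6
  have hder : ∀ s ∈ Ioo (t0 - δ) t0, HasDerivAt X (V s) s := fun s hs =>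
    A.X_deriv ((h s ⟨hs.1, by linarith [hs.2]⟩).2 (ne_of_lt hs.2))
  refine hasDerivWithinAt_Iic_of_tendsto_deriv (s := Ioo (t0 - δ) t0)
    (fun s hs => (hder s hs).differentiableAt.differentiableWithinAt)
    A.X_cont.continuousWithinAt (Ioo_mem_nhdsLT (by linarith)) ?_
  have hlim : Tendsto (fun s => -√(2 * E s)) (nhdsWithin t0 (Iio t0)) (nhds (-√(2 * E t0))) := by
    have : Continuous (fun s => -√(2 * E s)) := by have := A.E_cont; fun_prop
    exact this.continuousAt.tendsto.mono_left nhdsWithin_le_nhds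
  refine hlim.congr' ?_
  filter_upwards [Ioo_mem_nhdsLT (show t0 - δ < t0 by linarith)] with s hs
  rw [(hder s hs).deriv, hV s hs]

/-- (i) -/
lemma V_deriv (A : Appr U x v q n X V E) {t0 P : ℝ} (h0 : 0 < X t0)
    (hq : ∀ ε > 0, ∃ δ > 0, ∀ᶠ j in (U : Filter ℕ), ∀ t ∈ Icc (t0 - δ) (t0 + δ), |q j t - P| ≤ ε) :
    HasDerivAt V (-P) t0 := by
  rw [hasDerivAt_iff_isLittleO, Asymptotics.isLittleO_iff]
  intro c hc
  obtain ⟨δ1, hδ1, -, hpos⟩ := A.unif_pos h0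
  obtain ⟨δ2, hδ2, hqq⟩ := hq c hc
  have hδ : 0 < min δ1 δ2 := lt_min hδ1 hδ2
  filter_upwards [Icc_mem_nhds (show t0 - min δ1 δ2 < t0 by linarith)
    (show t0 < t0 + min δ1 δ2 by linarith)] with t ht
  have m1 := min_le_left δ1 δ2
  have m2 := min_le_right δ1 δ2
  have hlim := (((A.limV t).sub (A.limV t0)).sub_const ((t - t0) * (-P))).abs
  simp only [Real.norm_eq_abs, smul_eq_mul]
  refine le_of_tendsto hlim ?_
  filter_upwards [hpos, hqq] with j hj1 hj2
  have key := abs_le_of_both (f := fun t => v j t + t * P) (C := c) (a := t0 - min δ1 δ2)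
    (b := t0 + min δ1 δ2) (fun s hs r hr hsr => ?_) t0 ⟨by linarith, by linarith⟩ t ht
  · convert! key using 2; ring
  have hd : ∀ r, HasDerivWithinAt (fun t => v j t + t * P)
      (-q j r + (n j) ^ 2 * max (-x j r) 0 + 1 * P) (Ici r) r := fun r =>
    (A.hv j r).add ((hasDerivAt_id r).mul_const P).hasDerivWithinAt
  have hcont : Continuous (fun t => v j t + t * P) := by have := A.hvc j; fun_prop
  have hbd : ∀ u ∈ Ico s r, |(-q j u + (n j) ^ 2 * max (-x j u) 0 + 1 * P)| ≤ c := by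
    intro u hu
    rw [max_eq_right (by linarith [hj1 u ⟨by linarith [hs.1, hu.1], by linarith [hr.2, hu.2]⟩])]
    have := hj2 u ⟨by linarith [hs.1, hu.1], by linarith [hr.2, hu.2]⟩
    rw [abs_sub_comm] at this
    convert! this using 2; ring
  rw [abs_le]
  constructor
  · have := right_ge (c := -c) hcont hd hsr (fun u hu => (abs_le.1 (hbd u hu)).1)
    linarith
  · exact right_le (c := c) hcont hd hsr (fun u hu => (abs_le.1 (hbd u hu)).2)

/-- (iv) -/
lemma stick_sign (A : Appr U x v q n X V E) {a b t0 P : ℝ} (ht : t0 ∈ Ioo a b)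
    (h0 : ∀ t ∈ Ioo a b, X t = 0)
    (hq : ∀ ε > 0, ∃ δ > 0, ∀ᶠ j in (U : Filter ℕ), ∀ t ∈ Icc (t0 - δ) (t0 + δ), |q j t - P| ≤ ε) :
    0 ≤ P := by
  by_contra hneg
  push Not at hneg
  obtain ⟨δ1, hδ1, hqq⟩ := hq (-P / 2) (by linarith)
  set δ := min δ1 (min ((t0 - a) / 2) ((b - t0) / 2)) with hδ
  have hδ0 : 0 < δ := lt_min hδ1 (lt_min (by linarith [ht.1]) (by linarith [ht.2]))
  have m1 : δ ≤ δ1 := min_le_left _ _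
  have m2 : δ ≤ (t0 - a) / 2 := (min_le_right _ _).trans (min_le_left _ _)
  have m3 : δ ≤ (b - t0) / 2 := (min_le_right _ _).trans (min_le_right _ _)
  have z1 := h0 t0 ht
  have z2 := h0 (t0 + δ) ⟨by linarith [ht.1], by linarith [ht.2]⟩
  have z3 := h0 (t0 - δ) ⟨by linarith [ht.1], by linarith [ht.2]⟩
  have hlim := ((A.limX (t0 + δ)).add (A.limX (t0 - δ))).sub ((A.limX t0).const_mul 2)
  rw [z1, z2, z3] at hlim
  have hge : ∀ᶠ j in (U : Filter ℕ), -P / 2 * δ ^ 2 ≤ x j (t0 + δ) + x j (t0 - δ) - 2 * x j t0 := by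
    filter_upwards [hqq] with j hj
    have hw : ∀ r ∈ Icc (t0 - δ) (t0 + δ), -P / 2 ≤ -q j r + (n j) ^ 2 * max (-x j r) 0 := by
      intro r hr
      have h1 := (abs_le.1 (hj r ⟨by linarith [hr.1], by linarith [hr.2]⟩)).2
      have h2 : 0 ≤ (n j) ^ 2 * max (-x j r) 0 := by positivity
      linarith
    have h1 := second_ge (A.hx j) (A.hvc j) (A.hv j) hw (s := t0) (t := t0 + δ)
      ⟨by linarith, by linarith⟩ ⟨by linarith, by linarith⟩
    have h2 := second_ge (A.hx j) (A.hvc j) (A.hv j) hw (s := t0) (t := t0 - δ)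
      ⟨by linarith, by linarith⟩ ⟨by linarith, by linarith⟩
    rw [show t0 + δ - t0 = δ by ring] at h1
    rw [show t0 - δ - t0 = -δ by ring, neg_sq] at h2
    linarith
  have := ge_of_tendsto hlim hge
  have h3 : 0 < -P / 2 * δ ^ 2 := mul_pos (by linarith) (by positivity)
  linarith

end Appr

namespace Appr

variable {U : Ultrafilter ℕ} {x v q : ℕ → ℝ → ℝ} {n : ℕ → ℝ} {X V E : ℝ → ℝ}

lemma E_pos_of_init (A : Appr U x v q n X V E) {μ1 μ2 : ℝ} (hμ1 : 0 < μ1) (hμ2 : 0 < μ2)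
    (hq : ∀ B : ℝ, ∀ ε > 0, ∀ᶠ j in (U : Filter ℕ), ∀ t ∈ Icc (-B) B,
      μ1 * max (x j t) 0 - ε ≤ q j t ∧ q j t ≤ μ2 * max (x j t) 0 + ε)
    (h0 : 0 < E 0 + (X 0) ^ 2 / 2) {t1 : ℝ} (ht1 : 0 ≤ t1) (hX : X t1 = 0) : 0 < E t1 := by
  by_contra hneg
  have hE : E t1 = 0 := le_antisymm (not_lt.1 hneg) (A.E_nonneg t1)
  set κ := μ2 + 1 with hκ
  obtain ⟨K, hK, hb⟩ := A.bd t1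
  have hKp : 0 < K := by linarith
  set g0 := E 0 + (X 0) ^ 2 / 2 with hg0
  set ε := g0 / (2 * K * exp (κ * t1) * (t1 + 1)) with hε
  have hεp : 0 < ε := by positivity
  have hlG : ∀ t, Tendsto (fun j => ((v j t) ^ 2 / 2 + (n j) ^ 2 * (max (-x j t) 0) ^ 2 / 2) +
      (max (x j t) 0) ^ 2 / 2) U (nhds (E t + (X t) ^ 2 / 2)) := by
    intro t
    have h1 := ((A.limX t).max (tendsto_const_nhds (x := (0:ℝ)))).pow 2
    rw [max_eq_left (A.nonneg t)] at h1
    exact (A.limE t).add (h1.div_const 2)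
  have hl := ((hlG t1).mul_const (exp (κ * t1))).sub ((hlG 0).mul_const (exp (κ * 0)))
  rw [hX, hE] at hl
  have hge : ∀ᶠ j in (U : Filter ℕ), -(ε * K * exp (κ * t1)) * (t1 - 0) ≤
      (((v j t1) ^ 2 / 2 + (n j) ^ 2 * (max (-x j t1) 0) ^ 2 / 2) +
      (max (x j t1) 0) ^ 2 / 2) * exp (κ * t1) -
      (((v j 0) ^ 2 / 2 + (n j) ^ 2 * (max (-x j 0) 0) ^ 2 / 2) +
      (max (x j 0) 0) ^ 2 / 2) * exp (κ * 0) := by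
    filter_upwards [hq t1 ε hεp] with j hj
    have hd : ∀ t, HasDerivWithinAt (fun t => (((v j t) ^ 2 / 2 +
        (n j) ^ 2 * (max (-x j t) 0) ^ 2 / 2) + (max (x j t) 0) ^ 2 / 2) * exp (κ * t))
        ((-(v j t * q j t) + max (x j t) 0 * v j t) * exp (κ * t) + (((v j t) ^ 2 / 2 +
        (n j) ^ 2 * (max (-x j t) 0) ^ 2 / 2) + (max (x j t) 0) ^ 2 / 2) * (exp (κ * t) * κ))
        (Ici t) t := by
      intro t
      have h1 := (((hasDerivAt_posSq (x j t)).comp t (A.hx j t)).div_const 2).hasDerivWithinAt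
        (s := Ici t)
      have h2 := (((hasDerivAt_id t).const_mul κ).exp).hasDerivWithinAt (s := Ici t)
      have := ((A.e_deriv j t).add h1).mul h2
      convert! this using 1
      simp; ring
    have hc : Continuous (fun t => (((v j t) ^ 2 / 2 +
        (n j) ^ 2 * (max (-x j t) 0) ^ 2 / 2) + (max (x j t) 0) ^ 2 / 2) * exp (κ * t)) := by
      have := A.x_cont j
      have := A.hvc j
      fun_prop
    refine right_ge hc hd ht1 fun t ht => ?_
    have htI : t ∈ Icc (-t1) t1 := ⟨by linarith [ht.1], ht.2.le⟩
    obtain ⟨-, b2, -, -⟩ := hb j t htI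
    obtain ⟨q1, q2⟩ := hj t htI
    set p := max (x j t) 0 with hp
    have hp0 : 0 ≤ p := le_max_right _ _
    have hqa : |q j t| ≤ μ2 * p + ε := by
      rw [abs_le]; constructor
      · have := mul_nonneg hμ1.le hp0; have := mul_nonneg hμ2.le hp0; linarith
      · exact q2
    have h1 : v j t * q j t ≤ |v j t| * (μ2 * p + ε) := by
      refine (le_abs_self _).trans ?_
      rw [abs_mul]; exact mul_le_mul_of_nonneg_left hqa (abs_nonneg _)
    have h2 : -(|v j t| * p) ≤ p * v j t := by
      have := neg_abs_le (v j t)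
      nlinarith
    have h3 : |v j t| * p ≤ (v j t) ^ 2 / 2 + p ^ 2 / 2 := by
      nlinarith [sq_nonneg (|v j t| - p), sq_abs (v j t)]
    have h4 : |v j t| * ε ≤ K * ε := mul_le_mul_of_nonneg_right b2 hεp.le
    have h5 : 0 ≤ (n j) ^ 2 * (max (-x j t) 0) ^ 2 / 2 := by positivity
    have h6 : -(ε * K) ≤ (-(v j t * q j t) + p * v j t) + (((v j t) ^ 2 / 2 +
        (n j) ^ 2 * (max (-x j t) 0) ^ 2 / 2) + p ^ 2 / 2) * κ := by
      rw [hκ]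
      nlinarith
    have h7 : exp (κ * t) ≤ exp (κ * t1) :=
      exp_le_exp.2 (mul_le_mul_of_nonneg_left ht.2.le (by positivity))
    have h8 := mul_le_mul_of_nonneg_right h6 (exp_pos (κ * t)).le
    have h9 : ε * K * exp (κ * t) ≤ ε * K * exp (κ * t1) :=
      mul_le_mul_of_nonneg_left h7 (by positivity)
    linarith
  have hfin := ge_of_tendsto hl hge
  have hcomp : ε * K * exp (κ * t1) * (t1 + 1) = g0 / 2 := by
    rw [hε]; field_simp
  have hlast : ε * K * exp (κ * t1) * t1 ≤ ε * K * exp (κ * t1) * (t1 + 1) :=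
    mul_le_mul_of_nonneg_left (by linarith) (by positivity)
  simp only [mul_zero, exp_zero, mul_one] at hfin
  rw [← hg0] at hfin
  norm_num at hfin
  linarith

lemma unif_pos_compact (A : Appr U x v q n X V E) {a b : ℝ} (h : ∀ t ∈ Icc a b, 0 < X t) :
    ∀ᶠ j in (U : Filter ℕ), ∀ t ∈ Icc a b, 0 < x j t := by
  refine (isCompact_Icc (a := a) (b := b)).induction_on
    (p := fun S => ∀ᶠ j in (U : Filter ℕ), ∀ t ∈ S, 0 < x j t) ?_ ?_ ?_ ?_
  · simp
  · intro s t hst ht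
    filter_upwards [ht] with j hj r hr using hj r (hst hr)
  · intro s t hs ht
    filter_upwards [hs, ht] with j h1 h2 r hr
    rcases hr with hr | hr
    · exact h1 r hr
    · exact h2 r hr
  · intro t ht
    obtain ⟨δ, hδ, -, hpos⟩ := A.unif_pos (h t ht)
    exact ⟨Icc (t - δ) (t + δ), mem_nhdsWithin_of_mem_nhds
      (Icc_mem_nhds (by linarith) (by linarith)), hpos⟩

lemma W_deriv (A : Appr U x v q n X V E) (ω s : ℝ) (j : ℕ) (t : ℝ) :
    HasDerivWithinAt (fun t => v j t * sin (ω * (t - s)) - x j t * (ω * cos (ω * (t - s))))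
      ((-q j t + (n j) ^ 2 * max (-x j t) 0 + ω ^ 2 * x j t) * sin (ω * (t - s))) (Ici t) t := by
  have hin : HasDerivAt (fun t => ω * (t - s)) ω t := by
    simpa using ((hasDerivAt_id t).sub_const s).const_mul ω
  have h1 := (A.hv j t).mul hin.sin.hasDerivWithinAt
  have h2 := ((A.hx j t).mul (hin.cos.const_mul ω)).hasDerivWithinAt (s := Ici t)
  have := h1.sub h2
  convert! this using 1
  ring

lemma W_cont (A : Appr U x v q n X V E) (ω s : ℝ) (j : ℕ) :
    Continuous (fun t => v j t * sin (ω * (t - s)) - x j t * (ω * cos (ω * (t - s)))) := by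
  have := A.x_cont j
  have := A.hvc j
  fun_prop

lemma sturm1 (A : Appr U x v q n X V E) {ω : ℝ} (hω : 0 < ω)
    (hq : ∀ B : ℝ, ∀ ε > 0, ∀ᶠ j in (U : Filter ℕ), ∀ t ∈ Icc (-B) B,
      ω ^ 2 * max (x j t) 0 - ε ≤ q j t) {s : ℝ}
    (h : ∀ t ∈ Icc s (s + π / ω), 0 < X t) : False := by
  have hπ : 0 < π / ω := by positivity
  have e1 := A.unif_pos_compact h
  have hl := ((A.limX (s + π / ω)).const_mul ω).add ((A.limX s).const_mul ω)
  have key : ∀ ε > 0, ω * X (s + π / ω) + ω * X s ≤ ε * (π / ω) := by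
    intro ε hε
    refine le_of_tendsto hl ?_
    filter_upwards [e1, hq (|s| + π / ω) ε hε] with j hj1 hj2
    have := right_le (c := ε) (A.W_cont ω s j) (A.W_deriv ω s j)
      (show s ≤ s + π / ω by linarith) ?_
    · rw [show s + π / ω - s = π / ω by ring, mul_div_cancel₀ _ hω.ne', sub_self] at this
      simp at this
      linarith
    intro t ht
    have hx := hj1 t ⟨ht.1, ht.2.le⟩
    have hqt := hj2 t ⟨by linarith [neg_abs_le s, ht.1], by linarith [le_abs_self s, ht.2]⟩
    rw [max_eq_left hx.le] at hqt
    rw [max_eq_right (by linarith)]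
    have ht2 : t - s ≤ π / ω := by linarith [ht.2]
    have h3 : 0 ≤ sin (ω * (t - s)) := by
      apply sin_nonneg_of_nonneg_of_le_pi
      · exact mul_nonneg hω.le (by linarith [ht.1])
      · rw [le_div_iff₀ hω] at ht2; linarith
    have h4 := sin_le_one (ω * (t - s))
    have h5 : (-q j t + (n j) ^ 2 * 0 + ω ^ 2 * x j t) ≤ ε := by linarith
    calc _ ≤ ε * sin (ω * (t - s)) := mul_le_mul_of_nonneg_right h5 h3
      _ ≤ ε * 1 := mul_le_mul_of_nonneg_left h4 hε.le
      _ = ε := mul_one _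
  have p1 := h s ⟨le_rfl, by linarith⟩
  have p2 := h (s + π / ω) ⟨by linarith, le_rfl⟩
  have := key (ω * X s / (π / ω)) (by positivity)
  rw [div_mul_cancel₀ _ hπ.ne'] at this
  have := mul_pos hω p2
  linarith

lemma W_mono (A : Appr U x v q n X V E) {ω : ℝ} (_hω : 0 < ω)
    (hq : ∀ B : ℝ, ∀ ε > 0, ∀ᶠ j in (U : Filter ℕ), ∀ t ∈ Icc (-B) B,
      q j t ≤ ω ^ 2 * max (x j t) 0 + ε) {s a b : ℝ} (hab : a ≤ b)
    (hs : ∀ t ∈ Icc a b, 0 ≤ sin (ω * (t - s))) :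
    V a * sin (ω * (a - s)) - X a * (ω * cos (ω * (a - s))) ≤
    V b * sin (ω * (b - s)) - X b * (ω * cos (ω * (b - s))) := by
  have hl : ∀ t, Tendsto (fun j => v j t * sin (ω * (t - s)) - x j t * (ω * cos (ω * (t - s)))) U
      (nhds (V t * sin (ω * (t - s)) - X t * (ω * cos (ω * (t - s))))) := fun t =>
    ((A.limV t).mul_const _).sub ((A.limX t).mul_const _)
  have hl2 := (hl b).sub (hl a)
  obtain ⟨K, hK, hb⟩ := A.bd (|a| + |b|)
  have hsub : ∀ t ∈ Icc a b, t ∈ Icc (-(|a| + |b|)) (|a| + |b|) := fun t ht =>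
    ⟨by linarith [neg_abs_le a, abs_nonneg b, ht.1], by linarith [le_abs_self b, abs_nonneg a, ht.2]⟩
  have key : ∀ ε > 0, -(2 * ε) * (b - a) ≤ (V b * sin (ω * (b - s)) - X b * (ω * cos (ω * (b - s))))
      - (V a * sin (ω * (a - s)) - X a * (ω * cos (ω * (a - s)))) := by
    intro ε hε
    refine ge_of_tendsto hl2 ?_
    have e2 : ∀ᶠ j in (U : Filter ℕ), K / n j < ε / (ω ^ 2 + 1) :=
      (A.hn.const_div_atTop K).eventually (gt_mem_nhds (by positivity))
    filter_upwards [e2, hq (|a| + |b|) ε hε] with j hj1 hj2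
    refine right_ge (A.W_cont ω s j) (A.W_deriv ω s j) hab fun t ht => ?_
    have htI := hsub t ⟨ht.1, ht.2.le⟩
    obtain ⟨-, -, b3, -⟩ := hb j t htI
    have hn : 0 < n j := by linarith [A.hn1 j]
    have hqt := hj2 t htI
    have hm : max (-x j t) 0 ≤ K / n j := by rw [le_div_iff₀ hn]; linarith
    have hm2 : ω ^ 2 * max (-x j t) 0 ≤ ε := by
      have h1 : max (-x j t) 0 ≤ ε / (ω ^ 2 + 1) := by linarith
      rw [le_div_iff₀ (by positivity)] at h1
      nlinarith [le_max_right (-x j t) 0]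
    have hxe : x j t = max (x j t) 0 - max (-x j t) 0 := by
      rcases le_total (x j t) 0 with h | h
      · rw [max_eq_right h, max_eq_left (by linarith)]; ring
      · rw [max_eq_left h, max_eq_right (by linarith)]; ring
    have hpen : 0 ≤ (n j) ^ 2 * max (-x j t) 0 := by positivity
    have h5 : -(2 * ε) ≤ (-q j t + (n j) ^ 2 * max (-x j t) 0 + ω ^ 2 * x j t) := by
      have : ω ^ 2 * x j t = ω ^ 2 * max (x j t) 0 - ω ^ 2 * max (-x j t) 0 := by
        rw [← mul_sub, ← hxe]
      linarith
    have h3 := hs t ⟨ht.1, ht.2.le⟩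
    have h4 := sin_le_one (ω * (t - s))
    have h6 := mul_le_mul_of_nonneg_right h5 h3
    nlinarith
  by_contra hcon
  push Not at hcon
  set D := (V b * sin (ω * (b - s)) - X b * (ω * cos (ω * (b - s))))
      - (V a * sin (ω * (a - s)) - X a * (ω * cos (ω * (a - s)))) with hD
  have hDn : D < 0 := by linarith
  have := key (-D / (4 * (b - a + 1))) (div_pos (by linarith) (by linarith))
  have h2 : -D / (4 * (b - a + 1)) * (b - a + 1) = -D / 4 := by
    have : b - a + 1 ≠ 0 := by linarith
    field_simp
  have h3 : 0 < -D / (4 * (b - a + 1)) := div_pos (by linarith) (by linarith)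
  nlinarith

lemma sturm2 (A : Appr U x v q n X V E) {ω : ℝ} (hω : 0 < ω)
    (hq : ∀ B : ℝ, ∀ ε > 0, ∀ᶠ j in (U : Filter ℕ), ∀ t ∈ Icc (-B) B,
      q j t ≤ ω ^ 2 * max (x j t) 0 + ε) {a b : ℝ} (hab : a < b) (ha : X a = 0) (hb : X b = 0)
    (hpos : ∀ t ∈ Ioo a b, 0 < X t) : a + π / ω ≤ b := by
  by_contra hcon
  push Not at hcon
  -- shift
  set s := (a + b - π / ω) / 2 with hs
  have hsin : ∀ t ∈ Icc a b, 0 < sin (ω * (t - s)) := by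
    intro t ht
    apply sin_pos_of_pos_of_lt_pi
    · exact mul_pos hω (by linarith [ht.1])
    · have : t - s < π / ω := by linarith [ht.2]
      rw [lt_div_iff₀ hω] at this; linarith
  have hQd : ∀ t ∈ Ioo a b, HasDerivAt (fun t => X t / sin (ω * (t - s)))
      ((V t * sin (ω * (t - s)) - X t * (ω * cos (ω * (t - s)))) / sin (ω * (t - s)) ^ 2) t := by
    intro t ht
    have hin : HasDerivAt (fun t => ω * (t - s)) ω t := by
      simpa using ((hasDerivAt_id t).sub_const s).const_mul ω
    have := (A.X_deriv (hpos t ht)).div hin.sin (hsin t ⟨ht.1.le, ht.2.le⟩).ne'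
    convert! this using 1
    ring
  have hQc : ContinuousOn (fun t => X t / sin (ω * (t - s))) (Icc a b) := by
    refine ContinuousOn.div A.X_cont.continuousOn (by fun_prop) fun t ht => (hsin t ht).ne'
  obtain ⟨m, hm, hmax⟩ := (isCompact_Icc (a := a) (b := b)).exists_isMaxOn
    ⟨a, left_mem_Icc.2 hab.le⟩ hQc
  set c := (a + b) / 2 with hc
  have hcI : c ∈ Ioo a b := ⟨by linarith, by linarith⟩
  have hQm : 0 < X m / sin (ω * (m - s)) :=
    lt_of_lt_of_le (div_pos (hpos c hcI) (hsin c ⟨hcI.1.le, hcI.2.le⟩)) (hmax ⟨hcI.1.le, hcI.2.le⟩)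
  have hma : a < m := lt_of_le_of_ne hm.1 (by rintro rfl; simp [ha] at hQm)
  have hmb : m < b := lt_of_le_of_ne hm.2 (by rintro rfl; simp [hb] at hQm)
  have hloc := hmax.isLocalMax (Icc_mem_nhds hma hmb)
  have h0 := hloc.hasDerivAt_eq_zero (hQd m ⟨hma, hmb⟩)
  have hW0 : V m * sin (ω * (m - s)) - X m * (ω * cos (ω * (m - s))) = 0 := by
    rcases div_eq_zero_iff.1 h0 with h | h
    · exact h
    · exact absurd h (pow_ne_zero 2 (hsin m hm).ne')
  have hmono : MonotoneOn (fun t => X t / sin (ω * (t - s))) (Icc m b) := by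
    refine monotoneOn_of_deriv_nonneg (convex_Icc m b) (hQc.mono (Icc_subset_Icc_left hma.le)) ?_ ?_
    · intro t ht
      rw [interior_Icc] at ht
      exact (hQd t ⟨hma.trans ht.1, ht.2⟩).differentiableAt.differentiableWithinAt
    · intro t ht
      rw [interior_Icc] at ht
      rw [(hQd t ⟨hma.trans ht.1, ht.2⟩).deriv]
      have := A.W_mono hω hq (s := s) ht.1.le (fun r hr => (hsin r
        ⟨hma.le.trans hr.1, hr.2.trans ht.2.le⟩).le)
      rw [hW0] at this
      positivity
  have := hmono ⟨le_rfl, hmb.le⟩ ⟨hmb.le, le_rfl⟩ hmb.le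
  simp only [hb, zero_div] at this
  linarith

lemma next_zero (A : Appr U x v q n X V E) {ω1 ω2 : ℝ} (h1 : 0 < ω1) (h2 : 0 < ω2)
    (hq1 : ∀ B : ℝ, ∀ ε > 0, ∀ᶠ j in (U : Filter ℕ), ∀ t ∈ Icc (-B) B,
      ω1 ^ 2 * max (x j t) 0 - ε ≤ q j t)
    (hq2 : ∀ B : ℝ, ∀ ε > 0, ∀ᶠ j in (U : Filter ℕ), ∀ t ∈ Icc (-B) B,
      q j t ≤ ω2 ^ 2 * max (x j t) 0 + ε) {a : ℝ} (ha : X a = 0) (hE : 0 < E a) :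
    ∃ b, a + π / ω2 ≤ b ∧ b ≤ a + π / ω1 ∧ X b = 0 ∧ ∀ t ∈ Ioo a b, 0 < X t := by
  obtain ⟨δ, hδ, h⟩ := A.isol ha hE
  have hex : ∀ s, a < s → ∃ t ∈ Icc s (s + π / ω1), X t = 0 := by
    intro s _
    by_contra hcon
    push Not at hcon
    exact A.sturm1 h1 hq1 (s := s) fun t ht => lt_of_le_of_ne (A.nonneg t) (Ne.symm (hcon t ht))
  set S := {t | a + δ / 2 ≤ t ∧ X t = 0} with hS
  have hSc : IsClosed S := (isClosed_le continuous_const continuous_id).inter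
    (isClosed_eq A.X_cont continuous_const)
  have hbdd : BddBelow S := ⟨a + δ / 2, fun t ht => ht.1⟩
  have hin : ∀ t, a < t → X t = 0 → t ∈ S := by
    intro t ht hX
    refine ⟨?_, hX⟩
    by_contra hlt
    push Not at hlt
    have := (h t ⟨by linarith, by linarith⟩).2 (ne_of_gt ht)
    linarith
  have hne : S.Nonempty := by
    obtain ⟨t, ht, hX⟩ := hex (a + 1) (by linarith)
    exact ⟨t, hin t (by linarith [ht.1]) hX⟩
  have hmem := hSc.csInf_mem hne hbdd
  have hab : a < sInf S := by have := hmem.1; linarith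
  have hpos : ∀ t ∈ Ioo a (sInf S), 0 < X t := by
    intro t ht
    refine lt_of_le_of_ne (A.nonneg t) (Ne.symm fun hX => ?_)
    have := csInf_le hbdd (hin t ht.1 hX)
    linarith [ht.2]
  refine ⟨sInf S, A.sturm2 h2 hq2 hab ha hmem.2 hpos, ?_, hmem.2, hpos⟩
  refine le_of_forall_pos_le_add fun ε hε => ?_
  obtain ⟨t, ht, hX⟩ := hex (a + ε) (by linarith)
  have := csInf_le hbdd (hin t (by linarith [ht.1]) hX)
  linarith [ht.2]

lemma nonres (A : Appr U x v q n X V E) {ω1 ω2 T : ℝ} {N : ℕ} (h1 : 0 < ω1) (h2 : 0 < ω2)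
    (hT : 0 < T) (hN1 : N * (π / ω1) < T) (hN2 : T < (N + 1) * (π / ω2))
    (hq : ∀ B : ℝ, ∀ ε > 0, ∀ᶠ j in (U : Filter ℕ), ∀ t ∈ Icc (-B) B,
      ω1 ^ 2 * max (x j t) 0 - ε ≤ q j t ∧ q j t ≤ ω2 ^ 2 * max (x j t) 0 + ε)
    (h0 : 0 < E 0 + (X 0) ^ 2 / 2) (hper : ∀ t, X t = 0 → X (t + T) = 0) : False := by
  have hq1 : ∀ B : ℝ, ∀ ε > 0, ∀ᶠ j in (U : Filter ℕ), ∀ t ∈ Icc (-B) B,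
      ω1 ^ 2 * max (x j t) 0 - ε ≤ q j t := fun B ε hε => by
    filter_upwards [hq B ε hε] with j hj t ht using (hj t ht).1
  have hq2 : ∀ B : ℝ, ∀ ε > 0, ∀ᶠ j in (U : Filter ℕ), ∀ t ∈ Icc (-B) B,
      q j t ≤ ω2 ^ 2 * max (x j t) 0 + ε := fun B ε hε => by
    filter_upwards [hq B ε hε] with j hj t ht using (hj t ht).2
  have hEp : ∀ t, 0 ≤ t → X t = 0 → 0 < E t := fun t ht hX =>
    A.E_pos_of_init (pow_pos h1 2) (pow_pos h2 2) hq h0 ht hX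
  have hp1 : 0 < π / ω1 := by positivity
  have hp2 : 0 < π / ω2 := by positivity
  obtain ⟨a0, ha0, hX0⟩ : ∃ t, 0 ≤ t ∧ X t = 0 := by
    by_contra hcon
    push Not at hcon
    exact A.sturm1 h1 hq1 (s := 0) fun t ht =>
      lt_of_le_of_ne (A.nonneg t) (Ne.symm (hcon t ht.1))
  have hit : ∀ i : ℕ, ∃ a, a0 + i * (π / ω2) ≤ a ∧ a ≤ a0 + i * (π / ω1) ∧ X a = 0 := by
    intro i
    induction i with
    | zero => exact ⟨a0, by simp, by simp, hX0⟩
    | succ i ih =>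
      obtain ⟨a, b1, b2, b3⟩ := ih
      have ha : 0 ≤ a := by
        have : 0 ≤ (i:ℝ) * (π / ω2) := by positivity
        linarith
      obtain ⟨b, c1, c2, c3, -⟩ := A.next_zero h1 h2 hq1 hq2 b3 (hEp a ha b3)
      refine ⟨b, ?_, ?_, c3⟩ <;> push_cast <;> linarith
  obtain ⟨a, b1, b2, b3⟩ := hit N
  have ha : 0 ≤ a := by
    have : 0 ≤ (N:ℝ) * (π / ω2) := by positivity
    linarith
  obtain ⟨b, c1, c2, c3, c4⟩ := A.next_zero h1 h2 hq1 hq2 b3 (hEp a ha b3)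
  have := c4 (a0 + T) ⟨by linarith, by linarith⟩
  have := hper a0 hX0
  linarith

end Appr

/-! ### The penalized delayed scheme -/

structure Sch (P : ℝ → ℝ → ℝ → ℝ) (T : ℝ) (x v w : ℕ → (ℝ × ℝ × ℝ) → ℝ → ℝ) : Prop where
  cx : ∀ n, Continuous (fun q : (ℝ × ℝ × ℝ) × ℝ => x n q.1 q.2)
  cv : ∀ n, Continuous (fun q : (ℝ × ℝ × ℝ) × ℝ => v n q.1 q.2)
  x0 : ∀ n z, x n z 0 = z.1
  v0 : ∀ n z, v n z 0 = z.2.1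
  dx : ∀ n z t, HasDerivAt (x n z) (v n z t) t
  dv : ∀ n z t, HasDerivAt (v n z) (w n z t) t
  hw : ∀ n z, ∀ t ∈ Icc 0 T, w n z t = -(P z.2.2 t (x n z (max (t - T / ((n:ℝ) + 1) ^ 3) 0)) -
    ((n:ℝ) + 1) ^ 2 * max (-x n z (max (t - T / ((n:ℝ) + 1) ^ 3) 0)) 0)

lemma Sch.exists (P : ℝ → ℝ → ℝ → ℝ) (hP : Continuous (fun q : ℝ × ℝ × ℝ => P q.1 q.2.1 q.2.2))
    (T : ℝ) (hT : 0 < T) : ∃ x v w, Sch P T x v w := by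
  have key : ∀ n : ℕ, ∃ x v w : (ℝ × ℝ × ℝ) → ℝ → ℝ,
      Continuous (fun q : (ℝ × ℝ × ℝ) × ℝ => x q.1 q.2) ∧
      Continuous (fun q : (ℝ × ℝ × ℝ) × ℝ => v q.1 q.2) ∧
      (∀ z, x z 0 = z.1) ∧ (∀ z, v z 0 = z.2.1) ∧
      (∀ z t, HasDerivAt (x z) (v z t) t) ∧ (∀ z t, HasDerivAt (v z) (w z t) t) ∧
      (∀ z, ∀ t ∈ Icc 0 T, w z t = -(P z.2.2 t (x z (max (t - T / ((n:ℝ) + 1) ^ 3) 0)) -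
        ((n:ℝ) + 1) ^ 2 * max (-x z (max (t - T / ((n:ℝ) + 1) ^ 3) 0)) 0)) := by
    intro n
    obtain ⟨x, v, h1, h2, h3, h4, h5, h6⟩ := scheme_exists
      (fun L t y => P L t y - ((n:ℝ) + 1) ^ 2 * max (-y) 0) (by fun_prop)
      (T / ((n:ℝ) + 1) ^ 3) T (by positivity)
    choose w hw1 hw2 using h6
    exact ⟨x, v, w, h1, h2, h3, h4, h5, hw1, hw2⟩
  choose x v w h using key
  exact ⟨x, v, w, fun n => (h n).1, fun n => (h n).2.1, fun n => (h n).2.2.1,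
    fun n => (h n).2.2.2.1, fun n => (h n).2.2.2.2.1, fun n => (h n).2.2.2.2.2.1,
    fun n => (h n).2.2.2.2.2.2⟩

lemma enF_nonneg (N x v : ℝ) : 0 ≤ enF N x v := by unfold enF; positivity

lemma enF_smul (N x v : ℝ) {c : ℝ} (hc : 0 ≤ c) : enF N (c * x) (c * v) = c ^ 2 * enF N x v := by
  have h1 : max (c * x) 0 = c * max x 0 := by
    rw [mul_max_of_nonneg _ _ hc, mul_zero]
  have h2 : max (-(c * x)) 0 = c * max (-x) 0 := by
    rw [mul_max_of_nonneg _ _ hc, mul_zero, mul_neg]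
  unfold enF
  rw [h1, h2]; ring

namespace Sch

variable {P : ℝ → ℝ → ℝ → ℝ} {T : ℝ} {x v w : ℕ → (ℝ × ℝ × ℝ) → ℝ → ℝ}

lemma grow (Sc : Sch P T x v w) (hT : 0 < T) {C : ℝ} (hC : 0 ≤ C)
    (hP : ∀ L ∈ Icc (0:ℝ) 1, ∀ t y, |P L t y| ≤ C * (1 + max y 0)) (n : ℕ) (z : ℝ × ℝ × ℝ)
    (hz : z.2.2 ∈ Icc (0:ℝ) 1) : ∀ t ∈ Icc 0 T, enF (n + 1) (x n z t) (v n z t) + 1 ≤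
      (enF (n + 1) z.1 z.2.1 + 1) * exp ((4 * C + 3 + 2 * T) * T) := by
  have hn : (1:ℝ) ≤ (n:ℝ) + 1 := by linarith [Nat.cast_nonneg (α := ℝ) n]
  have := growth C T (n + 1) (T / ((n:ℝ) + 1) ^ 3) hC hn (by positivity) (by
    have : ((n:ℝ) + 1) ^ 2 * (T / ((n:ℝ) + 1) ^ 3) = T / (n + 1) := by
      field_simp
    rw [this]
    exact div_le_self hT.le hn) (P z.2.2) (hP _ hz) (x n z) (v n z) (w n z) (Sc.dx n z) (Sc.dv n z)
    (Sc.hw n z)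
  rw [Sc.x0, Sc.v0] at this
  exact this

lemma ext_main (Sc : Sch P T x v w) (hT : 0 < T) {C : ℝ} (hC : 0 ≤ C)
    (hP : ∀ L ∈ Icc (0:ℝ) 1, ∀ t y, |P L t y| ≤ C * (1 + max y 0))
    (hper : ∀ L t y, P L (t + T) y = P L t y) (n : ℕ) (z : ℝ × ℝ × ℝ)
    (hz : z.2.2 ∈ Icc (0:ℝ) 1) {lam : ℝ} (hl : 0 < lam) {S : ℝ} (hS : 0 ≤ S)
    (hSG : (enF (n + 1) z.1 z.2.1 + 1) * exp ((4 * C + 3 + 2 * T) * T) ≤ S ^ 2) (t : ℝ) :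
    |extP T lam (x n z) t| ≤ lam ^ ⌊t / T⌋ * S ∧ |extP T lam (v n z) t| ≤ lam ^ ⌊t / T⌋ * S ∧
    ((n:ℝ) + 1) * max (-extP T lam (x n z) t) 0 ≤ lam ^ ⌊t / T⌋ * S ∧
    ∃ y, |y| ≤ S ∧ |lam ^ ⌊t / T⌋ * y - extP T lam (x n z) t| ≤
        lam ^ ⌊t / T⌋ * (S * (T / ((n:ℝ) + 1))) ∧
      |(-extP T lam (w n z) t + ((n:ℝ) + 1) ^ 2 * max (-extP T lam (x n z) t) 0) -
        lam ^ ⌊t / T⌋ * P z.2.2 t y| ≤ lam ^ ⌊t / T⌋ * (S * (T / ((n:ℝ) + 1))) := by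
  set c := lam ^ ⌊t / T⌋ with hc
  have hcp : 0 < c := zpow_pos hl _
  set s := t - ⌊t / T⌋ * T with hs
  have hsI : s ∈ Ico 0 T := extP_floor hT t
  have hsI' : s ∈ Icc 0 T := ⟨hsI.1, hsI.2.le⟩
  have hn : (1:ℝ) ≤ (n:ℝ) + 1 := by linarith [Nat.cast_nonneg (α := ℝ) n]
  have hbd : ∀ r ∈ Icc 0 T, |v n z r| ≤ S ∧ |x n z r| ≤ S ∧ ((n:ℝ) + 1) * max (-x n z r) 0 ≤ S := by
    intro r hr
    apply enF_bounds hn hS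
    have := Sc.grow hT hC hP n z hz r hr
    linarith
  have ex : extP T lam (x n z) t = c * x n z s := rfl
  have ev : extP T lam (v n z) t = c * v n z s := rfl
  have ew : extP T lam (w n z) t = c * w n z s := rfl
  have hmx : max (-(c * x n z s)) 0 = c * max (-x n z s) 0 := by
    rw [mul_max_of_nonneg _ _ hcp.le, mul_zero, mul_neg]
  obtain ⟨b1, b2, b3⟩ := hbd s hsI'
  rw [ex, ev, ew, hmx, abs_mul, abs_mul, abs_of_pos hcp]
  refine ⟨mul_le_mul_of_nonneg_left b2 hcp.le, mul_le_mul_of_nonneg_left b1 hcp.le, ?_, ?_⟩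
  · rw [mul_left_comm]; exact mul_le_mul_of_nonneg_left b3 hcp.le
  set h := T / ((n:ℝ) + 1) ^ 3 with hh
  have hhp : 0 < h := by positivity
  set τ := max (s - h) 0 with hτ
  have hτI : τ ∈ Icc 0 T := ⟨le_max_right _ _, max_le (by linarith [hsI.2]) hT.le⟩
  have hτs : τ ≤ s := max_le (by linarith) hsI.1
  have hτ2 : s - τ ≤ h := by have := le_max_left (s - h) 0; linarith
  have hlip : |x n z s - x n z τ| ≤ S * h :=
    (lip_of_deriv_bound (Sc.dx n z) hτs (fun r hr => (hbd r ⟨hτI.1.trans hr.1,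
      hr.2.trans hsI'.2⟩).1)).trans (mul_le_mul_of_nonneg_left hτ2 hS)
  have hN2 : ((n:ℝ) + 1) ^ 2 * h = T / (n + 1) := by rw [hh]; field_simp
  have hhle : h ≤ T / (n + 1) := by
    rw [← hN2]; exact le_mul_of_one_le_left hhp.le (one_le_pow₀ hn)
  refine ⟨x n z τ, (hbd τ hτI).2.1, ?_, ?_⟩
  · rw [← mul_sub, abs_mul, abs_of_pos hcp, abs_sub_comm]
    exact mul_le_mul_of_nonneg_left (hlip.trans (mul_le_mul_of_nonneg_left hhle hS)) hcp.le
  · have hperm : P z.2.2 t (x n z τ) = P z.2.2 s (x n z τ) := by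
      have hp : Function.Periodic (fun t => P z.2.2 t (x n z τ)) T := fun t => hper _ t _
      have := hp.sub_int_mul_eq ⌊t / T⌋ (x := t)
      exact this.symm
    rw [hperm, Sc.hw n z s hsI']
    have hrew : -(c * -(P z.2.2 s (x n z τ) - ((n:ℝ) + 1) ^ 2 * max (-x n z τ) 0)) +
        ((n:ℝ) + 1) ^ 2 * (c * max (-x n z s) 0) - c * P z.2.2 s (x n z τ) =
        c * (((n:ℝ) + 1) ^ 2 * (max (-x n z s) 0 - max (-x n z τ) 0)) := by ring
    rw [hrew, abs_mul, abs_of_pos hcp, abs_mul, abs_of_nonneg (by positivity)]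
    refine mul_le_mul_of_nonneg_left ?_ hcp.le
    calc ((n:ℝ) + 1) ^ 2 * |max (-x n z s) 0 - max (-x n z τ) 0| ≤ ((n:ℝ) + 1) ^ 2 * (S * h) :=
          mul_le_mul_of_nonneg_left ((neg_part_lip _ _).trans hlip) (by positivity)
      _ = S * (((n:ℝ) + 1) ^ 2 * h) := by ring
      _ = _ := by rw [hN2]

end Sch

lemma zpow_bd {T lam Λ B t : ℝ} (hT : 0 < T) (h1 : 1 ≤ lam) (h2 : lam ≤ Λ) {m0 : ℕ}
    (hm : B / T ≤ m0) (ht : t ≤ B) : lam ^ ⌊t / T⌋ ≤ Λ ^ m0 := by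
  have h3 : ⌊t / T⌋ ≤ (m0 : ℤ) := by
    rw [Int.floor_le_iff]
    push_cast
    have : t / T ≤ B / T := div_le_div_of_nonneg_right ht hT.le
    linarith
  calc lam ^ ⌊t / T⌋ ≤ lam ^ (m0 : ℤ) := zpow_le_zpow_right₀ h1 h3
    _ = lam ^ m0 := zpow_natCast _ _
    _ ≤ Λ ^ m0 := pow_le_pow_left₀ (by linarith) h2 _

namespace Sch

variable {P : ℝ → ℝ → ℝ → ℝ} {T : ℝ} {x v w : ℕ → (ℝ × ℝ × ℝ) → ℝ → ℝ}

/-- uniform constants -/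
lemma scaled (Sc : Sch P T x v w) (hT : 0 < T) {C : ℝ} (hC : 0 ≤ C)
    (hP : ∀ L ∈ Icc (0:ℝ) 1, ∀ t y, |P L t y| ≤ C * (1 + max y 0))
    (hper : ∀ L t y, P L (t + T) y = P L t y) {M : ℝ} (n : ℕ) (z : ℝ × ℝ × ℝ)
    (hz : z.2.2 ∈ Icc (0:ℝ) 1) {lam : ℝ} (hl : 1 ≤ lam) {A : ℝ} (hA : 1 ≤ A)
    (hM : enF (n + 1) z.1 z.2.1 ≤ (M * A) ^ 2) {S0 : ℝ} (hS0 : 0 ≤ S0)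
    (hS : (M ^ 2 + 1) * exp ((4 * C + 3 + 2 * T) * T) ≤ S0 ^ 2) (t : ℝ) :
    |extP T lam (x n z) t / A| ≤ lam ^ ⌊t / T⌋ * S0 ∧
    |extP T lam (v n z) t / A| ≤ lam ^ ⌊t / T⌋ * S0 ∧
    ((n:ℝ) + 1) * max (-(extP T lam (x n z) t / A)) 0 ≤ lam ^ ⌊t / T⌋ * S0 ∧
    ∃ y, |y| ≤ A * S0 ∧ |lam ^ ⌊t / T⌋ * y / A - extP T lam (x n z) t / A| ≤
        lam ^ ⌊t / T⌋ * (S0 * (T / ((n:ℝ) + 1))) ∧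
      |(-(extP T lam (w n z) t / A) + ((n:ℝ) + 1) ^ 2 * max (-(extP T lam (x n z) t / A)) 0) -
        lam ^ ⌊t / T⌋ * P z.2.2 t y / A| ≤ lam ^ ⌊t / T⌋ * (S0 * (T / ((n:ℝ) + 1))) := by
  have hAp : 0 < A := by linarith
  obtain ⟨b1, b2, b3, y, y1, y2, y3⟩ := Sc.ext_main hT hC hP hper n z hz (by linarith : 0 < lam)
    (S := A * S0) (by positivity) (by
      have hexp := exp_pos ((4 * C + 3 + 2 * T) * T)
      have hA2 : 1 ≤ A ^ 2 := one_le_pow₀ hA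
      calc (enF (n + 1) z.1 z.2.1 + 1) * exp ((4 * C + 3 + 2 * T) * T)
          ≤ (A ^ 2 * (M ^ 2 + 1)) * exp ((4 * C + 3 + 2 * T) * T) :=
            mul_le_mul_of_nonneg_right (by nlinarith) hexp.le
        _ = A ^ 2 * ((M ^ 2 + 1) * exp ((4 * C + 3 + 2 * T) * T)) := by ring
        _ ≤ A ^ 2 * S0 ^ 2 := mul_le_mul_of_nonneg_left hS (by positivity)
        _ = _ := by ring) t
  have hmx : max (-(extP T lam (x n z) t / A)) 0 = max (-extP T lam (x n z) t) 0 / A := by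
    rw [← neg_div, max_div_div_right hAp.le (-extP T lam (x n z) t) 0 |>.symm, zero_div]
  rw [hmx]
  refine ⟨?_, ?_, ?_, y, y1, ?_, ?_⟩
  · rw [abs_div, abs_of_pos hAp, div_le_iff₀ hAp]; linarith
  · rw [abs_div, abs_of_pos hAp, div_le_iff₀ hAp]; linarith
  · rw [← mul_div_assoc, div_le_iff₀ hAp]; linarith
  · rw [← sub_div, abs_div, abs_of_pos hAp, div_le_iff₀ hAp]; linarith
  · have : (-(extP T lam (w n z) t / A) + ((n:ℝ) + 1) ^ 2 * (max (-extP T lam (x n z) t) 0 / A)) -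
        lam ^ ⌊t / T⌋ * P z.2.2 t y / A = ((-extP T lam (w n z) t + ((n:ℝ) + 1) ^ 2 *
        max (-extP T lam (x n z) t) 0) - lam ^ ⌊t / T⌋ * P z.2.2 t y) / A := by
      field_simp
    rw [this, abs_div, abs_of_pos hAp, div_le_iff₀ hAp]; linarith

lemma toAppr (Sc : Sch P T x v w) (hT : 0 < T) {C : ℝ} (hC : 0 ≤ C)
    (hP : ∀ L ∈ Icc (0:ℝ) 1, ∀ t y, |P L t y| ≤ C * (1 + max y 0))
    (hper : ∀ L t y, P L (t + T) y = P L t y) {M : ℝ} (U : Ultrafilter ℕ) (n : ℕ → ℕ)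
    (hn : Tendsto n U atTop) (z : ℕ → ℝ × ℝ × ℝ)
    (hz : ∀ j, (z j).2.2 ∈ Icc (0:ℝ) 1) {lam : ℕ → ℝ} {Λ : ℝ} (hl : ∀ j, 1 ≤ lam j)
    (hl2 : ∀ j, lam j ≤ Λ) {A : ℕ → ℝ} (hA : ∀ j, 1 ≤ A j)
    (hM : ∀ j, enF (n j + 1) (z j).1 (z j).2.1 ≤ (M * A j) ^ 2)
    (hx : ∀ j, x (n j) (z j) T = lam j * (z j).1) (hv : ∀ j, v (n j) (z j) T = lam j * (z j).2.1) :
    ∃ X V E, Appr U (fun j t => extP T (lam j) (x (n j) (z j)) t / A j)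
      (fun j t => extP T (lam j) (v (n j) (z j)) t / A j)
      (fun j t => -(extP T (lam j) (w (n j) (z j)) t / A j) +
        ((n j:ℝ) + 1) ^ 2 * max (-(extP T (lam j) (x (n j) (z j)) t / A j)) 0)
      (fun j => (n j : ℝ) + 1) X V E := by
  set S0 := √((M ^ 2 + 1) * exp ((4 * C + 3 + 2 * T) * T)) with hS0
  have hS00 : 0 ≤ S0 := Real.sqrt_nonneg _
  have hS0s : (M ^ 2 + 1) * exp ((4 * C + 3 + 2 * T) * T) ≤ S0 ^ 2 :=
    (Real.sq_sqrt (by positivity)).ge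
  have hx' : ∀ j, x (n j) (z j) T = lam j * x (n j) (z j) 0 := fun j => by rw [Sc.x0, hx]
  have hv' : ∀ j, v (n j) (z j) T = lam j * v (n j) (z j) 0 := fun j => by rw [Sc.v0, hv]
  have hl0 : ∀ j, 0 < lam j := fun j => by linarith [hl j]
  refine Appr.exists U _ _ _ _ ?_ ?_ ?_ ?_ ?_ ?_
  · intro j t
    exact (extP_deriv hT (hl0 j) (Sc.dx _ _) (hx' j) (hv' j) t).div_const _
  · intro j
    exact (extP_cont hT (hl0 j) (Sc.dv _ _) (hv' j)).div_const _
  · intro j t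
    have := (extP_right hT (hl0 j) (Sc.dv _ _) (hv' j) t).div_const (A j)
    convert! this using 1
    ring
  · intro j; linarith [Nat.cast_nonneg (α := ℝ) (n j)]
  · exact tendsto_atTop_add_const_right _ _ (tendsto_natCast_atTop_atTop.comp hn)
  · intro B
    obtain ⟨m0, hm0⟩ := exists_nat_ge (B / T)
    have hΛ : 1 ≤ Λ := (hl 0).trans (hl2 0)
    refine ⟨Λ ^ m0 * (S0 + C * (1 + S0) + S0 * T) + 1, by
      have : 0 ≤ Λ ^ m0 * (S0 + C * (1 + S0) + S0 * T) := by positivity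
      linarith, fun j t ht => ?_⟩
    obtain ⟨b1, b2, b3, y, y1, y2, y3⟩ := Sc.scaled hT hC hP hper (n j) (z j) (hz j) (hl j)
      (hA j) (hM j) hS00 hS0s t
    have hc := zpow_bd hT (hl j) (hl2 j) hm0 ht.2
    set c := lam j ^ ⌊t / T⌋ with hcdef
    have hcp : 0 < c := zpow_pos (hl0 j) _
    have hΛp : 0 ≤ Λ ^ m0 := by positivity
    have k1 : c * S0 ≤ Λ ^ m0 * S0 := mul_le_mul_of_nonneg_right hc hS00
    have k2 : 0 ≤ Λ ^ m0 * (C * (1 + S0)) := by positivity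
    have k3 : 0 ≤ Λ ^ m0 * (S0 * T) := by positivity
    refine ⟨by linarith, by linarith, by linarith, ?_⟩
    have hAp : 0 < A j := by linarith [hA j]
    have k4 : |c * P (z j).2.2 t y / A j| ≤ Λ ^ m0 * (C * (1 + S0)) := by
      rw [abs_div, abs_mul, abs_of_pos hAp, abs_of_pos hcp, div_le_iff₀ hAp]
      have p1 := hP _ (hz j) t y
      have p2 : max y 0 ≤ A j * S0 := max_le ((le_abs_self _).trans y1) (by positivity)
      have p3 : |P (z j).2.2 t y| ≤ C * (1 + S0) * A j := by
        refine p1.trans ?_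
        rw [mul_assoc]
        refine mul_le_mul_of_nonneg_left ?_ hC
        nlinarith [hA j]
      calc c * |P (z j).2.2 t y| ≤ Λ ^ m0 * (C * (1 + S0) * A j) :=
            mul_le_mul hc p3 (abs_nonneg _) hΛp
        _ = _ := by ring
    have k5 : c * (S0 * (T / ((n j:ℝ) + 1))) ≤ Λ ^ m0 * (S0 * T) := by
      refine mul_le_mul hc (mul_le_mul_of_nonneg_left (div_le_self hT.le ?_) hS00) (by positivity) hΛp
      linarith [Nat.cast_nonneg (α := ℝ) (n j)]
    have k6 := abs_sub_abs_le_abs_sub (-(extP T (lam j) (w (n j) (z j)) t / A j) +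
        ((n j:ℝ) + 1) ^ 2 * max (-(extP T (lam j) (x (n j) (z j)) t / A j)) 0)
        (c * P (z j).2.2 t y / A j)
    have k7 : 0 ≤ Λ ^ m0 * S0 := by positivity
    linarith

lemma nonresonance (Sc : Sch P T x v w) (hT : 0 < T) {C : ℝ} (hC : 0 ≤ C)
    (hP : ∀ L ∈ Icc (0:ℝ) 1, ∀ t y, |P L t y| ≤ C * (1 + max y 0))
    (hper : ∀ L t y, P L (t + T) y = P L t y)
    {ω1 ω2 : ℝ} {N : ℕ} (h1 : 0 < ω1) (h2 : 0 < ω2)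
    (hN1 : N * (π / ω1) < T) (hN2 : T < (N + 1) * (π / ω2))
    (hPlo : ∀ L ∈ Icc (0:ℝ) 1, ∀ t y, ω1 ^ 2 * max y 0 - C ≤ P L t y)
    (hPhi : ∀ L ∈ Icc (0:ℝ) 1, ∀ t y, P L t y ≤ ω2 ^ 2 * max y 0 + C) :
    ∃ R : ℝ, 1 ≤ R ∧ ∃ n0 : ℕ, ∀ n, n0 ≤ n → ∀ z : ℝ × ℝ × ℝ, z.2.2 ∈ Icc (0:ℝ) 1 →
      enF (n + 1) z.1 z.2.1 = R ^ 2 → ∀ lam : ℝ, 1 ≤ lam → x n z T = lam * z.1 →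
        v n z T = lam * z.2.1 → False := by
  by_contra hcon
  push Not at hcon
  have key : ∀ j : ℕ, ∃ n : ℕ, j ≤ n ∧ ∃ z : ℝ × ℝ × ℝ, z.2.2 ∈ Icc (0:ℝ) 1 ∧
      enF (n + 1) z.1 z.2.1 = ((j:ℝ) + 1) ^ 2 ∧ ∃ lam : ℝ, 1 ≤ lam ∧ x n z T = lam * z.1 ∧
        v n z T = lam * z.2.1 := by
    intro j
    obtain ⟨n, hn, z, hz, he, lam, hl, hx, hv, -⟩ := hcon ((j:ℝ) + 1)
      (by linarith [Nat.cast_nonneg (α := ℝ) j]) j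
    exact ⟨n, hn, z, hz, he, lam, hl, hx, hv⟩
  choose n hn z hz he lam hl hx hv using key
  set G := exp ((4 * C + 3 + 2 * T) * T) with hG
  have hGp : 0 < G := exp_pos _
  set A : ℕ → ℝ := fun j => (j:ℝ) + 1 with hAdef
  have hA : ∀ j, 1 ≤ A j := fun j => by
    simp only [hAdef]; linarith [Nat.cast_nonneg (α := ℝ) j]
  have hl2 : ∀ j, lam j ≤ 2 * G := by
    intro j
    have h3 := Sc.grow hT hC hP (n j) (z j) (hz j) T ⟨hT.le, le_rfl⟩
    rw [hx, hv, enF_smul _ _ _ (by linarith [hl j]), he] at h3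
    have hA2 : 1 ≤ ((j:ℝ) + 1) ^ 2 := one_le_pow₀ (hA j)
    have h4 : lam j ^ 2 * ((j:ℝ) + 1) ^ 2 ≤ 2 * G * ((j:ℝ) + 1) ^ 2 := by nlinarith
    have h5 : lam j ^ 2 ≤ 2 * G := le_of_mul_le_mul_right h4 (by positivity)
    nlinarith [hl j]
  set U : Ultrafilter ℕ := hyperfilter ℕ with hU
  have hUtop : (U : Filter ℕ) ≤ atTop := Nat.hyperfilter_le_atTop
  have hnt : Tendsto n U atTop := (tendsto_atTop_mono hn tendsto_id).mono_left hUtop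
  have hM : ∀ j, enF (n j + 1) (z j).1 (z j).2.1 ≤ (1 * A j) ^ 2 := fun j => by
    rw [he, one_mul]
  obtain ⟨X, V, E, Ap⟩ := Sc.toAppr hT hC hP hper U n hnt z hz hl hl2 hA hM hx hv
  set S0 := √((1 ^ 2 + 1) * exp ((4 * C + 3 + 2 * T) * T)) with hS0
  have hS00 : 0 ≤ S0 := Real.sqrt_nonneg _
  have hS0s : (1 ^ 2 + 1) * exp ((4 * C + 3 + 2 * T) * T) ≤ S0 ^ 2 :=
    (Real.sq_sqrt (by positivity)).ge
  have hAt : Tendsto A U atTop :=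
    (tendsto_atTop_add_const_right _ _ tendsto_natCast_atTop_atTop).mono_left hUtop
  refine Ap.nonres (N := N) h1 h2 hT hN1 hN2 ?_ ?_ ?_
  · intro B ε hε
    obtain ⟨m0, hm0⟩ := exists_nat_ge (B / T)
    set Λ := 2 * G with hΛ
    have hΛ1 : 1 ≤ Λ := (hl 0).trans (hl2 0)
    have hlim : Tendsto (fun j => Λ ^ m0 * ((ω1 ^ 2 + ω2 ^ 2) * (S0 * (T / ((n j:ℝ) + 1))) +
        C / A j + S0 * (T / ((n j:ℝ) + 1)))) U (nhds 0) := by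
      have a1 : Tendsto (fun j => T / ((n j:ℝ) + 1)) U (nhds 0) :=
        Tendsto.const_div_atTop Ap.hn T
      have a2 : Tendsto (fun j => C / A j) U (nhds 0) := hAt.const_div_atTop C
      have := ((((a1.const_mul S0).const_mul (ω1 ^ 2 + ω2 ^ 2)).add a2).add
        (a1.const_mul S0)).const_mul (Λ ^ m0)
      simpa using this
    filter_upwards [hlim.eventually (gt_mem_nhds hε)] with j hj t ht
    obtain ⟨b1, b2, b3, y, y1, y2, y3⟩ := Sc.scaled hT hC hP hper (n j) (z j) (hz j) (hl j)
      (hA j) (hM j) hS00 hS0s t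
    have hc := zpow_bd hT (hl j) (hl2 j) hm0 ht.2
    set c := lam j ^ ⌊t / T⌋ with hcdef
    have hcp : 0 < c := zpow_pos (by linarith [hl j]) _
    have hAp : 0 < A j := by linarith [hA j]
    set xe := extP T (lam j) (x (n j) (z j)) t / A j with hxe
    set qe := -(extP T (lam j) (w (n j) (z j)) t / A j) + ((n j:ℝ) + 1) ^ 2 * max (-xe) 0 with hqe
    set η := S0 * (T / ((n j:ℝ) + 1)) with hη
    have hη0 : 0 ≤ η := by positivity
    have hmy : max (c * y / A j) 0 = c * max y 0 / A j := by
      rw [mul_max_of_nonneg _ _ hcp.le, mul_zero, ← max_div_div_right hAp.le, zero_div]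
    have hd := (pos_part_lip (c * y / A j) xe).trans y2
    rw [hmy] at hd
    obtain ⟨d1, d2⟩ := abs_le.1 hd
    obtain ⟨f1, f2⟩ := abs_le.1 y3
    have g1 : ω1 ^ 2 * (c * max y 0 / A j) - c * (C / A j) ≤ c * P (z j).2.2 t y / A j := by
      have := hPlo _ (hz j) t y
      rw [show ω1 ^ 2 * (c * max y 0 / A j) - c * (C / A j) =
        c * (ω1 ^ 2 * max y 0 - C) / A j by field_simp]
      exact div_le_div_of_nonneg_right (mul_le_mul_of_nonneg_left this hcp.le) hAp.le
    have g2 : c * P (z j).2.2 t y / A j ≤ ω2 ^ 2 * (c * max y 0 / A j) + c * (C / A j) := by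
      have := hPhi _ (hz j) t y
      rw [show ω2 ^ 2 * (c * max y 0 / A j) + c * (C / A j) =
        c * (ω2 ^ 2 * max y 0 + C) / A j by field_simp]
      exact div_le_div_of_nonneg_right (mul_le_mul_of_nonneg_left this hcp.le) hAp.le
    have hCA : 0 ≤ C / A j := by positivity
    have e1 : c * η ≤ Λ ^ m0 * η := mul_le_mul_of_nonneg_right hc hη0
    have e2 : c * (C / A j) ≤ Λ ^ m0 * (C / A j) := mul_le_mul_of_nonneg_right hc hCA
    have hw1 : 0 ≤ ω1 ^ 2 := by positivity
    have hw2 : 0 ≤ ω2 ^ 2 := by positivity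
    have hLη : 0 ≤ Λ ^ m0 * η := by positivity
    have l1 := mul_le_mul_of_nonneg_left (d1.trans' (neg_le_neg e1)) hw1
    have l2 := mul_le_mul_of_nonneg_left (d2.trans e1) hw2
    have l3 := mul_le_mul_of_nonneg_left (d1.trans' (neg_le_neg e1)) hw2
    have l4 := mul_le_mul_of_nonneg_left (d2.trans e1) hw1
    have l5 := mul_nonneg hw1 hLη
    have l6 := mul_nonneg hw2 hLη
    constructor
    · show ω1 ^ 2 * max xe 0 - ε ≤ qe
      linarith
    · show qe ≤ ω2 ^ 2 * max xe 0 + ε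
      linarith
  · have hl0 : Tendsto (fun _ : ℕ => (1:ℝ) / 2) U (nhds (E 0 + X 0 ^ 2 / 2)) := by
      have h5 := ((Ap.limX 0).max (tendsto_const_nhds (x := (0:ℝ)))).pow 2
      rw [max_eq_left (Ap.nonneg 0)] at h5
      refine ((Ap.limE 0).add (h5.div_const 2)).congr fun j => ?_
      have hAp : 0 < A j := by linarith [hA j]
      have e1 : ∀ u : ℝ → ℝ, extP T (lam j) u 0 = u 0 := fun u => by simp [extP]
      simp only [e1]
      rw [Sc.x0, Sc.v0]
      have e2 := enF_smul ((n j : ℝ) + 1) (z j).1 (z j).2.1 (c := 1 / A j) (by positivity)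
      rw [he] at e2
      have e3 : (1 / A j) ^ 2 * ((j:ℝ) + 1) ^ 2 = 1 := by
        simp only [hAdef]; field_simp
      rw [e3] at e2
      unfold enF at e2
      rw [one_div_mul_eq_div, one_div_mul_eq_div] at e2
      linarith
    rw [tendsto_nhds_unique hl0 tendsto_const_nhds]
    norm_num
  · intro t ht
    have h5 := Ap.limX (t + T)
    refine tendsto_nhds_unique h5 ?_
    have h6 := (Ap.limX t).abs.const_mul (2 * G)
    rw [ht, abs_zero, mul_zero] at h6
    refine squeeze_zero_norm (fun j => ?_) h6
    beta_reduce
    rw [extP_per hT (by linarith [hl j]), mul_div_assoc, norm_mul, Real.norm_eq_abs,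
      Real.norm_eq_abs, abs_of_nonneg (by linarith [hl j])]
    exact mul_le_mul_of_nonneg_right (hl2 j) (abs_nonneg _)

end Sch

noncomputable def phiN (N a : ℝ) : ℝ := max a 0 - max (-a) 0 / N
noncomputable def psiN (N a : ℝ) : ℝ := max a 0 - N * max (-a) 0
noncomputable def radS (R a b : ℝ) : ℝ := R / max R (√(a ^ 2 + b ^ 2))

lemma phi_psi {N : ℝ} (hN : 1 ≤ N) (x : ℝ) : phiN N (psiN N x) = x := by
  have hNp : 0 < N := by linarith
  unfold phiN psiN
  rcases le_total x 0 with h | h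
  · have h2 : N * x ≤ 0 := by nlinarith
    rw [max_eq_right h, max_eq_left (show (0:ℝ) ≤ -x by linarith)]
    rw [show 0 - N * -x = N * x by ring, max_eq_right h2, max_eq_left (by linarith)]
    field_simp; ring
  · rw [max_eq_left h, max_eq_right (show -x ≤ 0 by linarith)]
    simp [h]

lemma psi_phi {N : ℝ} (hN : 1 ≤ N) (a : ℝ) : psiN N (phiN N a) = a := by
  have hNp : 0 < N := by linarith
  unfold phiN psiN
  rcases le_total a 0 with h | h
  · have h2 : a / N ≤ 0 := div_nonpos_of_nonpos_of_nonneg h hNp.le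
    rw [max_eq_right h, max_eq_left (show (0:ℝ) ≤ -a by linarith)]
    rw [show 0 - -a / N = a / N by ring, max_eq_right h2, max_eq_left (by linarith)]
    field_simp; ring
  · rw [max_eq_left h, max_eq_right (show -a ≤ 0 by linarith)]
    simp [h]

lemma phi_smul {N : ℝ} (a : ℝ) {c : ℝ} (hc : 0 ≤ c) : phiN N (c * a) = c * phiN N a := by
  have h1 : max (c * a) 0 = c * max a 0 := by
    rw [mul_max_of_nonneg _ _ hc, mul_zero]
  have h2 : max (-(c * a)) 0 = c * max (-a) 0 := by
    rw [mul_max_of_nonneg _ _ hc, mul_zero, mul_neg]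
  unfold phiN
  rw [h1, h2]; ring

lemma enF_psi (N x v : ℝ) : enF N x v = v ^ 2 + psiN N x ^ 2 := by
  unfold enF psiN
  rcases le_total x 0 with h | h
  · rw [max_eq_right h]; ring
  · rw [max_eq_right (show -x ≤ 0 by linarith)]; ring

lemma radS_pos {R a b : ℝ} (hR : 0 < R) : 0 < radS R a b :=
  div_pos hR (lt_max_of_lt_left hR)

lemma radS_le {R a b : ℝ} (hR : 0 < R) : radS R a b ≤ 1 :=
  (div_le_one (lt_max_of_lt_left hR)).2 (le_max_left _ _)

lemma radS_eq_one {R a b : ℝ} (hR : 0 < R) (h : a ^ 2 + b ^ 2 ≤ R ^ 2) : radS R a b = 1 := by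
  have : √(a ^ 2 + b ^ 2) ≤ R := Real.sqrt_le_iff.2 ⟨hR.le, h⟩
  unfold radS
  rw [max_eq_left this, div_self hR.ne']

lemma radS_big {R a b : ℝ} (hR : 0 < R) (h : R ^ 2 ≤ a ^ 2 + b ^ 2) :
    (radS R a b * a) ^ 2 + (radS R a b * b) ^ 2 = R ^ 2 := by
  have h1 : R ≤ √(a ^ 2 + b ^ 2) := Real.le_sqrt_of_sq_le h
  have h2 : 0 < √(a ^ 2 + b ^ 2) := lt_of_lt_of_le hR h1
  have h3 : √(a ^ 2 + b ^ 2) ^ 2 = a ^ 2 + b ^ 2 := Real.sq_sqrt (by positivity)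
  unfold radS
  rw [max_eq_right h1, mul_pow, mul_pow, ← mul_add, div_pow, h3]
  have : a ^ 2 + b ^ 2 ≠ 0 := by nlinarith
  field_simp

lemma radS_ball {R a b : ℝ} (hR : 0 < R) :
    (radS R a b * a) ^ 2 + (radS R a b * b) ^ 2 ≤ R ^ 2 := by
  rcases le_total (R ^ 2) (a ^ 2 + b ^ 2) with h | h
  · exact (radS_big hR h).le
  · rw [radS_eq_one hR h]; simpa using h

lemma brouwer_app {N R θ : ℝ} (hN : 1 ≤ N) (hR : 0 < R) (xT vT Θ : ℝ × ℝ × ℝ → ℝ)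
    (hx : Continuous xT) (hv : Continuous vT) (hΘ : Continuous Θ)
    (hnr : ∀ z : ℝ × ℝ × ℝ, z.2.2 ∈ Icc (0:ℝ) 1 → enF N z.1 z.2.1 = R ^ 2 → ∀ lam : ℝ, 1 ≤ lam →
      xT z = lam * z.1 → vT z = lam * z.2.1 → False)
    (h0 : ∀ z : ℝ × ℝ × ℝ, z.2.2 = 0 → enF N z.1 z.2.1 ≤ R ^ 2 → Θ z < θ)
    (h1 : ∀ z : ℝ × ℝ × ℝ, z.2.2 = 1 → enF N z.1 z.2.1 ≤ R ^ 2 → θ < Θ z) :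
    ∃ z : ℝ × ℝ × ℝ, z.2.2 ∈ Icc (0:ℝ) 1 ∧ enF N z.1 z.2.1 ≤ R ^ 2 ∧ xT z = z.1 ∧ vT z = z.2.1 ∧
      Θ z = θ := by
  have hrad : Continuous (fun p : ℝ × ℝ => radS R p.1 p.2) := by
    unfold radS
    refine Continuous.div continuous_const (by fun_prop) fun p => ?_
    exact (lt_max_of_lt_left hR).ne'
  set cl : ℝ → ℝ := fun l => max 0 (min 1 l) with hcl
  have hclc : Continuous cl := by fun_prop
  have hclI : ∀ l, cl l ∈ Icc (0:ℝ) 1 := fun l =>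
    ⟨le_max_left _ _, max_le zero_le_one (min_le_left _ _)⟩
  set Z : EuclideanSpace ℝ (Fin 3) → ℝ × ℝ × ℝ := fun u =>
    (phiN N (radS R (u 0) (u 1) * u 0), radS R (u 0) (u 1) * u 1, cl (u 2)) with hZ
  have hr1 : Continuous (fun u : EuclideanSpace ℝ (Fin 3) => radS R (u 0) (u 1)) :=
    hrad.comp (f := fun u : EuclideanSpace ℝ (Fin 3) => (u 0, u 1)) (by fun_prop)
  have hphi : Continuous (phiN N) := by unfold phiN; fun_prop
  have hpsi : Continuous (psiN N) := by unfold psiN; fun_prop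
  have hZc : Continuous Z := by
    refine Continuous.prodMk (hphi.comp (by fun_prop)) (Continuous.prodMk (by fun_prop) ?_)
    exact hclc.comp (by fun_prop)
  set a2 : EuclideanSpace ℝ (Fin 3) → ℝ := fun u => psiN N (xT (Z u)) with ha2
  set b2 : EuclideanSpace ℝ (Fin 3) → ℝ := fun u => vT (Z u) with hb2
  have ha2c : Continuous a2 := hpsi.comp (hx.comp hZc)
  have hb2c : Continuous b2 := hv.comp hZc
  have hr2 : Continuous (fun u => radS R (a2 u) (b2 u)) :=
    hrad.comp (f := fun u => (a2 u, b2 u)) (by fun_prop)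
  set F : EuclideanSpace ℝ (Fin 3) → EuclideanSpace ℝ (Fin 3) := fun u =>
    WithLp.toLp 2 ![radS R (a2 u) (b2 u) * a2 u, radS R (a2 u) (b2 u) * b2 u,
      cl (cl (u 2) - (Θ (Z u) - θ))] with hF
  have hFc : Continuous F := by
    refine (PiLp.continuous_toLp 2 _).comp (continuous_pi fun i => ?_)
    fin_cases i
    · exact hr2.mul ha2c
    · exact hr2.mul hb2c
    · exact hclc.comp ((hclc.comp (by fun_prop)).sub ((hΘ.comp hZc).sub continuous_const))
  obtain ⟨u, hu⟩ := brouwer_bounded F hFc (√(R ^ 2 + 1)) (fun u => by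
    rw [EuclideanSpace.norm_eq, Fin.sum_univ_three]
    apply Real.sqrt_le_sqrt
    simp only [hF, Real.norm_eq_abs, sq_abs]
    have e1 := radS_ball (a := a2 u) (b := b2 u) hR
    have e2 := hclI (cl (u 2) - (Θ (Z u) - θ))
    have e3 : cl (cl (u 2) - (Θ (Z u) - θ)) ^ 2 ≤ 1 := pow_le_one₀ e2.1 e2.2
    simp
    linarith)
  have u0 : radS R (a2 u) (b2 u) * a2 u = u 0 := by
    have := congrArg (fun y : EuclideanSpace ℝ (Fin 3) => y 0) hu
    simpa [hF] using this
  have u1 : radS R (a2 u) (b2 u) * b2 u = u 1 := by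
    have := congrArg (fun y : EuclideanSpace ℝ (Fin 3) => y 1) hu
    simpa [hF] using this
  have u2 : cl (cl (u 2) - (Θ (Z u) - θ)) = u 2 := by
    have := congrArg (fun y : EuclideanSpace ℝ (Fin 3) => y 2) hu
    simpa [hF] using this
  have hball : (u 0) ^ 2 + (u 1) ^ 2 ≤ R ^ 2 := by
    rw [← u0, ← u1]; exact radS_ball hR
  have hs1 := radS_eq_one hR hball
  have hLI : u 2 ∈ Icc (0:ℝ) 1 := by rw [← u2]; exact hclI _
  have hclL : cl (u 2) = u 2 := by
    simp only [hcl]; rw [min_eq_right hLI.2, max_eq_right hLI.1]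
  have hZu : Z u = (phiN N (u 0), u 1, u 2) := by
    simp only [hZ, hs1, one_mul, hclL]
  have hen : enF N (Z u).1 (Z u).2.1 = (u 0) ^ 2 + (u 1) ^ 2 := by
    rw [hZu, enF_psi, psi_phi hN]; ring
  set s2 := radS R (a2 u) (b2 u) with hs2
  have hs2p : 0 < s2 := radS_pos hR
  have hs2l : s2 ≤ 1 := radS_le hR
  have hz1 : (Z u).1 = phiN N (u 0) := by rw [hZu]
  have hz2 : (Z u).2.1 = u 1 := by rw [hZu]
  have hw0 : s2⁻¹ * u 0 = a2 u := by rw [← u0, inv_mul_cancel_left₀ hs2p.ne']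
  have hw1 : s2⁻¹ * u 1 = b2 u := by rw [← u1, inv_mul_cancel_left₀ hs2p.ne']
  have hxT : xT (Z u) = s2⁻¹ * (Z u).1 := by
    rw [hz1, ← phi_smul _ (by positivity), hw0]
    exact (phi_psi hN _).symm
  have hvT : vT (Z u) = s2⁻¹ * (Z u).2.1 := by
    rw [hz2, hw1]
  have hs2one : s2 = 1 := by
    rcases le_total (R ^ 2) ((a2 u) ^ 2 + (b2 u) ^ 2) with h | h
    · exfalso
      refine hnr (Z u) (by rw [hZu]; exact hLI) ?_ s2⁻¹ ((one_le_inv₀ hs2p).2 hs2l) hxT hvT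
      rw [hen, ← u0, ← u1]
      exact radS_big hR h
    · exact radS_eq_one hR h
  rw [hs2one, inv_one, one_mul] at hxT hvT
  have henR : enF N (Z u).1 (Z u).2.1 ≤ R ^ 2 := by rw [hen]; exact hball
  refine ⟨Z u, by rw [hZu]; exact hLI, henR, hxT, hvT, ?_⟩
  rw [hclL] at u2
  simp only [hcl] at u2
  have hZ2 : (Z u).2.2 = u 2 := by rw [hZu]
  rcases lt_trichotomy (Θ (Z u)) θ with h | h | h
  · exfalso
    have : u 2 = 1 := by
      by_contra hne
      have hlt : u 2 < 1 := lt_of_le_of_ne hLI.2 hne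
      have h5 : u 2 < min 1 (u 2 - (Θ (Z u) - θ)) := lt_min hlt (by linarith)
      have h6 := le_max_right 0 (min 1 (u 2 - (Θ (Z u) - θ)))
      linarith
    have := h1 (Z u) (hZ2.trans this) henR
    linarith
  · exact h
  · exfalso
    have : u 2 = 0 := by
      by_contra hne
      have hlt : 0 < u 2 := lt_of_le_of_ne hLI.1 (Ne.symm hne)
      have h5 : min 1 (u 2 - (Θ (Z u) - θ)) < u 2 :=
        lt_of_le_of_lt (min_le_right _ _) (by linarith)
      have h6 := max_lt hlt h5
      linarith
    have := h0 (Z u) (hZ2.trans this) henR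
    linarith

namespace Appr

variable {U : Ultrafilter ℕ} {x v q : ℕ → ℝ → ℝ} {n : ℕ → ℝ} {X V E : ℝ → ℝ}

/-- uniform convergence of continuous expressions -/
lemma unifG (A : Appr U x v q n X V E) {G : ℝ → ℝ → ℝ → ℝ}
    (hG : Continuous (fun p : ℝ × ℝ × ℝ => G p.1 p.2.1 p.2.2)) {Lj : ℕ → ℝ} {L : ℝ}
    (hL : Tendsto Lj U (nhds L)) {e : ℕ → ℝ} (he : Tendsto e U (nhds 0)) (t0 : ℝ) :
    ∀ ε > 0, ∃ δ > 0, ∀ᶠ j in (U : Filter ℕ), ∀ t ∈ Icc (t0 - δ) (t0 + δ), ∀ y,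
      |y - x j t| ≤ e j → |G (Lj j) t y - G L t0 (X t0)| ≤ ε := by
  intro ε hε
  obtain ⟨K, hK, hb⟩ := A.bdAt t0
  have hc := Metric.continuousAt_iff.1 (hG.continuousAt (x := (L, t0, X t0))) ε hε
  obtain ⟨η, hη, hc⟩ := hc
  have hd : 0 < min (η / 2) (min 1 (η / (4 * K))) := by positivity
  refine ⟨min (η / 2) (min 1 (η / (4 * K))), hd, ?_⟩
  set δ := min (η / 2) (min 1 (η / (4 * K))) with hδ
  have d1 : δ ≤ η / 2 := min_le_left _ _
  have d2 : δ ≤ 1 := (min_le_right _ _).trans (min_le_left _ _)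
  have d3 : δ ≤ η / (4 * K) := (min_le_right _ _).trans (min_le_right _ _)
  have d4 : K * δ ≤ η / 4 := by
    calc K * δ ≤ K * (η / (4 * K)) := mul_le_mul_of_nonneg_left d3 (by linarith)
      _ = η / 4 := by field_simp
  have e1 := Metric.tendsto_nhds.1 hL η hη
  have e2 := Metric.tendsto_nhds.1 (A.limX t0) (η / 4) (by linarith)
  have e3 := Metric.tendsto_nhds.1 he (η / 4) (by linarith)
  filter_upwards [e1, e2, e3] with j h1 h2 h3 t ht y hy
  have hx := A.x_lip (a := t0 - 1) (b := t0 + 1) (fun j t ht => (hb j t ht).2.1) j t0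
    ⟨by linarith, by linarith⟩ t ⟨by linarith [ht.1], by linarith [ht.2]⟩
  have htt : |t - t0| ≤ δ := abs_le.2 ⟨by linarith [ht.1], by linarith [ht.2]⟩
  have hx2 : K * |t - t0| ≤ K * δ := mul_le_mul_of_nonneg_left htt (by linarith)
  rw [Real.dist_eq] at h1 h2 h3
  rw [sub_zero] at h3
  have h4 := le_abs_self (e j)
  have := hc (x := (Lj j, t, y)) (by
    rw [Prod.dist_eq, Prod.dist_eq]
    refine max_lt ?_ (max_lt ?_ ?_)
    · rw [Real.dist_eq]; exact h1
    · simp only; rw [Real.dist_eq]; linarith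
    · simp only; rw [Real.dist_eq]
      have : y - X t0 = (y - x j t) + (x j t - x j t0) + (x j t0 - X t0) := by ring
      rw [this]
      have := abs_add_three (y - x j t) (x j t - x j t0) (x j t0 - X t0)
      linarith)
  rw [Real.dist_eq] at this
  exact this.le

lemma bouncing (A : Appr U x v q n X V E) {R0 : ℝ} {p : ℝ → ℝ → ℝ}
    (hq : ∀ t0, ∀ ε > 0, ∃ δ > 0, ∀ᶠ j in (U : Filter ℕ), ∀ t ∈ Icc (t0 - δ) (t0 + δ),
      |q j t - p t0 (R0 + X t0)| ≤ ε) : IsBouncingSolution R0 p (fun t => R0 + X t) := by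
  have hE : ∀ t, 0 < E t ∨ E t = 0 := fun t => (A.E_nonneg t).lt_or_eq'
  refine ⟨continuous_const.add A.X_cont, fun t => by linarith [A.nonneg t], ?_, ?_, ?_, ?_⟩
  · intro t0 h0
    have h0 : 0 < X t0 := by linarith
    refine ⟨V, ?_, A.V_deriv h0 (hq t0)⟩
    filter_upwards [A.X_cont.continuousAt.eventually_const_lt h0] with s hs
    exact (A.X_deriv hs).const_add _
  · intro t0 h0 _
    have h0 : X t0 = 0 := by linarith
    rcases hE t0 with h | h
    · refine ⟨-√(2 * E t0), (A.left_deriv h0 h).const_add _, ?_⟩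
      rw [neg_neg]
      exact (A.right_deriv h0 h).const_add _
    · have := (A.deriv_zero h0 h).const_add R0
      exact ⟨0, this.hasDerivWithinAt, by rw [neg_zero]; exact this.hasDerivWithinAt⟩
  · intro t0 v0 h0 hv0 hd
    have h0 : X t0 = 0 := by linarith
    rcases hE t0 with h | h
    · filter_upwards [A.isol_ev h0 h] with s hs
      linarith
    · exfalso
      have := (A.deriv_zero h0 h).const_add R0
      rcases hd with hd | hd
      · exact hv0 ((uniqueDiffWithinAt_Iic t0).eq_deriv _ hd this.hasDerivWithinAt)
      · exact hv0 ((uniqueDiffWithinAt_Ici t0).eq_deriv _ hd this.hasDerivWithinAt)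
  · intro a b hab h0 t ht
    have h0 : ∀ t ∈ Ioo a b, X t = 0 := fun t ht => by linarith [h0 t ht]
    have h1 := A.stick_sign ht h0 (hq t)
    rwa [h0 t ht, add_zero] at h1

lemma theta (A : Appr U x v q n X V E) {R0 : ℝ} (hR0 : 0 < R0) {Lj : ℕ → ℝ} {L : ℝ}
    (hLj : ∀ j, Lj j ∈ Icc (0:ℝ) 1) (hL : Tendsto Lj U (nhds L)) :
    ∃ ϑ : ℝ → ℝ, (∀ t, Tendsto (fun j => ∫ s in (0:ℝ)..t, Lj j / (R0 + max (x j s) 0) ^ 2) U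
      (nhds (ϑ t))) ∧ ∀ t, HasDerivAt ϑ (L / (R0 + X t) ^ 2) t := by
  have hpos : ∀ y : ℝ, R0 ≤ R0 + max y 0 := fun y => by linarith [le_max_right y 0]
  have hpos' : ∀ y : ℝ, (R0 + max y 0) ^ 2 ≠ 0 := fun y =>
    pow_ne_zero _ (by linarith [hpos y])
  have hgc : ∀ j, Continuous (fun s => Lj j / (R0 + max (x j s) 0) ^ 2) := fun j =>
    Continuous.div continuous_const (by have := A.x_cont j; fun_prop) (fun s => hpos' _)
  have hgb : ∀ j s, |Lj j / (R0 + max (x j s) 0) ^ 2| ≤ 1 / R0 ^ 2 := by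
    intro j s
    rw [abs_of_nonneg (div_nonneg (hLj j).1 (sq_nonneg _))]
    exact div_le_div₀ zero_le_one (hLj j).2 (by positivity)
      (pow_le_pow_left₀ hR0.le (hpos _) 2)
  have hdj : ∀ j t, HasDerivAt (fun t => ∫ s in (0:ℝ)..t, Lj j / (R0 + max (x j s) 0) ^ 2)
      (Lj j / (R0 + max (x j t) 0) ^ 2) t := fun j t =>
    intervalIntegral.integral_hasDerivAt_right ((hgc j).intervalIntegrable _ _)
      ((hgc j).stronglyMeasurableAtFilter _ _) (hgc j).continuousAt
  have hex : ∀ t, ∃ l, Tendsto (fun j => ∫ s in (0:ℝ)..t, Lj j / (R0 + max (x j s) 0) ^ 2) U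
      (nhds l) := fun t => ulim_exists U _ (1 / R0 ^ 2 * |t - 0|) fun j => by
    have := intervalIntegral.norm_integral_le_of_norm_le_const (a := 0) (b := t) (C := 1 / R0 ^ 2)
      (f := fun s => Lj j / (R0 + max (x j s) 0) ^ 2) (fun s _ => hgb j s)
    exact this
  choose ϑ hϑ using hex
  refine ⟨ϑ, hϑ, fun t0 => ?_⟩
  rw [hasDerivAt_iff_isLittleO, Asymptotics.isLittleO_iff]
  intro c hc
  obtain ⟨δ, hδ, hev⟩ := A.unifG (G := fun L _ y => L / (R0 + max y 0) ^ 2)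
    (Continuous.div (by fun_prop) (by fun_prop) (fun s => hpos' _)) hL (e := fun _ => 0)
    tendsto_const_nhds t0 c hc
  rw [max_eq_left (A.nonneg t0)] at hev
  filter_upwards [Icc_mem_nhds (by linarith : t0 - δ < t0) (by linarith : t0 < t0 + δ)] with t ht
  simp only [smul_eq_mul, Real.norm_eq_abs]
  have hlim : Tendsto (fun j => |(∫ s in (0:ℝ)..t, Lj j / (R0 + max (x j s) 0) ^ 2) -
      (∫ s in (0:ℝ)..t0, Lj j / (R0 + max (x j s) 0) ^ 2) - (t - t0) * (L / (R0 + X t0) ^ 2)|) U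
      (nhds |ϑ t - ϑ t0 - (t - t0) * (L / (R0 + X t0) ^ 2)|) :=
    (((hϑ t).sub (hϑ t0)).sub_const _).abs
  refine le_of_tendsto hlim ?_
  filter_upwards [hev] with j hj
  have hmv := Convex.norm_image_sub_le_of_norm_hasDerivWithin_le (s := Icc (t0 - δ) (t0 + δ))
    (C := c) (f := fun t => (∫ s in (0:ℝ)..t, Lj j / (R0 + max (x j s) 0) ^ 2) -
      t * (L / (R0 + X t0) ^ 2))
    (f' := fun t => Lj j / (R0 + max (x j t) 0) ^ 2 - 1 * (L / (R0 + X t0) ^ 2))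
    (fun s _ => ((hdj j s).sub ((hasDerivAt_id s).mul_const _)).hasDerivWithinAt)
    (fun s hs => by
      rw [one_mul]
      exact hj s hs (x j s) (by simp)) (convex_Icc _ _)
    (⟨by linarith, by linarith⟩ : t0 ∈ Icc (t0 - δ) (t0 + δ)) ht
  simp only [Real.norm_eq_abs] at hmv
  refine le_trans (le_of_eq ?_) hmv
  congr 1
  ring

end Appr

lemma f_bounds
    (R0 T : ℝ) (hR0 : 0 < R0) (hT : 0 < T)
    (f : ℝ → ℝ → ℝ)
    (hf_cont : ContinuousOn (fun q : ℝ × ℝ => f q.1 q.2) (univ ×ˢ Ici R0))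
    (hf_per : ∀ t ρ, f (t + T) ρ = f t ρ)
    (μlo μhi : ℝ) (N : ℕ) (hμ : μlo ≤ μhi)
    (h1 : ((N : ℝ) * π / T) ^ 2 < μlo)
    (h2 : μhi < (((N : ℝ) + 1) * π / T) ^ 2)
    (hlo : ∀ ε > (0 : ℝ), ∃ M : ℝ, R0 ≤ M ∧ ∀ t ρ : ℝ, M ≤ ρ → μlo - ε < f t ρ / ρ)
    (hhi : ∀ ε > (0 : ℝ), ∃ M : ℝ, R0 ≤ M ∧ ∀ t ρ : ℝ, M ≤ ρ → f t ρ / ρ < μhi + ε) :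
    ∃ C ω1 ω2 : ℝ, 0 ≤ C ∧ 0 < ω1 ∧ 0 < ω2 ∧ N * (π / ω1) < T ∧ T < (N + 1) * (π / ω2) ∧
      ∀ t y, 0 ≤ y → ω1 ^ 2 * y - C ≤ f t (R0 + y) ∧ f t (R0 + y) ≤ ω2 ^ 2 * y + C := by
  have hπ := Real.pi_pos
  obtain ⟨μ1, a1, a2⟩ := exists_between h1
  obtain ⟨μ2, b1, b2⟩ := exists_between h2
  have hμ1 : 0 < μ1 := lt_of_le_of_lt (sq_nonneg _) a1
  have hμ2 : 0 < μ2 := by linarith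
  obtain ⟨M1, hM1, hM1'⟩ := hlo (μlo - μ1) (by linarith)
  obtain ⟨M2, hM2, hM2'⟩ := hhi (μ2 - μhi) (by linarith)
  set M := max M1 M2 with hM
  have hM0 : 0 < M := by have := le_max_left M1 M2; linarith
  obtain ⟨B, hB⟩ := (isCompact_Icc.prod (isCompact_Icc (a := R0) (b := M))).exists_bound_of_continuousOn
    (s := Icc (0:ℝ) T ×ˢ Icc R0 M) (f := fun q : ℝ × ℝ => f q.1 q.2)
    (hf_cont.mono (prod_mono (subset_univ _) (fun y hy => hy.1)))
  have hB' : ∀ t, ∀ ρ ∈ Icc R0 M, |f t ρ| ≤ B := by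
    intro t ρ hρ
    have hp : Function.Periodic (fun t => f t ρ) T := fun t => hf_per t ρ
    obtain ⟨s, hs, hse⟩ := hp.exists_mem_Ico₀ hT t
    change f t ρ = f s ρ at hse
    rw [hse]
    exact hB (s, ρ) ⟨⟨hs.1, hs.2.le⟩, hρ⟩
  have hB0 : 0 ≤ B := (abs_nonneg _).trans (hB' 0 R0 ⟨le_rfl, hM1.trans (le_max_left _ _)⟩)
  refine ⟨B + μ1 * M + μ2 * R0, √μ1, √μ2, by positivity, by positivity, by positivity, ?_, ?_, ?_⟩
  · have : (N:ℝ) * π / T < √μ1 := (Real.lt_sqrt (by positivity)).2 a1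
    have hs : 0 < √μ1 := by positivity
    rw [div_lt_iff₀ hT] at this
    rw [← mul_div_assoc, div_lt_iff₀ hs]
    linarith
  · have : √μ2 < ((N:ℝ) + 1) * π / T := (Real.sqrt_lt' (by positivity)).2 b2
    have hs : 0 < √μ2 := by positivity
    rw [lt_div_iff₀ hT] at this
    rw [← mul_div_assoc, lt_div_iff₀ hs]
    linarith
  · intro t y hy
    rw [Real.sq_sqrt hμ1.le, Real.sq_sqrt hμ2.le]
    have hm1 : 0 ≤ μ1 * M := by positivity
    have hm2 : 0 ≤ μ2 * R0 := by positivity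
    have hm3 : 0 ≤ μ2 * y := by positivity
    have hm4 : 0 ≤ μ1 * R0 := by positivity
    rcases le_total (R0 + y) M with h | h
    · have := abs_le.1 (hB' t (R0 + y) ⟨by linarith, h⟩)
      have h5 : μ1 * y ≤ μ1 * M := mul_le_mul_of_nonneg_left (by linarith) hμ1.le
      constructor <;> linarith [this.1, this.2]
    · have hp : 0 < R0 + y := by linarith
      have c1 := hM1' t (R0 + y) ((le_max_left _ _).trans h)
      have c2 := hM2' t (R0 + y) ((le_max_right _ _).trans h)
      rw [lt_div_iff₀ hp] at c1
      rw [div_lt_iff₀ hp] at c2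
      ring_nf at c1 c2 ⊢
      constructor <;> linarith

theorem statement0
    (R0 T : ℝ) (hR0 : 0 < R0) (hT : 0 < T)
    (f : ℝ → ℝ → ℝ)
    (hf_cont : ContinuousOn (fun q : ℝ × ℝ => f q.1 q.2) (univ ×ˢ Ici R0))
    (hf_per : ∀ t ρ, f (t + T) ρ = f t ρ)
    (μlo μhi : ℝ) (N : ℕ) (hμ : μlo ≤ μhi)
    (h1 : ((N : ℝ) * π / T) ^ 2 < μlo)
    (h2 : μhi < (((N : ℝ) + 1) * π / T) ^ 2)
    (hlo : ∀ ε > (0 : ℝ), ∃ M : ℝ, R0 ≤ M ∧ ∀ t ρ : ℝ, M ≤ ρ → μlo - ε < f t ρ / ρ)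
    (hhi : ∀ ε > (0 : ℝ), ∃ M : ℝ, R0 ≤ M ∧ ∀ t ρ : ℝ, M ≤ ρ → f t ρ / ρ < μhi + ε) :
    ∀ ν : ℕ, 0 < ν → ∃ kν : ℕ, 0 < kν ∧ ∀ k : ℕ, kν ≤ k →
      ∃ L : ℝ, 0 < L ∧ ∃ ρ ϑ : ℝ → ℝ,
        IsBouncingSolution R0 (fun t r => -(L ^ 2) / r ^ 3 + f t r) ρ ∧
        (∀ t, HasDerivAt ϑ (L / (ρ t) ^ 2) t) ∧
        (∀ t, ρ (t + T) = ρ t) ∧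
        (∀ t, ϑ (t + (k : ℝ) * T) = ϑ t + 2 * π * (ν : ℝ)) := by
  obtain ⟨C0, ω1, ω2, hC0, hω1, hω2, hN1, hN2, hfb⟩ := f_bounds R0 T hR0 hT f hf_cont hf_per
    μlo μhi N hμ h1 h2 hlo hhi
  intro ν hν
  have hπ := Real.pi_pos
  set P : ℝ → ℝ → ℝ → ℝ := fun L t y => -(L ^ 2) / (R0 + max y 0) ^ 3 + f t (R0 + max y 0) with hPdef
  have hm0 : ∀ y : ℝ, 0 ≤ max y 0 := fun y => le_max_right _ _
  have hR : ∀ y : ℝ, 0 < R0 + max y 0 := fun y => by linarith [hm0 y]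
  have hPc : Continuous (fun q : ℝ × ℝ × ℝ => P q.1 q.2.1 q.2.2) := by
    refine Continuous.add (Continuous.div (by fun_prop) (by fun_prop)
      (fun q => (pow_pos (hR _) 3).ne')) ?_
    exact hf_cont.comp_continuous (f := fun q : ℝ × ℝ × ℝ => (q.2.1, R0 + max q.2.2 0))
      (by fun_prop) (fun q => ⟨mem_univ _, by simp⟩)
  have hPper : ∀ L t y, P L (t + T) y = P L t y := fun L t y => by simp only [hPdef, hf_per]
  set C1 := C0 + 1 / R0 ^ 3 with hC1
  have hC1' : 0 ≤ C1 := by positivity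
  set C := C1 + ω2 ^ 2 with hCdef
  have hC : 0 ≤ C := by positivity
  have hsing : ∀ L ∈ Icc (0:ℝ) 1, ∀ y, 0 ≤ L ^ 2 / (R0 + max y 0) ^ 3 ∧
      L ^ 2 / (R0 + max y 0) ^ 3 ≤ 1 / R0 ^ 3 := by
    intro L hL y
    refine ⟨div_nonneg (sq_nonneg _) (pow_pos (hR y) 3).le, ?_⟩
    exact div_le_div₀ zero_le_one (pow_le_one₀ hL.1 hL.2) (by positivity)
      (pow_le_pow_left₀ hR0.le (by linarith [hm0 y]) 3)
  have hlo1 : ∀ L ∈ Icc (0:ℝ) 1, ∀ t y, ω1 ^ 2 * max y 0 - C1 ≤ P L t y := by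
    intro L hL t y
    have a := hsing L hL y
    have b := hfb t _ (hm0 y)
    simp only [hPdef, neg_div]
    linarith [b.1]
  have hhi1 : ∀ L ∈ Icc (0:ℝ) 1, ∀ t y, P L t y ≤ ω2 ^ 2 * max y 0 + C1 := by
    intro L hL t y
    have a := hsing L hL y
    have b := hfb t _ (hm0 y)
    have : 0 ≤ 1 / R0 ^ 3 := by positivity
    simp only [hPdef, neg_div]
    linarith [b.2]
  have hω2s : 0 ≤ ω2 ^ 2 := sq_nonneg _
  have hPlo : ∀ L ∈ Icc (0:ℝ) 1, ∀ t y, ω1 ^ 2 * max y 0 - C ≤ P L t y := fun L hL t y => by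
    linarith [hlo1 L hL t y]
  have hPhi : ∀ L ∈ Icc (0:ℝ) 1, ∀ t y, P L t y ≤ ω2 ^ 2 * max y 0 + C := fun L hL t y => by
    linarith [hhi1 L hL t y]
  have hPb : ∀ L ∈ Icc (0:ℝ) 1, ∀ t y, |P L t y| ≤ C * (1 + max y 0) := by
    intro L hL t y
    have a := hlo1 L hL t y
    have b := hhi1 L hL t y
    have c1 : 0 ≤ ω1 ^ 2 * max y 0 := mul_nonneg (sq_nonneg _) (hm0 y)
    have c2 : 0 ≤ C1 * max y 0 := mul_nonneg hC1' (hm0 y)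
    have c3 : 0 ≤ ω2 ^ 2 * max y 0 := mul_nonneg (sq_nonneg _) (hm0 y)
    rw [abs_le, hCdef]
    constructor <;> nlinarith
  obtain ⟨x, v, w, Sc⟩ := Sch.exists P hPc T hT
  obtain ⟨R, hR1, n0, hnr⟩ := Sc.nonresonance hT hC hPb hPper hω1 hω2 hN1 hN2 hPlo hPhi
  set G := exp ((4 * C + 3 + 2 * T) * T) with hG
  have hGp : 0 < G := exp_pos _
  set S0 := √((R ^ 2 + 1) * G) with hS0
  have hS00 : 0 ≤ S0 := Real.sqrt_nonneg _
  have hS0s : S0 ^ 2 = (R ^ 2 + 1) * G := Real.sq_sqrt (by positivity)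
  have hτ : 0 < T / (R0 + S0) ^ 2 := by positivity
  obtain ⟨kν, hkν⟩ := exists_nat_gt (2 * π * ν / (T / (R0 + S0) ^ 2))
  have hνp : (0:ℝ) < ν := by exact_mod_cast hν
  have hkνp : 0 < kν := by
    have : (0:ℝ) < kν := lt_of_le_of_lt (by positivity) hkν
    exact_mod_cast this
  refine ⟨kν, hkνp, fun k hk => ?_⟩
  have hkp : (0:ℝ) < k := by exact_mod_cast lt_of_lt_of_le hkνp hk
  set θ := 2 * π * ν / k with hθ
  have hθ0 : 0 < θ := by positivity
  have hθ1 : θ < T / (R0 + S0) ^ 2 := by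
    rw [div_lt_iff₀ hτ] at hkν
    rw [hθ, div_lt_iff₀ hkp]
    have : (kν:ℝ) ≤ k := by exact_mod_cast hk
    calc 2 * π * ν < kν * (T / (R0 + S0) ^ 2) := hkν
      _ ≤ k * (T / (R0 + S0) ^ 2) := mul_le_mul_of_nonneg_right this hτ.le
      _ = _ := by ring
  -- approximate solutions
  have happ : ∀ j : ℕ, ∃ z : ℝ × ℝ × ℝ, z.2.2 ∈ Icc (0:ℝ) 1 ∧
      enF (((n0 + j : ℕ) : ℝ) + 1) z.1 z.2.1 ≤ R ^ 2 ∧ x (n0 + j) z T = z.1 ∧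
      v (n0 + j) z T = z.2.1 ∧
      (∫ t in (0:ℝ)..T, z.2.2 / (R0 + max (x (n0 + j) z t) 0) ^ 2) = θ := by
    intro j
    have hnn : (1:ℝ) ≤ ((n0 + j : ℕ) : ℝ) + 1 := by
      linarith [Nat.cast_nonneg (α := ℝ) (n0 + j)]
    have cx := Sc.cx (n0 + j)
    have cv := Sc.cv (n0 + j)
    refine brouwer_app hnn (by linarith : 0 < R) (fun z => x (n0 + j) z T)
      (fun z => v (n0 + j) z T)
      (fun z => ∫ t in (0:ℝ)..T, z.2.2 / (R0 + max (x (n0 + j) z t) 0) ^ 2)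
      (cx.comp (by fun_prop : Continuous fun z : ℝ × ℝ × ℝ => (z, T)))
      (cv.comp (by fun_prop : Continuous fun z : ℝ × ℝ × ℝ => (z, T))) ?_
      (hnr (n0 + j) (Nat.le_add_right _ _)) ?_ ?_
    · refine intervalIntegral.continuous_parametric_intervalIntegral_of_continuous' ?_ 0 T
      refine Continuous.div (by fun_prop) ?_ (fun q => (pow_pos (hR _) 2).ne')
      fun_prop
    · intro z hz _
      simp only [hz, zero_div, intervalIntegral.integral_zero]
      exact hθ0
    · intro z hz hzR
      refine lt_of_lt_of_le hθ1 ?_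
      simp only [hz]
      have hgr := Sc.grow hT hC hPb (n0 + j) z (by rw [hz]; simp)
      have h_int : ∫ t in (0:ℝ)..T, 1 / (R0 + S0) ^ 2 = T / (R0 + S0) ^ 2 := by
        rw [intervalIntegral.integral_const, smul_eq_mul, sub_zero]; ring
      rw [← h_int]
      refine intervalIntegral.integral_mono_on hT.le (by simp) ?_ ?_
      · refine Continuous.intervalIntegrable ?_ _ _
        refine Continuous.div continuous_const ?_ (fun q => (pow_pos (hR _) 2).ne')
        have : Continuous (fun t => x (n0 + j) z t) :=
          cx.comp (by fun_prop : Continuous fun t : ℝ => (z, t))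
        fun_prop
      · intro t ht
        have hb := hgr t ht
        have hb2 : enF (((n0 + j : ℕ) : ℝ) + 1) (x (n0 + j) z t) (v (n0 + j) z t) ≤ S0 ^ 2 := by
          rw [hS0s]
          have : (enF (((n0 + j : ℕ) : ℝ) + 1) z.1 z.2.1 + 1) * G ≤ (R ^ 2 + 1) * G :=
            mul_le_mul_of_nonneg_right (by linarith) hGp.le
          linarith
        have hb3 := (enF_bounds hnn hS00 hb2).2.1
        have : max (x (n0 + j) z t) 0 ≤ S0 := max_le ((le_abs_self _).trans hb3) hS00
        exact one_div_le_one_div_of_le (pow_pos (hR _) 2)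
          (pow_le_pow_left₀ (hR _).le (by linarith) 2)
  choose z hz hzR hzx hzv hzθ using happ
  set U : Ultrafilter ℕ := hyperfilter ℕ with hU
  have hUle : (U : Filter ℕ) ≤ atTop := Nat.hyperfilter_le_atTop
  have hnt : Tendsto (fun j : ℕ => n0 + j) U atTop :=
    (tendsto_atTop_mono (fun j => Nat.le_add_left j n0) tendsto_id).mono_left hUle
  obtain ⟨X, V, E, A⟩ := Sc.toAppr hT hC hPb hPper (M := R) U (fun j => n0 + j) hnt z hz
    (lam := fun _ => 1) (Λ := 1) (fun _ => le_rfl) (fun _ => le_rfl) (A := fun _ => 1)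
    (fun _ => le_rfl) (fun j => by simpa using hzR j) (fun j => by simpa using hzx j)
    (fun j => by simpa using hzv j)
  simp only [div_one] at A
  obtain ⟨L, hL⟩ := ulim_exists U (fun j => (z j).2.2) 1 (fun j => abs_le.2
    ⟨by linarith [(hz j).1], (hz j).2⟩)
  have hL0 : 0 ≤ L := ge_of_tendsto' hL fun j => (hz j).1
  obtain ⟨ϑ, hϑ, hϑd⟩ := A.theta hR0 hz hL
  have hXper : ∀ t, X (t + T) = X t := by
    intro t
    refine tendsto_nhds_unique (A.limX (t + T)) ?_
    refine (A.limX t).congr fun j => ?_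
    rw [extP_per hT one_pos, one_mul]
  have hϑT : ∀ t, ϑ (t + T) = ϑ t + θ := by
    intro t
    refine tendsto_nhds_unique (hϑ (t + T)) ?_
    refine ((hϑ t).add_const θ).congr fun j => ?_
    have hgc : Continuous (fun s => (z j).2.2 / (R0 + max (extP T 1 (x (n0 + j) (z j)) s) 0) ^ 2) := by
      refine Continuous.div continuous_const ?_ (fun q => (pow_pos (hR _) 2).ne')
      have := A.x_cont j
      fun_prop
    have hper : Function.Periodic
        (fun s => (z j).2.2 / (R0 + max (extP T 1 (x (n0 + j) (z j)) s) 0) ^ 2) T := fun s => by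
      simp only [extP_per hT one_pos, one_mul]
    rw [← intervalIntegral.integral_add_adjacent_intervals (hgc.intervalIntegrable 0 t)
      (hgc.intervalIntegrable t (t + T)), hper.intervalIntegral_add_eq t 0, zero_add, ← hzθ j]
    congr 1
    refine intervalIntegral.integral_congr fun s hs => ?_
    rw [uIcc_of_le hT.le] at hs
    have := extP_eq (x := x (n0 + j) (z j)) hT one_pos (by
      rw [hzx, Sc.x0, one_mul]) 0 (t := s) (by simpa using hs)
    simp only [this]
    simp
  have hϑk : ∀ (m : ℕ) t, ϑ (t + m * T) = ϑ t + m * θ := by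
    intro m t
    induction m with
    | zero => simp
    | succ m ih =>
      push_cast
      rw [show t + ((m:ℝ) + 1) * T = t + m * T + T by ring, hϑT, ih]; ring
  have hLpos : 0 < L := by
    rcases hL0.lt_or_eq' with h | h
    · exact h
    · exfalso
      have hcst := is_const_of_deriv_eq_zero (f := ϑ) (fun t => (hϑd t).differentiableAt)
        (fun t => by rw [(hϑd t).deriv, h, zero_div]) (0 + T) 0
      have := hϑT 0
      linarith
  refine ⟨L, hLpos, fun t => R0 + X t, ϑ, A.bouncing ?_, hϑd, fun t => by simp only [hXper], ?_⟩
  · intro t0 ε hε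
    have he : Tendsto (fun j : ℕ => S0 * (T / (((n0 + j : ℕ) : ℝ) + 1))) U (nhds 0) := by
      have h3 : Tendsto (fun j : ℕ => (((n0 + j : ℕ) : ℝ) + 1)) U atTop :=
        tendsto_atTop_add_const_right _ _ (tendsto_natCast_atTop_atTop.comp hnt)
      have := (h3.const_div_atTop T).const_mul S0
      rwa [mul_zero] at this
    obtain ⟨δ, hδ, hev⟩ := A.unifG hPc hL he t0 (ε / 2) (by linarith)
    refine ⟨δ, hδ, ?_⟩
    have he2 := he.eventually_le_const (show (0:ℝ) < ε / 2 by linarith)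
    filter_upwards [hev, he2] with j hj hj2 t ht
    obtain ⟨-, -, -, y, -, y2, y3⟩ := Sc.scaled hT hC hPb hPper (M := R) (n0 + j) (z j) (hz j)
      (le_refl (1:ℝ)) (le_refl (1:ℝ)) (by simpa using hzR j) hS00 hS0s.ge t
    simp only [one_zpow, one_mul, div_one] at y2 y3
    have hj3 := hj t ht y y2
    have hPe : P L t0 (X t0) = -(L ^ 2) / (R0 + X t0) ^ 3 + f t0 (R0 + X t0) := by
      simp only [hPdef, max_eq_left (A.nonneg t0)]
    rw [hPe] at hj3
    refine (abs_sub_le _ (P (z j).2.2 t y) _).trans ?_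
    linarith
  · intro t
    rw [hϑk, hθ]
    congr 1
    field_simp
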